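/- For every real α with 0 < α ≤ 1 and every f ∈ 𝒮 with logarithmic coefficients γ_n, the inequality ∑_{n=1}^∞ (n²/(n² + α²)) |γ_n|² ≤ (π α coth(π α) − 1)/(2α²) holds; the inequality is strict unless f(z) = z/(1−e^{iθ}z)² for some θ ∈ ℝ. -/

import Mathlib

/-!
The inequality is an instance of de Branges' method with weights adapted to `n² / (n² + α²)`, and
the equality case follows from a strict gain in the first coefficient together with the area theorem.

**De Branges' inequality for general weights** (`weighted_log_coeff_le`). Let `aₖ ≥ 0` and `τₖ` be
functions of `s ≥ 0`, vanishing for `k > N`, with `τₖ' = -k aₖ` and `τₖ - τₖ₊₁ = aₖ + aₖ₊₁`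
(`Weights`). Then `∑ τₖ(0) (k |gₖ|² - 4 / k) ≤ 0` for the coefficients `gₖ = 2 γₖ` of `log (f z / z)`.
Instead of Loewner's differential equation a discrete version is used. A univalent function
that is bounded by one and holomorphic beyond the closed disk is a composition of finitely many
self-maps `w` of the disk with `w'(0)` as close to `1` as desired (`exists_chain`). These are
the transition maps between Riemann maps of a decreasing sequence of domains, obtained by removing
from the disk small disks placed along a path that runs from the unit circle to the boundary
curve of the image and then around it. The Riemann mapping theorem is proved for these domains;
nonvanishing functions on them have square roots because the complement is connected, which comes
from the Cauchy–Pompeiu formula. Writing one step as `w(z) = z e^{-k(z)}` with `Re k ≥ 0` and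
expanding to first order in `k(0)`, de Branges' functional changes by a non-positive amount up to an
error that is negligible against the step size (`deBranges_kernel`, `exists_step`, `Phi_nonpos`). A
general `f` is treated by dilation and scaling.

**The weights.** Let `x_p(n, k)` be the distribution of the lazy symmetric random walk with jump
probability `p = e^{-s} / 2`. For a non-negative sequence `t`, the functions
`τₖ(s) = ∑_{n < N} tₙ k x_p(n + 1, k) / (n + 1)` satisfy the two relations, and `aₖ ≥ 0` amounts to an
inequality which holds by Abel summation when `t` is essentially decreasing. At `s = 0` the product
sequence `tq` makes the sum telescope, so that `τₖ(0)` is proportional to `k / (k² + α²)` in the limit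
`N → ∞`. The condition `α ≤ 1` gives the monotonicity of `tq` from index `1` on, and the first entry
may be lowered by `1 / 200` without losing `aₖ ≥ 0` (`walkDefect_ten`, `weights_te`). This yields
`∑ n² / (n² + α²) |γₙ|² ≤ ∑ 1 / (n² + α²) - (1 - |γ₁|²) / 1600` (`limit_ineq`), and the series on the right
is given by the partial fractions of the cotangent (`hasSum_coth`).

**Equality.** It forces `|γ₁| = 1`. Then `1 / f(z²)^{1/2} = 1 / z - γ₁ z + ⋯` is an injective function
for which the area theorem is an equality, hence all further coefficients vanish and `f` is a
rotation of the Koebe function (`gronwall_equality`, `koebe_of_norm_eq`).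
-/

open Complex Metric Real

/-- The class `𝒮` of normalized univalent (analytic and injective) functions
on the unit disk. -/
def InClassS (f : ℂ → ℂ) : Prop :=
  AnalyticOnNhd ℂ f (ball (0 : ℂ) 1) ∧ Set.InjOn f (ball (0 : ℂ) 1) ∧
    f 0 = 0 ∧ deriv f 0 = 1

/-- `γ` are the logarithmic coefficients of `f`: there is an analytic branch `g`
of `log (f z / z)` on the unit disk with `g 0 = 0` whose Taylor coefficients at `0`
are `2 * γ n` for `n ≥ 1`. -/
def IsLogCoeffs (f : ℂ → ℂ) (γ : ℕ → ℂ) : Prop :=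
  ∃ g : ℂ → ℂ, AnalyticOnNhd ℂ g (ball (0 : ℂ) 1) ∧ g 0 = 0 ∧
    (∀ z ∈ ball (0 : ℂ) 1, z ≠ 0 → Complex.exp (g z) = f z / z) ∧
    ∀ n : ℕ, 1 ≤ n → iteratedDeriv n g 0 = (n.factorial : ℂ) * (2 * γ n)

/-- `f` coincides on the unit disk with a rotation `z / (1 - e^{iθ} z)^2`
of the Koebe function. -/
def IsKoebeRotation (f : ℂ → ℂ) : Prop :=
  ∃ θ : ℝ, Set.EqOn f
    (fun z => z / (1 - Complex.exp (θ * Complex.I) * z) ^ 2) (ball (0 : ℂ) 1)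

namespace LogCoeff

open Filter Set Topology

/-! ### Injective holomorphic functions -/

lemma nhds_le_map_of_injOn {U : Set ℂ} {f : ℂ → ℂ} (hU : IsOpen U)
    (hf : DifferentiableOn ℂ f U) (hi : InjOn f U) {z : ℂ} (hz : z ∈ U) :
    𝓝 (f z) ≤ map f (𝓝 z) := by
  have ha : AnalyticAt ℂ f z := hf.analyticAt (hU.mem_nhds hz)
  refine ha.eventually_constant_or_nhds_le_map_nhds.resolve_left fun h => ?_
  have h2 : ∀ᶠ w in 𝓝 z, w = z := by
    filter_upwards [h, hU.mem_nhds hz] with w hw hwU using hi hwU hz hw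
  have h3 : ∀ᶠ w in 𝓝[≠] z, False := by
    filter_upwards [h2.filter_mono nhdsWithin_le_nhds, self_mem_nhdsWithin] with w h1 h2 using h2 h1
  exact h3.exists.elim fun _ h => h

/-- A holomorphic inverse exists on the image: the inverse is continuous by the open mapping
theorem, and isolated zeros of the derivative are removable singularities of it. -/
lemma differentiableOn_invFunOn {U : Set ℂ} {f : ℂ → ℂ} (hU : IsOpen U)
    (hf : DifferentiableOn ℂ f U) (hi : InjOn f U) :
    IsOpen (f '' U) ∧ DifferentiableOn ℂ (Function.invFunOn f U) (f '' U) ∧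
      (∀ z ∈ U, Function.invFunOn f U (f z) = z) ∧ ∀ z ∈ U, deriv f z ≠ 0 := by
  set g := Function.invFunOn f U with hg
  have hgf : ∀ z ∈ U, g (f z) = z := fun z hz => hi.leftInvOn_invFunOn hz
  have hnh : ∀ z ∈ U, ∀ s ∈ 𝓝 z, f '' (s ∩ U) ∈ 𝓝 (f z) := fun z hz s hs =>
    nhds_le_map_of_injOn hU hf hi hz (image_mem_map (inter_mem hs (hU.mem_nhds hz)))
  have ho : IsOpen (f '' U) := by
    rw [isOpen_iff_mem_nhds]
    rintro _ ⟨z, hz, rfl⟩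
    have := hnh z hz univ univ_mem
    simpa using this
  have hc : ∀ z ∈ U, Tendsto g (𝓝 (f z)) (𝓝 z) := by
    intro z hz s hs
    rw [mem_map]
    filter_upwards [hnh z hz s hs]
    rintro _ ⟨w, ⟨hws, hwU⟩, rfl⟩
    simpa [hgf w hwU] using hws
  have hnz : ∀ z ∈ U, ∀ᶠ w in 𝓝[≠] z, deriv f w ≠ 0 := by
    intro z hz
    have ha : AnalyticAt ℂ f z := hf.analyticAt (hU.mem_nhds hz)
    refine ha.deriv.eventually_eq_zero_or_eventually_ne_zero.resolve_left fun h => ?_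
    obtain ⟨r, hr, hb⟩ := Metric.eventually_nhds_iff_ball.1 (h.and (hU.mem_nhds hz))
    have hconst : ∀ w ∈ ball z r, f w = f z := fun w hw =>
      (isOpen_ball.is_const_of_deriv_eq_zero (convex_ball z r).isPreconnected
        (hf.mono fun w hw => (hb w hw).2) (fun w hw => (hb w hw).1) hw (mem_ball_self hr))
    have h2 : ∀ᶠ w in 𝓝 z, w = z := by
      filter_upwards [ball_mem_nhds z hr] with w hw using hi (hb w hw).2 hz (hconst w hw)
    have h3 : ∀ᶠ w in 𝓝[≠] z, False := by
      filter_upwards [h2.filter_mono nhdsWithin_le_nhds, self_mem_nhdsWithin] with w h1 h2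
        using h2 h1
    exact h3.exists.elim fun _ h => h
  have hd1 : ∀ z ∈ U, deriv f z ≠ 0 → DifferentiableAt ℂ g (f z) := by
    intro z hz hne
    have hdz : HasDerivAt f (deriv f z) z := (hf.differentiableAt (hU.mem_nhds hz)).hasDerivAt
    have : HasDerivAt g (deriv f z)⁻¹ (f z) := by
      apply HasDerivAt.of_local_left_inverse (f := f)
      · have := hc z hz
        rw [ContinuousAt, hgf z hz]; exact this
      · rw [hgf z hz]; exact hdz
      · exact hne
      · filter_upwards [ho.mem_nhds ⟨z, hz, rfl⟩]
        rintro _ ⟨w, hw, rfl⟩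
        rw [hgf w hw]
    exact this.differentiableAt
  have hd : ∀ z ∈ U, DifferentiableAt ℂ g (f z) := by
    intro z hz
    refine (Complex.analyticAt_of_differentiable_on_punctured_nhds_of_continuousAt ?_ ?_).differentiableAt
    · have h1 := hnz z hz
      rw [eventually_nhdsWithin_iff] at h1 ⊢
      filter_upwards [(hc z hz).eventually h1, ho.mem_nhds ⟨z, hz, rfl⟩]
      rintro _ hw ⟨w, hwU, rfl⟩ hne
      rw [hgf w hwU] at hw
      exact hd1 w hwU (hw fun h => hne (by rw [mem_singleton_iff] at *; rw [h]))
    · rw [ContinuousAt, hgf z hz]; exact hc z hz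
  refine ⟨ho, ?_, hgf, ?_⟩
  · rintro _ ⟨z, hz, rfl⟩
    exact (hd z hz).differentiableWithinAt
  · intro z hz h0
    have h1 : HasDerivAt (g ∘ f) (deriv g (f z) * deriv f z) z :=
      (hd z hz).hasDerivAt.comp z (hf.differentiableAt (hU.mem_nhds hz)).hasDerivAt
    have h2 : HasDerivAt (g ∘ f) 1 z := by
      refine (hasDerivAt_id z).congr_of_eventuallyEq ?_
      filter_upwards [hU.mem_nhds hz] with w hw using hgf w hw
    have := h1.unique h2
    rw [h0, mul_zero] at this
    exact zero_ne_one this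

/-! ### Normal families along an ultrafilter -/

/-- Montel's theorem, with convergence along a fixed ultrafilter in place of a subsequence. -/
lemma montel {U : Set ℂ} (hU : IsOpen U) (F : ℕ → ℂ → ℂ)
    (hd : ∀ n, DifferentiableOn ℂ (F n) U) (hb : ∀ n, ∀ z ∈ U, ‖F n z‖ ≤ 1) :
    ∃ g : ℂ → ℂ, DifferentiableOn ℂ g U ∧
      TendstoLocallyUniformlyOn F g (hyperfilter ℕ : Filter ℕ) U := by
  have hlim : ∀ z ∈ U, ∃ y, Tendsto (fun n => F n z) (hyperfilter ℕ : Filter ℕ) (𝓝 y) := by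
    intro z hz
    have hK : IsCompact (closedBall (0 : ℂ) 1) := isCompact_closedBall 0 1
    obtain ⟨y, -, hy⟩ := hK.ultrafilter_le_nhds ((hyperfilter ℕ).map fun n => F n z) (by
      rw [Ultrafilter.coe_map, le_principal_iff, mem_map]
      exact univ_mem' fun n => by simpa using hb n z hz)
    exact ⟨y, hy⟩
  choose! g hg using hlim
  have hloc : TendstoLocallyUniformlyOn F g (hyperfilter ℕ : Filter ℕ) U := by
    rw [Metric.tendstoLocallyUniformlyOn_iff]
    intro ε hε x hx
    obtain ⟨R, hR, hRU⟩ := Metric.isOpen_iff.1 hU x hx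
    have hlip : ∀ n, ∀ z ∈ ball x R, dist (F n z) (F n x) ≤ 2 / R * dist z x := by
      intro n z hz
      refine Complex.dist_le_div_mul_dist_of_mapsTo_ball ((hd n).mono hRU) ?_ hz
      intro w hw
      rw [mem_closedBall, dist_eq_norm]
      calc ‖F n w - F n x‖ ≤ ‖F n w‖ + ‖F n x‖ := norm_sub_le _ _
        _ ≤ 2 := by linarith [hb n w (hRU hw), hb n x hx]
    have hlipg : ∀ z ∈ ball x R, dist (g z) (g x) ≤ 2 / R * dist z x := by
      intro z hz
      exact le_of_tendsto ((hg z (hRU hz)).dist (hg x hx)) (Eventually.of_forall fun n => hlip n z hz)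
    have hδ : 0 < min R (ε * R / 8) := lt_min hR (by positivity)
    refine ⟨ball x (min R (ε * R / 8)), mem_nhdsWithin_of_mem_nhds (ball_mem_nhds x hδ), ?_⟩
    have hx2 : ∀ᶠ n in (hyperfilter ℕ : Filter ℕ), dist (F n x) (g x) < ε / 4 :=
      (Metric.tendsto_nhds.1 (hg x hx)) _ (by positivity)
    filter_upwards [hx2] with n hn y hy
    have hyR : y ∈ ball x R := ball_subset_ball (min_le_left _ _) hy
    have hyd : dist y x < ε * R / 8 := lt_of_lt_of_le hy (min_le_right _ _)
    have h4 : 2 / R * dist y x ≤ ε / 4 := by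
      calc 2 / R * dist y x ≤ 2 / R * (ε * R / 8) := by gcongr
        _ = ε / 4 := by field_simp; norm_num
    have h1 := hlip n y hyR
    have h2 := hlipg y hyR
    calc dist (g y) (F n y) ≤ dist (g y) (g x) + dist (g x) (F n x) + dist (F n x) (F n y) :=
          dist_triangle4 _ _ _ _
      _ < ε := by rw [dist_comm (g x), dist_comm (F n x) (F n y)]; linarith
  exact ⟨g, hloc.differentiableOn (Eventually.of_forall hd) hU, hloc⟩

/-- Hurwitz' theorem: a locally uniform limit of injective holomorphic functions is injective
unless it is constant. -/
lemma hurwitz {U : Set ℂ} (hU : IsOpen U) (hUc : IsPreconnected U) {ι : Type*} {l : Filter ι}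
    [l.NeBot] (F : ι → ℂ → ℂ) (g : ℂ → ℂ)
    (hd : ∀ n, DifferentiableOn ℂ (F n) U) (hi : ∀ n, InjOn (F n) U)
    (hl : TendstoLocallyUniformlyOn F g l U) {c : ℂ} (hc : c ∈ U) (hgc : deriv g c ≠ 0) :
    InjOn g U := by
  have hg : DifferentiableOn ℂ g U := hl.differentiableOn (Eventually.of_forall hd) hU
  have hga : AnalyticOnNhd ℂ g U := hg.analyticOnNhd hU
  intro a ha b hb hab
  by_contra hne
  have h1 : ∀ᶠ w in 𝓝[≠] b, g w ≠ g a := by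
    have h2 : AnalyticAt ℂ (fun w => g w - g a) b := (hga b hb).sub analyticAt_const
    rcases h2.eventually_eq_zero_or_eventually_ne_zero with h | h
    · exfalso
      have h3 : EqOn g (fun _ => g a) U := by
        refine hga.eqOn_of_preconnected_of_eventuallyEq analyticOnNhd_const hUc hb ?_
        filter_upwards [h] with w hw using sub_eq_zero.1 hw
      have h4 : g =ᶠ[𝓝 c] fun _ => g a := by
        filter_upwards [hU.mem_nhds hc] with w hw using h3 hw
      exact hgc (by rw [h4.deriv_eq]; simp)
    · filter_upwards [h] with w hw using sub_ne_zero.1 hw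
  rw [eventually_nhdsWithin_iff] at h1
  obtain ⟨r, hr, hrb⟩ := Metric.eventually_nhds_iff_ball.1
    (h1.and ((hU.mem_nhds hb : ∀ᶠ w in 𝓝 b, w ∈ U)))
  set ρ := min (r / 2) (dist a b / 2) with hρ
  have hab' : 0 < dist a b := dist_pos.2 hne
  have hρ0 : 0 < ρ := lt_min (by positivity) (by positivity)
  have hρr : closedBall b ρ ⊆ ball b r :=
    closedBall_subset_ball (lt_of_le_of_lt (min_le_left _ _) (by linarith))
  have hsub : closedBall b ρ ⊆ U := fun w hw => (hrb w (hρr hw)).2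
  have haB : a ∉ closedBall b ρ := by
    rw [mem_closedBall, not_le]
    exact lt_of_le_of_lt (min_le_right _ _) (by linarith)
  have hcpt : IsCompact (sphere b ρ) := isCompact_sphere b ρ
  have hne0 : ∀ w ∈ sphere b ρ, g w - g a ≠ 0 := by
    intro w hw
    have hwc := sphere_subset_closedBall hw
    refine sub_ne_zero.2 ((hrb w (hρr hwc)).1 ?_)
    rintro (rfl : w = b)
    rw [mem_sphere, dist_self] at hw
    linarith
  obtain ⟨m, hm, hmle⟩ : ∃ m > 0, ∀ w ∈ sphere b ρ, m ≤ ‖g w - g a‖ := by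
    have hcont : ContinuousOn (fun w => ‖g w - g a‖) (sphere b ρ) :=
      ((hg.continuousOn.mono (sphere_subset_closedBall.trans hsub)).sub continuousOn_const).norm
    obtain ⟨w, hw, hmin⟩ := hcpt.exists_isMinOn (NormedSpace.sphere_nonempty.2 hρ0.le) hcont
    exact ⟨‖g w - g a‖, norm_pos_iff.2 (hne0 w hw), fun v hv => hmin hv⟩
  have hunif : ∀ᶠ n in l, ∀ w ∈ sphere b ρ, dist (g w) (F n w) < m / 4 :=
    Metric.tendstoUniformlyOn_iff.1
      ((tendstoLocallyUniformlyOn_iff_forall_isCompact hU).1 hl _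
        (sphere_subset_closedBall.trans hsub) hcpt) _ (by positivity)
  have hpa : ∀ᶠ n in l, dist (F n a) (g a) < m / 8 :=
    Metric.tendsto_nhds.1 (hl.tendsto_at ha) _ (by positivity)
  have hpb : ∀ᶠ n in l, dist (F n b) (g b) < m / 8 :=
    Metric.tendsto_nhds.1 (hl.tendsto_at hb) _ (by positivity)
  obtain ⟨n, hn1, hn2, hn3⟩ := (hunif.and (hpa.and hpb)).exists
  have hnz : ∀ w ∈ closedBall b ρ, F n w - F n a ≠ 0 := by
    intro w hw h
    have := hi n (hsub hw) ha (sub_eq_zero.1 h)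
    exact haB (this ▸ hw)
  have hdc : DiffContOnCl ℂ (fun w => (F n w - F n a)⁻¹) (ball b ρ) := by
    apply DifferentiableOn.diffContOnCl
    rw [closure_ball _ hρ0.ne']
    exact (((hd n).mono hsub).sub_const _).inv hnz
  have hmax := Complex.norm_le_of_forall_mem_frontier_norm_le isBounded_ball hdc
    (C := 2 / m) (by
      intro w hw
      rw [frontier_ball _ hρ0.ne'] at hw
      have e1 := hmle w hw
      have e2 := hn1 w hw
      rw [dist_eq_norm] at e2 hn2
      have e3 : m / 2 ≤ ‖F n w - F n a‖ := by
        have : ‖g w - g a‖ ≤ ‖g w - F n w‖ + ‖F n w - F n a‖ + ‖F n a - g a‖ := by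
          calc ‖g w - g a‖ = ‖(g w - F n w) + (F n w - F n a) + (F n a - g a)‖ := by congr 1; ring
            _ ≤ _ := norm_add₃_le
        linarith
      rw [norm_inv, inv_le_comm₀ (by linarith) (by positivity)]
      calc (2 / m)⁻¹ = m / 2 := by rw [inv_div]
        _ ≤ _ := e3) (z := b) (subset_closure (mem_ball_self hρ0))
  have hbz := hnz b (mem_closedBall_self hρ0.le)
  rw [norm_inv, inv_le_comm₀ (norm_pos_iff.2 hbz) (by positivity), inv_div] at hmax
  have : ‖F n b - F n a‖ < m / 2 := by
    rw [dist_eq_norm] at hn2 hn3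
    calc ‖F n b - F n a‖ = ‖(F n b - g b) - (F n a - g a)‖ := by rw [hab]; congr 1; ring
      _ ≤ ‖F n b - g b‖ + ‖F n a - g a‖ := norm_sub_le _ _
      _ < m / 2 := by linarith
  linarith

/-! ### Riemann mapping -/

/-- The disk automorphism `z ↦ (z - a) / (1 - conj a * z)`. -/
noncomputable def mob (a z : ℂ) : ℂ := (z - a) / (1 - (starRingEnd ℂ) a * z)

lemma mob_denom_ne {a z : ℂ} (ha : ‖a‖ < 1) (hz : ‖z‖ < 1) : 1 - (starRingEnd ℂ) a * z ≠ 0 := by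
  intro h
  have h1 : (starRingEnd ℂ) a * z = 1 := (sub_eq_zero.1 h).symm
  have h2 : ‖a‖ * ‖z‖ = 1 := by
    rw [← RCLike.norm_conj a, ← norm_mul, h1, norm_one]
  nlinarith [norm_nonneg a, norm_nonneg z]

lemma mob_norm_lt {a z : ℂ} (ha : ‖a‖ < 1) (hz : ‖z‖ < 1) : ‖mob a z‖ < 1 := by
  have hd := mob_denom_ne ha hz
  rw [mob, norm_div, div_lt_one (norm_pos_iff.2 hd)]
  have h1 : ‖1 - (starRingEnd ℂ) a * z‖ ^ 2 - ‖z - a‖ ^ 2 = (1 - ‖a‖ ^ 2) * (1 - ‖z‖ ^ 2) := by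
    simp only [← Complex.normSq_eq_norm_sq, Complex.normSq_apply]
    simp
    ring
  have h2 : 0 < (1 - ‖a‖ ^ 2) * (1 - ‖z‖ ^ 2) := by
    apply mul_pos <;> nlinarith [norm_nonneg a, norm_nonneg z]
  exact lt_of_pow_lt_pow_left₀ 2 (norm_nonneg _) (by linarith)

lemma mob_hasDerivAt {a z : ℂ} (ha : ‖a‖ < 1) (hz : ‖z‖ < 1) :
    HasDerivAt (mob a) ((1 - (‖a‖ : ℂ) ^ 2) / (1 - (starRingEnd ℂ) a * z) ^ 2) z := by
  have hd := mob_denom_ne ha hz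
  have h1 : HasDerivAt (fun z : ℂ => z - a) 1 z := (hasDerivAt_id z).sub_const a
  have h2 : HasDerivAt (fun z : ℂ => 1 - (starRingEnd ℂ) a * z) (-(starRingEnd ℂ) a) z := by
    simpa using ((hasDerivAt_id z).const_mul ((starRingEnd ℂ) a)).const_sub 1
  refine (h1.fun_div h2 hd).congr_deriv ?_
  have : ((starRingEnd ℂ) a) * a = (‖a‖ : ℂ) ^ 2 := by
    rw [mul_comm, Complex.mul_conj, Complex.normSq_eq_norm_sq]; push_cast; ring
  rw [← this]; ring

lemma mob_injOn {a : ℂ} (ha : ‖a‖ < 1) : InjOn (mob a) (ball 0 1) := by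
  intro z hz w hw h
  rw [mem_ball_zero_iff] at hz hw
  have h1 := mob_denom_ne ha hz
  have h2 := mob_denom_ne ha hw
  rw [mob, mob, div_eq_div_iff h1 h2] at h
  have h3 : (1 - (starRingEnd ℂ) a * a) * (z - w) = 0 := by linear_combination h
  rcases mul_eq_zero.1 h3 with h | h
  · exact absurd h (mob_denom_ne ha ha)
  · exact sub_eq_zero.1 h

/-- Riemann mapping theorem for subdomains `U` of the disk on which nonvanishing holomorphic
functions have square roots. -/
lemma riemann_mapping {U : Set ℂ} (hU : IsOpen U) (hUc : IsPreconnected U) (h0 : (0 : ℂ) ∈ U)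
    (hUD : U ⊆ ball 0 1)
    (hsq : ∀ q : ℂ → ℂ, DifferentiableOn ℂ q U → (∀ z ∈ U, q z ≠ 0) →
      ∃ s : ℂ → ℂ, DifferentiableOn ℂ s U ∧ ∀ z ∈ U, s z ^ 2 = q z) :
    ∃ ψ : ℂ → ℂ, DifferentiableOn ℂ ψ U ∧ InjOn ψ U ∧ ψ '' U = ball 0 1 ∧ ψ 0 = 0 := by
  let S : Set (ℂ → ℂ) := {ψ | DifferentiableOn ℂ ψ U ∧ InjOn ψ U ∧ MapsTo ψ U (ball 0 1) ∧ ψ 0 = 0}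
  let A : Set ℝ := (fun ψ : ℂ → ℂ => ‖deriv ψ 0‖) '' S
  obtain ⟨r, hr, hrU⟩ := Metric.isOpen_iff.1 hU 0 h0
  have hbdd : BddAbove A := by
    refine ⟨1 / r, ?_⟩
    rintro _ ⟨ψ, ⟨hd, -, hm, hz⟩, rfl⟩
    refine Complex.norm_deriv_le_div_of_mapsTo_ball (hd.mono hrU) ?_ hr
    rw [hz]
    exact (hm.mono_left hrU).mono_right ball_subset_closedBall
  have hid : (id : ℂ → ℂ) ∈ S := ⟨differentiableOn_id, injOn_id _, hUD, rfl⟩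
  have hne : A.Nonempty := ⟨_, id, hid, rfl⟩
  have h1M : 1 ≤ sSup A := le_csSup hbdd ⟨id, hid, by simp⟩
  obtain ⟨u, -, hu, huA⟩ := exists_seq_tendsto_sSup hne hbdd
  choose F hFS hFu using huA
  obtain ⟨g, hgd, hgl⟩ := montel hU F (fun n => (hFS n).1)
    (fun n z hz => (mem_ball_zero_iff.1 ((hFS n).2.2.1 hz)).le)
  have hl : (hyperfilter ℕ : Filter ℕ) ≤ atTop := Nat.hyperfilter_le_atTop
  have hder : Tendsto (fun n => ‖deriv (F n) 0‖) (hyperfilter ℕ : Filter ℕ) (𝓝 ‖deriv g 0‖) :=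
    ((hgl.deriv (Eventually.of_forall fun n => (hFS n).1) hU).tendsto_at h0).norm
  have hM : ‖deriv g 0‖ = sSup A := by
    refine tendsto_nhds_unique hder ?_
    have : (fun n => ‖deriv (F n) 0‖) = u := funext hFu
    rw [this]; exact hu.mono_left hl
  have hg0 : deriv g 0 ≠ 0 := by
    rw [← norm_pos_iff, hM]; linarith
  have hgi : InjOn g U := hurwitz hU hUc F g (fun n => (hFS n).1) (fun n => (hFS n).2.1) hgl h0 hg0
  have hgz : g 0 = 0 := by
    refine tendsto_nhds_unique (hgl.tendsto_at h0) ?_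
    have : (fun n => F n 0) = fun _ => (0 : ℂ) := funext fun n => (hFS n).2.2.2
    rw [this]; exact tendsto_const_nhds
  have hgm : MapsTo g U (ball 0 1) := by
    have ho := (differentiableOn_invFunOn hU hgd hgi).1
    have hcl : g '' U ⊆ closedBall 0 1 := by
      rintro _ ⟨z, hz, rfl⟩
      rw [mem_closedBall_zero_iff]
      exact le_of_tendsto (hgl.tendsto_at hz).norm
        (Eventually.of_forall fun n => (mem_ball_zero_iff.1 ((hFS n).2.2.1 hz)).le)
    have h2 : g '' U ⊆ interior (closedBall 0 1) := interior_maximal hcl ho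
    rw [interior_closedBall _ one_ne_zero] at h2
    exact fun z hz => h2 ⟨z, hz, rfl⟩
  refine ⟨g, hgd, hgi, ?_, hgz⟩
  refine Subset.antisymm (image_subset_iff.2 hgm) ?_
  intro a ha
  by_contra hna
  rw [mem_ball_zero_iff] at ha
  have hgn : ∀ z ∈ U, ‖g z‖ < 1 := fun z hz => mem_ball_zero_iff.1 (hgm hz)
  have hqd : DifferentiableOn ℂ (fun z => mob a (g z)) U := fun z hz =>
    ((mob_hasDerivAt ha (hgn z hz)).comp z
      (hgd.differentiableAt (hU.mem_nhds hz)).hasDerivAt).differentiableAt.differentiableWithinAt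
  have hqn : ∀ z ∈ U, mob a (g z) ≠ 0 := by
    intro z hz h
    rw [mob, div_eq_zero_iff] at h
    rcases h with h | h
    · exact hna ⟨z, hz, sub_eq_zero.1 h⟩
    · exact mob_denom_ne ha (hgn z hz) h
  obtain ⟨s, hsd, hs⟩ := hsq _ hqd hqn
  have hsn : ∀ z ∈ U, ‖s z‖ < 1 := by
    intro z hz
    have h1 : ‖s z‖ ^ 2 < 1 := by rw [← norm_pow, hs z hz]; exact mob_norm_lt ha (hgn z hz)
    exact lt_of_pow_lt_pow_left₀ 2 zero_le_one (by simpa using h1)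
  have hsi : InjOn s U := by
    intro z hz w hw h
    apply hgi hz hw
    apply mob_injOn ha (hgm hz) (hgm hw)
    rw [← hs z hz, ← hs w hw, h]
  set b := s 0 with hb
  have hb1 : ‖b‖ < 1 := hsn 0 h0
  have hb2 : b ^ 2 = -a := by rw [hb, hs 0 h0, hgz]; simp [mob]
  have hb0 : b ≠ 0 := by
    intro h
    have := hqn 0 h0
    rw [← hs 0 h0, ← hb, h] at this
    simp at this
  have hs' : HasDerivAt s (deriv s 0) 0 := (hsd.differentiableAt (hU.mem_nhds h0)).hasDerivAt
  have hg' : HasDerivAt g (deriv g 0) 0 := (hgd.differentiableAt (hU.mem_nhds h0)).hasDerivAt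
  have e1 : 2 * b * deriv s 0 = (1 - (‖a‖ : ℂ) ^ 2) * deriv g 0 := by
    have h1 : HasDerivAt (fun z => s z ^ 2) (2 * b * deriv s 0) 0 := by
      simpa using hs'.fun_pow 2
    have h2 := (mob_hasDerivAt ha (hgn 0 h0)).comp 0 hg'
    have h3 : (fun z => s z ^ 2) =ᶠ[𝓝 0] (mob a ∘ g) := by
      filter_upwards [hU.mem_nhds h0] with z hz using hs z hz
    have h4 := (h1.congr_of_eventuallyEq h3.symm).unique h2
    rw [h4, hgz]; simp
  have e2 : HasDerivAt (fun z => mob b (s z)) (deriv s 0 / (1 - (‖b‖ : ℂ) ^ 2)) 0 := by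
    have h2 := (mob_hasDerivAt hb1 (hsn 0 h0)).comp 0 hs'
    refine h2.congr_deriv ?_
    have h3 : ((starRingEnd ℂ) b) * s 0 = (‖b‖ : ℂ) ^ 2 := by
      rw [← hb, mul_comm, Complex.mul_conj, Complex.normSq_eq_norm_sq]; push_cast; ring
    have h4 : (1 - (‖b‖ : ℂ) ^ 2) ≠ 0 := by
      rw [← h3]; exact mob_denom_ne hb1 (hsn 0 h0)
    rw [h3]; field_simp
  have hmem : (fun z => mob b (s z)) ∈ S := by
    refine ⟨fun z hz => ((mob_hasDerivAt hb1 (hsn z hz)).comp z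
      (hsd.differentiableAt (hU.mem_nhds hz)).hasDerivAt).differentiableAt.differentiableWithinAt,
      ?_, ?_, ?_⟩
    · intro z hz w hw h
      exact hsi hz hw (mob_injOn hb1 (mem_ball_zero_iff.2 (hsn z hz))
        (mem_ball_zero_iff.2 (hsn w hw)) h)
    · intro z hz
      exact mem_ball_zero_iff.2 (mob_norm_lt hb1 (hsn z hz))
    · simp [mob, hb]
  have hle : ‖deriv (fun z => mob b (s z)) 0‖ ≤ ‖deriv g 0‖ := by
    rw [hM]; exact le_csSup hbdd ⟨_, hmem, rfl⟩
  rw [e2.deriv, norm_div] at hle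
  have hn1 : ‖(1 - (‖b‖ : ℂ) ^ 2)‖ = 1 - ‖b‖ ^ 2 := by
    rw [show (1 - (‖b‖ : ℂ) ^ 2) = ((1 - ‖b‖ ^ 2 : ℝ) : ℂ) by push_cast; ring, Complex.norm_real,
      Real.norm_of_nonneg (by nlinarith [norm_nonneg b])]
  have hna' : ‖a‖ = ‖b‖ ^ 2 := by rw [← norm_pow, hb2, norm_neg]
  have hn2 : ‖(1 - (‖a‖ : ℂ) ^ 2)‖ = 1 - ‖b‖ ^ 4 := by
    rw [show (1 - (‖a‖ : ℂ) ^ 2) = ((1 - ‖b‖ ^ 4 : ℝ) : ℂ) by rw [hna']; push_cast; ring,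
      Complex.norm_real, Real.norm_of_nonneg]
    have : ‖b‖ ^ 4 ≤ 1 := pow_le_one₀ (norm_nonneg b) hb1.le
    linarith
  have e3 := congrArg norm e1
  rw [norm_mul, norm_mul, norm_mul, hn2] at e3
  have hbp : 0 < ‖b‖ := norm_pos_iff.2 hb0
  have hgp : 0 < ‖deriv g 0‖ := norm_pos_iff.2 hg0
  have hq : 0 < 1 - ‖b‖ ^ 2 := by nlinarith
  rw [hn1, div_le_iff₀ hq] at hle
  simp only [Complex.norm_ofNat] at e3
  have e4 : (1 - ‖b‖ ^ 4) * ‖deriv g 0‖ ≤ 2 * ‖b‖ * (‖deriv g 0‖ * (1 - ‖b‖ ^ 2)) := by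
    rw [← e3]; gcongr
  have e5 : (1 - ‖b‖ ^ 2) * ‖deriv g 0‖ * (1 - ‖b‖) ^ 2 ≤ 0 := by nlinarith
  have e6 : 0 < (1 - ‖b‖ ^ 2) * ‖deriv g 0‖ * (1 - ‖b‖) ^ 2 := by
    apply mul_pos (mul_pos hq hgp); apply pow_pos; linarith
  linarith

/-- The normalized Riemann map `G` from the disk onto `U`, with its inverse `H`. -/
lemma riemann_map_inverse {U : Set ℂ} (hU : IsOpen U) (hUc : IsPreconnected U) (h0 : (0 : ℂ) ∈ U)
    (hUD : U ⊆ ball 0 1)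
    (hsq : ∀ q : ℂ → ℂ, DifferentiableOn ℂ q U → (∀ z ∈ U, q z ≠ 0) →
      ∃ s : ℂ → ℂ, DifferentiableOn ℂ s U ∧ ∀ z ∈ U, s z ^ 2 = q z) :
    ∃ (G H : ℂ → ℂ) (t : ℝ), DifferentiableOn ℂ G (ball 0 1) ∧ DifferentiableOn ℂ H U ∧
      MapsTo G (ball 0 1) U ∧ MapsTo H U (ball 0 1) ∧ (∀ z ∈ ball (0 : ℂ) 1, H (G z) = z) ∧
      (∀ w ∈ U, G (H w) = w) ∧ G 0 = 0 ∧ H 0 = 0 ∧ deriv G 0 = Complex.exp (-t) := by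
  obtain ⟨ψ, hd, hi, him, hz⟩ := riemann_mapping hU hUc h0 hUD hsq
  obtain ⟨-, hid, hinv, hdne⟩ := differentiableOn_invFunOn hU hd hi
  rw [him] at hid
  set g := Function.invFunOn ψ U
  set c : ℂ := deriv ψ 0 with hc
  have hc0 : c ≠ 0 := hdne 0 h0
  have hcn : (‖c‖ : ℂ) ≠ 0 := by simpa using hc0
  set e : ℂ := c / ‖c‖ with he
  have hen : ‖e‖ = 1 := by rw [he, norm_div]; simp [hc0]
  have he0 : e ≠ 0 := by rw [← norm_pos_iff, hen]; exact one_pos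
  have hmap : ∀ z ∈ ball (0 : ℂ) 1, e * z ∈ ball (0 : ℂ) 1 := by
    intro z hz; rw [mem_ball_zero_iff] at *; rw [norm_mul, hen, one_mul]; exact hz
  have hψg : ∀ w ∈ ball (0 : ℂ) 1, g w ∈ U ∧ ψ (g w) = w := by
    intro w hw
    rw [← him] at hw
    obtain ⟨z, hz, rfl⟩ := hw
    rw [hinv z hz]; exact ⟨hz, rfl⟩
  have hg0 : g 0 = 0 := by have := hinv 0 h0; rwa [hz] at this
  refine ⟨fun z => g (e * z), fun w => e⁻¹ * ψ w, Real.log ‖c‖, ?_, ?_, ?_, ?_, ?_, ?_, ?_, ?_, ?_⟩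
  · exact hid.comp ((differentiable_id.const_mul e).differentiableOn) hmap
  · exact hd.const_mul _
  · intro z hz; exact (hψg _ (hmap z hz)).1
  · intro w hw
    rw [mem_ball_zero_iff, norm_mul, norm_inv, hen, inv_one, one_mul, ← mem_ball_zero_iff, ← him]
    exact ⟨w, hw, rfl⟩
  · intro z hz
    simp only [(hψg _ (hmap z hz)).2]
    field_simp
  · intro w hw
    simp only [mul_inv_cancel_left₀ he0, hinv w hw]
  · simp [hg0]
  · simp [hz]
  · have h1 : HasDerivAt g (deriv g (e * 0)) (e * 0) :=
      (hid.differentiableAt (isOpen_ball.mem_nhds (by simp))).hasDerivAt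
    have h2 : HasDerivAt (fun z : ℂ => e * z) e 0 := by
      simpa using (hasDerivAt_id (0 : ℂ)).const_mul e
    have h3 := h1.comp 0 h2
    have h4 : HasDerivAt (fun z => g (e * z)) (deriv g 0 * e) 0 := h3.congr_deriv (by rw [mul_zero])
    rw [h4.deriv]
    have h5 : HasDerivAt (ψ) c 0 := (hd.differentiableAt (hU.mem_nhds h0)).hasDerivAt
    have h6 : HasDerivAt g (deriv g 0) (ψ 0) := by rw [hz]; simpa using h1
    have h7 := h6.comp 0 h5
    have h8 : HasDerivAt (g ∘ ψ) 1 0 := by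
      refine (hasDerivAt_id (0:ℂ)).congr_of_eventuallyEq ?_
      filter_upwards [hU.mem_nhds h0] with w hw using hinv w hw
    have h9 := h7.unique h8
    rw [← Complex.ofReal_neg, ← Complex.ofReal_exp, Real.exp_neg,
      Real.exp_log (norm_pos_iff.2 hc0), he]
    push_cast
    field_simp
    exact h9

/-! ### Logarithms on the disk -/

lemma exists_log_ball {q : ℂ → ℂ} {R : ℝ} (hR : 0 < R) (hq : DifferentiableOn ℂ q (ball 0 R))
    (hne : ∀ z ∈ ball (0 : ℂ) R, q z ≠ 0) {c : ℂ} (hc : Complex.exp c = q 0) :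
    ∃ k : ℂ → ℂ, DifferentiableOn ℂ k (ball 0 R) ∧ k 0 = c ∧
      ∀ z ∈ ball (0 : ℂ) R, Complex.exp (k z) = q z := by
  have hd : DifferentiableOn ℂ (fun z => deriv q z / q z) (ball 0 R) :=
    (hq.deriv isOpen_ball).div hq hne
  obtain ⟨k, hk0, hk⟩ := hd.isExactOn_ball.with_val_at 0 c
  have hkd : DifferentiableOn ℂ k (ball 0 R) := fun z hz => (hk z hz).differentiableAt.differentiableWithinAt
  refine ⟨k, hkd, hk0, fun z hz => ?_⟩
  have hconst : ∀ z ∈ ball (0 : ℂ) R, q z * Complex.exp (-k z) = q 0 * Complex.exp (-k 0) := by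
    intro z hz
    refine isOpen_ball.is_const_of_deriv_eq_zero (convex_ball (0:ℂ) R).isPreconnected
      (hq.mul hkd.neg.cexp) ?_ hz (mem_ball_self hR)
    intro w hw
    have h1 := (hq.differentiableAt (isOpen_ball.mem_nhds hw)).hasDerivAt.mul (hk w hw).neg.cexp
    have h2 := h1.deriv
    rw [Pi.zero_apply]
    refine h2.trans ?_
    have := hne w hw
    field_simp
    ring
  have h3 := hconst z hz
  rw [hk0, ← hc, ← Complex.exp_add, add_neg_cancel, Complex.exp_zero] at h3
  rw [Complex.exp_neg] at h3
  field_simp at h3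
  exact h3.symm

/-! ### Primitives off a connected closed set -/

/-- The value `∮ dζ / ζ` over the boundary of the square `[-2, 2]²`. -/
noncomputable def squareConst : ℂ :=
  ((∫ x in (-2 : ℝ)..2, ((x : ℂ) + ((-2 : ℝ) : ℂ) * I)⁻¹) -
    (∫ x in (-2 : ℝ)..2, ((x : ℂ) + ((2 : ℝ) : ℂ) * I)⁻¹) +
    I * ∫ y in (-2 : ℝ)..2, (((2 : ℝ) : ℂ) + (y : ℂ) * I)⁻¹) -
    I * ∫ y in (-2 : ℝ)..2, (((-2 : ℝ) : ℂ) + (y : ℂ) * I)⁻¹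

lemma ne_of_im_aux (x : ℝ) {a : ℝ} (ha : a ≠ 0) : (x : ℂ) + (a : ℂ) * I ≠ 0 := by
  intro h
  have := congrArg Complex.im h
  simp at this
  exact ha this

lemma ne_of_re_aux (x : ℝ) {a : ℝ} (ha : a ≠ 0) : (a : ℂ) + (x : ℂ) * I ≠ 0 := by
  intro h
  have := congrArg Complex.re h
  simp at this
  exact ha this

lemma squareConst_ne_zero : squareConst ≠ 0 := by
  have hi1 : ∀ a : ℝ, a ≠ 0 → IntervalIntegrable (fun x : ℝ => ((x : ℂ) + (a : ℂ) * I)⁻¹)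
      MeasureTheory.volume (-2) 2 := fun a ha =>
    (Continuous.inv₀ (by fun_prop) (fun x => ne_of_im_aux x ha)).intervalIntegrable _ _
  have hi2 : ∀ a : ℝ, a ≠ 0 → IntervalIntegrable (fun x : ℝ => ((a : ℂ) + (x : ℂ) * I)⁻¹)
      MeasureTheory.volume (-2) 2 := fun a ha =>
    (Continuous.inv₀ (by fun_prop) (fun x => ne_of_re_aux x ha)).intervalIntegrable _ _
  have h1 : squareConst = I * ((∫ x in (-2 : ℝ)..2, 8 / (x ^ 2 + 4) : ℝ) : ℂ) := by
    rw [squareConst, ← intervalIntegral.integral_sub (hi1 _ (by norm_num)) (hi1 _ (by norm_num)),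
      add_sub_assoc, ← mul_sub,
      ← intervalIntegral.integral_sub (hi2 _ (by norm_num)) (hi2 _ (by norm_num)),
      ← intervalIntegral.integral_const_mul, ← intervalIntegral.integral_add,
      ← intervalIntegral.integral_ofReal, ← intervalIntegral.integral_const_mul]
    · apply intervalIntegral.integral_congr
      intro x _
      have a1 := ne_of_im_aux x (a := 2) (by norm_num)
      have a2 := ne_of_im_aux x (a := -2) (by norm_num)
      have a3 := ne_of_re_aux x (a := 2) (by norm_num)
      have a4 := ne_of_re_aux x (a := -2) (by norm_num)
      have a5 : ((x : ℂ) ^ 2 + 4) ≠ 0 := by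
        have : (0 : ℝ) < x ^ 2 + 4 := by positivity
        exact_mod_cast this.ne'
      have b1 : ((x : ℂ) + ((-2 : ℝ) : ℂ) * I)⁻¹ - ((x : ℂ) + ((2 : ℝ) : ℂ) * I)⁻¹
          = 4 * I / ((x : ℂ) ^ 2 + 4) := by
        rw [inv_sub_inv a2 a1]
        rw [div_eq_div_iff (mul_ne_zero a2 a1) a5]
        push_cast
        linear_combination (16 * I) * Complex.I_sq
      have b2 : (((2 : ℝ) : ℂ) + (x : ℂ) * I)⁻¹ - (((-2 : ℝ) : ℂ) + (x : ℂ) * I)⁻¹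
          = 4 / ((x : ℂ) ^ 2 + 4) := by
        rw [inv_sub_inv a3 a4]
        rw [div_eq_div_iff (mul_ne_zero a3 a4) a5]
        push_cast
        linear_combination (-4 * x ^ 2) * Complex.I_sq
      simp only [b1, b2]
      push_cast
      ring
    · exact (hi1 _ (by norm_num)).sub (hi1 _ (by norm_num))
    · exact ((hi2 _ (by norm_num)).sub (hi2 _ (by norm_num))).const_mul _
  rw [h1]
  refine mul_ne_zero I_ne_zero ?_
  have h2 : 0 < ∫ x in (-2 : ℝ)..2, 8 / (x ^ 2 + 4) := by
    apply intervalIntegral.intervalIntegral_pos_of_pos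
    · refine Continuous.intervalIntegrable ?_ _ _
      exact Continuous.div (by fun_prop) (by fun_prop) (fun x => by positivity)
    · intro x; positivity
    · norm_num
  exact_mod_cast h2.ne'

/-- Cauchy–Pompeiu formula at the origin for a function supported in the disk of radius `2`;
the expression `I * u' x 1 - u' x I` is `2 i` times `∂u / ∂ζ̄`. -/
lemma pompeiu_zero {u : ℂ → ℂ} {u' : ℂ → ℂ →L[ℝ] ℂ} (hu : ∀ x, HasFDerivAt u (u' x) x)
    (hc : Continuous fun x => I * u' x 1 - u' x I)
    (hs : ∀ x, 2 ≤ ‖x‖ → u x = 0) (hs' : ∀ x, 2 ≤ ‖x‖ → I * u' x 1 - u' x I = 0)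
    (h0 : DifferentiableAt ℂ u 0) (hz : ∀ᶠ x in 𝓝 (0 : ℂ), I * u' x 1 - u' x I = 0) :
    -(u 0 * squareConst) = ∫ ζ : ℂ, (I * u' ζ 1 - u' ζ I) * ζ⁻¹ := by
  set D : ℂ → ℂ := fun x => I * u' x 1 - u' x I with hD
  set f' : ℂ → ℂ →L[ℝ] ℂ := fun x => (u x - u 0) •
    ((ContinuousLinearMap.toSpanSingleton ℂ (-(x ^ 2)⁻¹)).restrictScalars ℝ) + x⁻¹ • u' x with hf'
  have hDf : ∀ x, I • f' x 1 - f' x I = D x * x⁻¹ := by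
    intro x
    simp only [hf', hD, smul_eq_mul, add_apply, smul_apply,
      ContinuousLinearMap.coe_restrictScalars', ContinuousLinearMap.toSpanSingleton_apply]
    ring
  have hcont : Continuous fun x => D x * x⁻¹ := by
    rw [continuous_iff_continuousAt]
    intro x
    by_cases hx : x = 0
    · subst hx
      refine (continuousAt_const (y := (0 : ℂ))).congr ?_
      filter_upwards [hz] with y hy
      rw [hD]; simp only [hy, zero_mul]
    · exact hc.continuousAt.mul (continuousAt_inv₀ hx)
  have hrect : (Set.uIcc (-2 - 2 * I : ℂ).re (2 + 2 * I : ℂ).re ×ℂ Set.uIcc (-2 - 2 * I : ℂ).im (2 + 2 * I : ℂ).im)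
      ∈ 𝓝 (0 : ℂ) := by
    refine Filter.mem_of_superset (ball_mem_nhds (0 : ℂ) one_pos) ?_
    intro x hx
    rw [mem_ball_zero_iff] at hx
    have h1 := Complex.abs_re_le_norm x
    have h2 := Complex.abs_im_le_norm x
    rw [Complex.mem_reProdIm, Set.uIcc_of_le (by simp), Set.uIcc_of_le (by simp)]
    simp
    rw [abs_le] at h1 h2
    constructor <;> constructor <;> linarith
  have hucont : Continuous u := continuous_iff_continuousAt.2 fun x => (hu x).continuousAt
  have hcomp : IsCompact (Set.uIcc (-2 - 2 * I : ℂ).re (2 + 2 * I : ℂ).re ×ℂ Set.uIcc (-2 - 2 * I : ℂ).im (2 + 2 * I : ℂ).im) :=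
    IsCompact.reProdIm isCompact_uIcc isCompact_uIcc
  have key := Complex.integral_boundary_rect_of_hasFDerivAt_real_off_countable (dslope u 0) f'
    (-2 - 2 * I) (2 + 2 * I) {0} (countable_singleton 0)
    ((continuousOn_dslope hrect).2 ⟨hucont.continuousOn, h0⟩) (by
      intro x hx
      have hx0 : x ≠ 0 := by simpa using hx.2
      have h1 : HasFDerivAt (fun y => (u y - u 0) * y⁻¹) (f' x) x := by
        have h2 := ((hasDerivAt_inv hx0).hasFDerivAt).restrictScalars ℝ
        exact ((hu x).sub_const (u 0)).mul h2
      refine h1.congr_of_eventuallyEq ?_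
      filter_upwards [isOpen_ne.mem_nhds hx0] with y hy
      rw [dslope_of_ne _ hy, slope_def_field, sub_zero, div_eq_mul_inv]) (by
      simp only [hDf]
      exact hcont.continuousOn.integrableOn_compact hcomp)
  simp only [hDf] at key
  have hval : ∀ x : ℂ, 2 ≤ ‖x‖ → dslope u 0 x = -u 0 * x⁻¹ := by
    intro x hx
    have hx0 : x ≠ 0 := by rintro rfl; norm_num at hx
    rw [dslope_of_ne _ hx0, slope_def_field, hs x hx, sub_zero, zero_sub, div_eq_mul_inv]
  have n1 : ∀ (x a : ℝ), |a| = 2 → 2 ≤ ‖(x : ℂ) + (a : ℂ) * I‖ := by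
    intro x a ha
    have := Complex.abs_im_le_norm ((x : ℂ) + (a : ℂ) * I)
    simpa [ha] using this
  have n2 : ∀ (x a : ℝ), |a| = 2 → 2 ≤ ‖(a : ℂ) + (x : ℂ) * I‖ := by
    intro x a ha
    have := Complex.abs_re_le_norm ((a : ℂ) + (x : ℂ) * I)
    simpa [ha] using this
  have r1 : (-2 - 2 * I : ℂ).re = -2 := by simp
  have r2 : (-2 - 2 * I : ℂ).im = -2 := by simp
  have r3 : (2 + 2 * I : ℂ).re = 2 := by simp
  have r4 : (2 + 2 * I : ℂ).im = 2 := by simp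
  rw [r1, r2, r3, r4] at key
  have a2 : |(2 : ℝ)| = 2 := by norm_num
  have a2' : |(-2 : ℝ)| = 2 := by norm_num
  simp only [hval _ (n1 _ _ a2), hval _ (n1 _ _ a2'), hval _ (n2 _ _ a2), hval _ (n2 _ _ a2'),
    intervalIntegral.integral_const_mul, smul_eq_mul] at key
  have hsupp : ∀ x : ℂ, 2 ≤ ‖x‖ → D x * x⁻¹ = 0 := by
    intro x hx; rw [hD]; simp only [hs' x hx, zero_mul]
  have hfin : (∫ ζ : ℂ, D ζ * ζ⁻¹) =
      ∫ x in (-2 : ℝ)..2, ∫ y in (-2 : ℝ)..2, D (x + y * I) * ((x : ℂ) + y * I)⁻¹ := by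
    have hInt : MeasureTheory.Integrable (fun ζ : ℂ => D ζ * ζ⁻¹) := by
      apply hcont.integrable_of_hasCompactSupport
      refine HasCompactSupport.intro (isCompact_closedBall (0 : ℂ) 2) ?_
      intro x hx
      apply hsupp
      rw [mem_closedBall_zero_iff, not_le] at hx
      exact hx.le
    have hmp := Complex.volume_preserving_equiv_real_prod.symm
    rw [← hmp.integral_comp']
    rw [MeasureTheory.Measure.volume_eq_prod, MeasureTheory.integral_prod]
    · rw [intervalIntegral.integral_eq_integral_of_support_subset]
      · congr 1
        ext x
        rw [intervalIntegral.integral_eq_integral_of_support_subset]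
        · congr 1
          ext y
          simp [Complex.measurableEquivRealProd_symm_apply, Complex.mk_eq_add_mul_I]
        · intro y hy
          by_contra hy'
          apply hy
          apply hsupp
          have h1 := Complex.abs_im_le_norm ((x : ℂ) + y * I)
          simp at h1
          refine le_trans ?_ h1
          rw [mem_Ioc, not_and_or, not_lt, not_le] at hy'
          rcases hy' with h | h
          · rw [abs_of_nonpos] <;> linarith
          · rw [abs_of_nonneg] <;> linarith
      · intro x hx
        by_contra hx'
        apply hx
        have : ∀ y : ℝ, D (x + y * I) * ((x : ℂ) + y * I)⁻¹ = 0 := by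
          intro y
          apply hsupp
          have h1 := Complex.abs_re_le_norm ((x : ℂ) + y * I)
          simp at h1
          refine le_trans ?_ h1
          rw [mem_Ioc, not_and_or, not_lt, not_le] at hx'
          rcases hx' with h | h
          · rw [abs_of_nonpos] <;> linarith
          · rw [abs_of_nonneg] <;> linarith
        simp [this]
    · rw [← MeasureTheory.Measure.volume_eq_prod]
      exact (hmp.integrable_comp_emb (MeasurableEquiv.measurableEmbedding _)).2 hInt
  rw [hfin, ← key, squareConst]
  ring

lemma pompeiu {u : ℂ → ℂ} {u' : ℂ → ℂ →L[ℝ] ℂ} (hu : ∀ x, HasFDerivAt u (u' x) x)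
    (hc : Continuous fun x => I * u' x 1 - u' x I)
    (hs : ∀ x, 1 ≤ ‖x‖ → u x = 0) (hs' : ∀ x, 1 ≤ ‖x‖ → I * u' x 1 - u' x I = 0)
    {w : ℂ} (hw : ‖w‖ < 1)
    (h0 : DifferentiableAt ℂ u w) (hz : ∀ᶠ x in 𝓝 w, I * u' x 1 - u' x I = 0) :
    -(u w * squareConst) = ∫ ζ : ℂ, (I * u' ζ 1 - u' ζ I) * (ζ - w)⁻¹ := by
  have hn : ∀ x : ℂ, 2 ≤ ‖x‖ → 1 ≤ ‖w + x‖ := by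
    intro x hx
    have := norm_sub_norm_le x (-w)
    rw [norm_neg, sub_neg_eq_add, add_comm x w] at this
    linarith
  have hcw : Continuous fun x : ℂ => w + x := by fun_prop
  have key := pompeiu_zero (u := fun x => u (w + x)) (u' := fun x => u' (w + x))
    (fun x => by
      have h1 : HasFDerivAt (fun x : ℂ => w + x) (ContinuousLinearMap.id ℝ ℂ) x :=
        (hasFDerivAt_id x).const_add w
      exact (hu (w + x)).comp x h1)
    (hc.comp hcw)
    (fun x hx => hs _ (hn x hx)) (fun x hx => hs' _ (hn x hx))
    (by
      have h2 : DifferentiableAt ℂ u (w + 0) := by simpa using h0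
      exact h2.comp (0 : ℂ) (by fun_prop))
    (by
      have : Tendsto (fun x : ℂ => w + x) (𝓝 0) (𝓝 w) := by
        simpa using hcw.tendsto 0
      exact this.eventually hz)
  rw [add_zero] at key
  rw [key, ← MeasureTheory.integral_add_left_eq_self (fun ζ : ℂ => (I * u' ζ 1 - u' ζ I) * (ζ - w)⁻¹) w]
  congr 1
  ext ζ
  rw [add_sub_cancel_left]

/-- A branch of `log (w - e)` is turned into one of `log (w - e')` by adding the principal logarithm of
the quotient, which stays close to `1`. -/
lemma exists_log_kernel_step {W : Set ℂ} {e e' : ℂ}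
    (h : ∀ w ∈ W, ‖e - e'‖ < ‖w - e‖)
    (hL : ∃ L : ℂ → ℂ, ∀ w ∈ W, HasDerivAt L (w - e)⁻¹ w) :
    ∃ L : ℂ → ℂ, ∀ w ∈ W, HasDerivAt L (w - e')⁻¹ w := by
  obtain ⟨L, hL⟩ := hL
  refine ⟨fun w => L w + Complex.log ((w - e') / (w - e)), fun w hw => ?_⟩
  have hne : w - e ≠ 0 := by
    intro h0; have := h w hw; rw [h0, norm_zero] at this; linarith [norm_nonneg (e - e')]
  have hne' : w - e' ≠ 0 := by
    intro h0
    have h1 := h w hw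
    rw [sub_eq_zero.1 h0, norm_sub_rev] at h1
    exact lt_irrefl _ h1
  have hq : (w - e') / (w - e) = 1 + (e - e') / (w - e) := by field_simp; ring
  have hs : (w - e') / (w - e) ∈ slitPlane := by
    rw [hq]
    apply Complex.mem_slitPlane_of_norm_lt_one
    rw [norm_div, div_lt_one (norm_pos_iff.2 hne)]
    exact h w hw
  have h1 : HasDerivAt (fun w : ℂ => (w - e') / (w - e))
      ((1 * (w - e) - (w - e') * 1) / (w - e) ^ 2) w :=
    ((hasDerivAt_id w).sub_const e').fun_div ((hasDerivAt_id w).sub_const e) hne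
  refine ((hL w hw).add (h1.clog hs)).congr_deriv ?_
  field_simp
  ring

/-- On a set staying at distance `> δ` from a connected set `E ∋ 2`, the function `1 / (w - ζ)` has a
primitive whenever `ζ` is at distance `< δ` from `E`: the logarithm of `w - ζ` is continued along
a chain in `E`. -/
lemma exists_log_kernel {E : Set ℂ} (hE : IsPreconnected E) (h2 : (2 : ℂ) ∈ E) {δ : ℝ} (hδ : 0 < δ)
    {W : Set ℂ} (hW : ∀ w ∈ W, ‖w‖ < 1) (hd : ∀ w ∈ W, δ < infDist w E) {ζ : ℂ}
    (hζ : infDist ζ E < δ) : ∃ L : ℂ → ℂ, ∀ w ∈ W, HasDerivAt L (w - ζ)⁻¹ w := by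
  have hfar : ∀ e ∈ E, ∀ w ∈ W, δ < ‖w - e‖ := fun e he w hw => by
    rw [← dist_eq_norm]; exact (hd w hw).trans_le (infDist_le_dist_of_mem he)
  have hall : ∀ e ∈ E, ∃ L : ℂ → ℂ, ∀ w ∈ W, HasDerivAt L (w - e)⁻¹ w := by
    intro e he
    refine hE.induction₂ (fun e e' => (∃ L : ℂ → ℂ, ∀ w ∈ W, HasDerivAt L (w - e)⁻¹ w) ↔
      ∃ L : ℂ → ℂ, ∀ w ∈ W, HasDerivAt L (w - e')⁻¹ w) ?_ (fun _ _ _ _ _ _ h h' => h.trans h')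
      (fun _ _ _ _ h => h.symm) h2 he |>.1 ?_
    · intro x hx
      filter_upwards [self_mem_nhdsWithin, mem_nhdsWithin_of_mem_nhds (ball_mem_nhds x hδ)] with y hy hyx
      rw [mem_ball, dist_eq_norm] at hyx
      constructor
      · exact exists_log_kernel_step fun w hw => by
          rw [norm_sub_rev]; exact hyx.trans (hfar x hx w hw)
      · exact exists_log_kernel_step fun w hw => hyx.trans (hfar y hy w hw)
    · refine ⟨fun w => Complex.log (2 - w), fun w hw => ?_⟩
      have h1 : HasDerivAt (fun w : ℂ => 2 - w) (-1) w := (hasDerivAt_id w).const_sub 2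
      have h3 : 2 - w ∈ slitPlane := by
        left
        have := (Complex.abs_re_le_norm w).trans_lt (hW w hw)
        rw [abs_lt] at this
        simp; linarith
      refine (h1.clog h3).congr_deriv ?_
      rw [← neg_sub 2 w, neg_div, one_div, inv_neg]
  obtain ⟨e, he, hlt⟩ := (infDist_lt_iff ⟨2, h2⟩).1 hζ
  refine exists_log_kernel_step (fun w hw => ?_) (hall e he)
  rw [norm_sub_rev, ← dist_eq_norm]; exact hlt.trans (hfar e he w hw)

lemma exists_cutoff {E : Set ℂ} (δ : ℝ) (hδ : 0 < δ) : ∃ χ : ℂ → ℝ, ContDiff ℝ 1 χ ∧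
    (∀ x, infDist x E ≤ δ / 2 → χ x = 0) ∧ (∀ x, 3 * δ / 4 ≤ infDist x E → χ x = 1) := by
  have hc : Continuous fun x : ℂ => infDist x E := continuous_infDist_pt E
  obtain ⟨f, h0, h1, -⟩ := exists_contMDiffMap_zero_one_of_isClosed (n := 1) (modelWithCornersSelf ℝ ℂ)
    (isClosed_le hc (continuous_const (y := δ / 2)))
    (isClosed_le (continuous_const (y := 3 * δ / 4)) hc) (by
      rw [Set.disjoint_left]
      intro x hx hx'
      simp only [mem_ofPred_eq] at hx hx'
      linarith)
  exact ⟨f, f.contMDiff.contDiff, fun x hx => h0 hx, fun x hx => h1 hx⟩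

/-- Primitives at distance `> δ` from `E`. Multiplying `φ` by a cut-off and using the Cauchy–Pompeiu formula
writes `φ` on `W` as an integral of `1 / (w - ζ)` over points `ζ` near `E`, and this kernel has a primitive
on `W`. -/
lemma exists_primitive_far {E : Set ℂ} (hEcl : IsClosed E) (hE : IsPreconnected E) (hout : ∀ z : ℂ, 1 ≤ ‖z‖ → z ∈ E)
    {φ : ℂ → ℂ} (hφ : DifferentiableOn ℂ φ Eᶜ) {δ : ℝ} (hδ : 0 < δ) {W : Set ℂ} (hWo : IsOpen W)
    (hWc : IsPreconnected W) (h0W : (0 : ℂ) ∈ W) (hd : ∀ w ∈ W, δ < infDist w E) :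
    ∃ P : ℂ → ℂ, ∀ w ∈ W, HasDerivAt P (φ w) w := by
  have h2 : (2 : ℂ) ∈ E := hout 2 (by norm_num)
  have hEne : E.Nonempty := ⟨2, h2⟩
  have hEco : IsOpen Eᶜ := hEcl.isOpen_compl
  have hpos : ∀ w, 0 < infDist w E → w ∈ Eᶜ := fun w hw hwE => by
    rw [infDist_zero_of_mem hwE] at hw; exact lt_irrefl _ hw
  have hW1 : ∀ w ∈ W, ‖w‖ < 1 := fun w hw => by
    by_contra h
    exact hpos w (hδ.trans (hd w hw)) (hout w (not_lt.1 h))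
  have hcd : Continuous fun x : ℂ => infDist x E := continuous_infDist_pt E
  -- normalized primitives of the Cauchy kernel
  have hker : ∀ ζ, ∃ L : ℂ → ℂ, infDist ζ E < δ → L 0 = 0 ∧ ∀ w ∈ W, HasDerivAt L (w - ζ)⁻¹ w := by
    intro ζ
    by_cases h : infDist ζ E < δ
    · obtain ⟨L, hL⟩ := exists_log_kernel hE h2 hδ hW1 hd h
      exact ⟨fun w => L w - L 0, fun _ => ⟨sub_self _, fun w hw => (hL w hw).sub_const _⟩⟩
    · exact ⟨0, fun h' => absurd h' h⟩
  choose L hL using hker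
  have huniq : ∀ A B : ℂ → ℂ, A 0 = B 0 → ∀ d : ℂ → ℂ, (∀ w ∈ W, HasDerivAt A (d w) w) →
      (∀ w ∈ W, HasDerivAt B (d w) w) → ∀ w ∈ W, A w = B w := by
    intro A B h0 d hA hB w hw
    have hAB : ∀ w ∈ W, HasDerivAt (fun w => A w - B w) 0 w := fun w hw =>
      ((hA w hw).sub (hB w hw)).congr_deriv (sub_self _)
    have := hWo.is_const_of_deriv_eq_zero hWc
      (fun w hw => (hAB w hw).differentiableAt.differentiableWithinAt)
      (fun w hw => (hAB w hw).deriv) hw h0W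
    simp only [h0, sub_self] at this
    exact sub_eq_zero.1 this
  have hLcont : ∀ w ∈ W, ∀ ζ, infDist ζ E < δ → ContinuousAt (fun ζ => L ζ w) ζ := by
    intro w hw ζ₀ hζ₀
    set ε := δ - infDist ζ₀ E with hε
    have hε0 : 0 < ε := by rw [hε]; linarith
    have hfar : ∀ v ∈ W, ε < ‖v - ζ₀‖ := by
      intro v hv
      have h1 := hd v hv
      have h3 : infDist v E ≤ infDist ζ₀ E + dist v ζ₀ := infDist_le_infDist_add_dist
      rw [dist_eq_norm] at h3; linarith
    have hform : ∀ᶠ ζ in 𝓝 ζ₀, L ζ w = L ζ₀ w + Complex.log ((w - ζ) / (w - ζ₀)) -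
        Complex.log ((0 - ζ) / (0 - ζ₀)) := by
      filter_upwards [ball_mem_nhds ζ₀ hε0, (isOpen_lt hcd continuous_const).mem_nhds hζ₀] with ζ hζ hζ'
      rw [mem_ball, dist_eq_norm] at hζ
      have hder : ∀ v ∈ W, HasDerivAt (fun v => L ζ₀ v + Complex.log ((v - ζ) / (v - ζ₀)) -
        Complex.log ((0 - ζ) / (0 - ζ₀))) (v - ζ)⁻¹ v := by
        intro v hv
        have hlt : ‖ζ₀ - ζ‖ < ‖v - ζ₀‖ := by rw [norm_sub_rev]; exact hζ.trans (hfar v hv)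
        have hne : v - ζ₀ ≠ 0 := norm_pos_iff.1 (hε0.trans (hfar v hv))
        have hne' : v - ζ ≠ 0 := by
          intro h
          rw [sub_eq_zero.1 h, norm_sub_rev] at hlt; exact lt_irrefl _ hlt
        have hs : (v - ζ) / (v - ζ₀) ∈ slitPlane := by
          rw [show (v - ζ) / (v - ζ₀) = 1 + (ζ₀ - ζ) / (v - ζ₀) by field_simp; ring]
          apply Complex.mem_slitPlane_of_norm_lt_one
          rwa [norm_div, div_lt_one (norm_pos_iff.2 hne)]
        have h1 : HasDerivAt (fun v : ℂ => (v - ζ) / (v - ζ₀))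
            ((1 * (v - ζ₀) - (v - ζ) * 1) / (v - ζ₀) ^ 2) v :=
          ((hasDerivAt_id v).sub_const ζ).fun_div ((hasDerivAt_id v).sub_const ζ₀) hne
        refine (((hL ζ₀ hζ₀).2 v hv).add (h1.clog hs)).sub_const _ |>.congr_deriv ?_
        field_simp
        ring
      refine huniq (L ζ) _ ?_ (fun v => (v - ζ)⁻¹) (hL ζ hζ').2 hder w hw
      rw [(hL ζ hζ').1, (hL ζ₀ hζ₀).1]; ring
    have hlog : ∀ v ∈ W, ContinuousAt (fun ζ => Complex.log ((v - ζ) / (v - ζ₀))) ζ₀ := by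
      intro v hv
      have hne : v - ζ₀ ≠ 0 := norm_pos_iff.1 (hε0.trans (hfar v hv))
      refine ContinuousAt.clog (by fun_prop) ?_
      rw [div_self hne]; exact Complex.one_mem_slitPlane
    refine ContinuousAt.congr ?_ (hform.mono fun _ h => h.symm)
    exact (continuousAt_const.add (hlog w hw)).sub (hlog 0 h0W)
  -- the cut-off function
  obtain ⟨χ, hχ, hχ0, hχ1⟩ := exists_cutoff (E := E) δ hδ
  have hχd : ∀ x, HasFDerivAt χ (fderiv ℝ χ x) x := fun x => (hχ.differentiable one_ne_zero x).hasFDerivAt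
  have hχc : Continuous (fderiv ℝ χ) := hχ.continuous_fderiv one_ne_zero
  have hχd0 : ∀ x, infDist x E < δ / 2 → fderiv ℝ χ x = 0 := by
    intro x hx
    have : χ =ᶠ[𝓝 x] fun _ => 0 := by
      filter_upwards [(isOpen_lt hcd continuous_const).mem_nhds hx] with y hy using hχ0 y (le_of_lt hy)
    rw [this.fderiv_eq]; simp
  have hχd1 : ∀ x, 3 * δ / 4 < infDist x E → fderiv ℝ χ x = 0 := by
    intro x hx
    have : χ =ᶠ[𝓝 x] fun _ => 1 := by
      filter_upwards [(isOpen_lt continuous_const hcd).mem_nhds hx] with y hy using hχ1 y (le_of_lt hy)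
    rw [this.fderiv_eq]; simp
  have hφd : ∀ x ∈ Eᶜ, HasDerivAt φ (deriv φ x) x := fun x hx =>
    (hφ.differentiableAt (hEco.mem_nhds hx)).hasDerivAt
  set u : ℂ → ℂ := fun x => (χ x : ℂ) * φ x with hu
  set u' : ℂ → ℂ →L[ℝ] ℂ := fun x => if infDist x E < δ / 2 then 0 else
    (χ x : ℂ) • ((ContinuousLinearMap.toSpanSingleton ℂ (deriv φ x)).restrictScalars ℝ) +
      φ x • (Complex.ofRealCLM.comp (fderiv ℝ χ x)) with hu'
  have hud : ∀ x, HasFDerivAt u (u' x) x := by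
    intro x
    by_cases hx : infDist x E < δ / 2
    · simp only [hu', if_pos hx]
      refine (hasFDerivAt_const (0 : ℂ) x).congr_of_eventuallyEq ?_
      filter_upwards [(isOpen_lt hcd continuous_const).mem_nhds hx] with y hy
      simp only [hu, hχ0 y (le_of_lt hy), ofReal_zero, zero_mul]
    · simp only [hu', if_neg hx]
      have hxE : x ∈ Eᶜ := hpos x (by linarith)
      have h1 : HasFDerivAt (fun x => (χ x : ℂ)) (Complex.ofRealCLM.comp (fderiv ℝ χ x)) x :=
        Complex.ofRealCLM.hasFDerivAt.comp x (hχd x)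
      have h3 := (hφd x hxE).hasFDerivAt.restrictScalars ℝ
      exact h1.mul h3
  set D : ℂ → ℂ := fun x => I * u' x 1 - u' x I with hD
  have hDval : ∀ x, D x = (I * (fderiv ℝ χ x 1 : ℂ) - (fderiv ℝ χ x I : ℂ)) * φ x := by
    intro x
    by_cases hx : infDist x E < δ / 2
    · simp [hD, hu', if_pos hx, hχd0 x hx]
    · simp only [hD, hu', if_neg hx, add_apply, smul_apply,
        ContinuousLinearMap.coe_restrictScalars', ContinuousLinearMap.toSpanSingleton_apply,
        ContinuousLinearMap.comp_apply, Complex.ofRealCLM_apply, smul_eq_mul]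
      ring
  have hDz : ∀ x, infDist x E < δ / 2 ∨ 3 * δ / 4 < infDist x E → D x = 0 := by
    intro x hx
    rw [hDval]
    rcases hx with hx | hx
    · simp [hχd0 x hx]
    · simp [hχd1 x hx]
  have hDc : Continuous D := by
    rw [continuous_iff_continuousAt]
    intro x
    by_cases hx : infDist x E < δ / 2
    · refine (continuousAt_const (y := (0 : ℂ))).congr ?_
      filter_upwards [(isOpen_lt hcd continuous_const).mem_nhds hx] with y hy
      exact (hDz y (Or.inl hy)).symm
    · have hxE : x ∈ Eᶜ := hpos x (by linarith)
      have h1 : ContinuousAt (fun x => (I * (fderiv ℝ χ x 1 : ℂ) - (fderiv ℝ χ x I : ℂ)) * φ x) x := by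
        refine ContinuousAt.mul ?_ (hφd x hxE).continuousAt
        apply Continuous.continuousAt
        have a1 : Continuous fun x => fderiv ℝ χ x 1 := hχc.clm_apply continuous_const
        have a2 : Continuous fun x => fderiv ℝ χ x I := hχc.clm_apply continuous_const
        fun_prop
      exact h1.congr (Eventually.of_forall fun y => (hDval y).symm)
  have hDc' : ∀ x, 1 ≤ ‖x‖ → D x = 0 := fun x hx => hDz x (Or.inl (by
    rw [infDist_zero_of_mem (hout x hx)]; positivity))
  have hDcomp : ∀ g : ℂ → ℂ, (∀ ζ, infDist ζ E < δ → ContinuousAt g ζ) →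
      Continuous (fun ζ => D ζ * g ζ) ∧ MeasureTheory.Integrable (fun ζ => D ζ * g ζ) := by
    intro g hg
    have hc : Continuous (fun ζ => D ζ * g ζ) := by
      rw [continuous_iff_continuousAt]
      intro x
      by_cases hx : infDist x E < δ
      · exact hDc.continuousAt.mul (hg x hx)
      · have hx' : 3 * δ / 4 < infDist x E := by linarith
        refine (continuousAt_const (y := (0 : ℂ))).congr ?_
        filter_upwards [(isOpen_lt continuous_const hcd).mem_nhds hx'] with y hy
        rw [hDz y (Or.inr hy), zero_mul]
    refine ⟨hc, hc.integrable_of_hasCompactSupport ?_⟩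
    refine HasCompactSupport.intro (isCompact_closedBall (0 : ℂ) 1) ?_
    intro x hx
    rw [mem_closedBall_zero_iff, not_le] at hx
    rw [hDc' x hx.le, zero_mul]
  have hformula : ∀ w ∈ W, -(φ w * squareConst) = ∫ ζ : ℂ, D ζ * (ζ - w)⁻¹ := by
    intro w hw
    have hw3 : 3 * δ / 4 < infDist w E := by linarith [hd w hw]
    have hev : ∀ᶠ y in 𝓝 w, 3 * δ / 4 < infDist y E := (isOpen_lt continuous_const hcd).mem_nhds hw3
    have huw : u =ᶠ[𝓝 w] φ := by
      filter_upwards [hev] with y hy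
      simp [hu, hχ1 y hy.le]
    have h1 := pompeiu hud hDc (fun x hx => ?_) hDc' (hW1 w hw)
      (((hφd w (hpos w (by linarith))).differentiableAt).congr_of_eventuallyEq huw)
      (hev.mono fun y hy => hDz y (Or.inr hy))
    · rw [huw.eq_of_nhds] at h1; exact h1
    · simp only [hu]
      rw [hχ0 x (by rw [infDist_zero_of_mem (hout x hx)]; positivity)]; simp
  -- differentiate under the integral sign
  have hP : ∀ w ∈ W, HasDerivAt (fun w => ∫ ζ : ℂ, D ζ * L ζ w) (∫ ζ : ℂ, D ζ * (w - ζ)⁻¹) w := by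
    intro w₀ hw₀
    refine (hasDerivAt_integral_of_dominated_loc_of_deriv_le (F' := fun w ζ => D ζ * (w - ζ)⁻¹)
      (bound := fun ζ => ‖D ζ‖ * (4 / δ)) (hWo.mem_nhds hw₀) ?_ ?_ ?_ ?_ ?_ ?_).2
    · filter_upwards [hWo.mem_nhds hw₀] with w hw
      exact (hDcomp _ (hLcont w hw)).1.aestronglyMeasurable
    · exact (hDcomp _ (hLcont w₀ hw₀)).2
    · refine (hDcomp (fun ζ => (w₀ - ζ)⁻¹) ?_).1.aestronglyMeasurable
      intro ζ hζ
      refine ContinuousAt.inv₀ (by fun_prop) ?_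
      intro h
      have := hd w₀ hw₀
      rw [sub_eq_zero.1 h] at this; linarith
    · refine Eventually.of_forall fun ζ w hw => ?_
      by_cases hζ : 3 * δ / 4 < infDist ζ E
      · rw [hDz ζ (Or.inr hζ)]; simp
      · rw [norm_mul, norm_inv]
        gcongr
        have h1 := hd w hw
        have h3 : infDist w E ≤ infDist ζ E + dist w ζ := infDist_le_infDist_add_dist
        rw [dist_eq_norm] at h3
        rw [inv_le_comm₀ (by linarith) (by positivity), inv_div]
        linarith
    · have h1 := (hDcomp (fun _ => 1) (fun _ _ => continuousAt_const)).2
      simp only [mul_one] at h1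
      exact h1.norm.mul_const _
    · refine Eventually.of_forall fun ζ w hw => ?_
      by_cases hζ : 3 * δ / 4 < infDist ζ E
      · simp only [hDz ζ (Or.inr hζ), zero_mul]
        exact hasDerivAt_const _ _
      · exact ((hL ζ (by linarith)).2 w hw).const_mul _
  refine ⟨fun w => (∫ ζ : ℂ, D ζ * L ζ w) * squareConst⁻¹, fun w hw => ?_⟩
  refine ((hP w hw).mul_const _).congr_deriv ?_
  have h1 := hformula w hw
  have h3 : (∫ ζ : ℂ, D ζ * (w - ζ)⁻¹) = φ w * squareConst := by
    rw [← neg_neg (φ w * squareConst), h1, ← MeasureTheory.integral_neg]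
    congr 1
    ext ζ
    rw [← neg_sub ζ w, inv_neg, mul_neg]
  rw [h3, mul_assoc, mul_inv_cancel₀ squareConst_ne_zero, mul_one]

/-- The component of `0` in the complement of a closed connected set containing the exterior of
the disk carries square roots of nonvanishing holomorphic functions. -/
lemma exists_sqrt_component {E : Set ℂ} (hEcl : IsClosed E) (hE : IsPreconnected E)
    (hout : ∀ z : ℂ, 1 ≤ ‖z‖ → z ∈ E) (h0E : (0 : ℂ) ∉ E) (q : ℂ → ℂ)
    (hq : DifferentiableOn ℂ q (connectedComponentIn Eᶜ 0))
    (hne : ∀ z ∈ connectedComponentIn Eᶜ 0, q z ≠ 0) :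
    ∃ s : ℂ → ℂ, DifferentiableOn ℂ s (connectedComponentIn Eᶜ 0) ∧
      ∀ z ∈ connectedComponentIn Eᶜ 0, s z ^ 2 = q z := by
  set U := connectedComponentIn Eᶜ 0 with hU
  have hEco : IsOpen Eᶜ := hEcl.isOpen_compl
  have hUo : IsOpen U := hEco.connectedComponentIn
  have h0U : (0 : ℂ) ∈ U := mem_connectedComponentIn h0E
  have hEne : E.Nonempty := ⟨2, hout 2 (by norm_num)⟩
  have hcd : Continuous fun x : ℂ => infDist x E := continuous_infDist_pt E
  have hposE : ∀ w ∉ E, 0 < infDist w E := fun w hw => (hEcl.notMem_iff_infDist_pos hEne).1 hw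
  classical
  set φ : ℂ → ℂ := fun z => if z ∈ U then deriv q z / q z else 0 with hφ
  have hφU : ∀ z ∈ U, φ z = deriv q z / q z := fun z hz => if_pos hz
  have hφd : DifferentiableOn ℂ φ Eᶜ := by
    intro v hv
    apply DifferentiableAt.differentiableWithinAt
    by_cases hvU : v ∈ U
    · have h1 : DifferentiableAt ℂ (fun z => deriv q z / q z) v :=
        ((hq.deriv hUo).div hq hne).differentiableAt (hUo.mem_nhds hvU)
      refine h1.congr_of_eventuallyEq ?_
      filter_upwards [hUo.mem_nhds hvU] with z hz using hφU z hz
    · refine (differentiableAt_const (0 : ℂ)).congr_of_eventuallyEq ?_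
      have hV : IsOpen (connectedComponentIn Eᶜ v) := hEco.connectedComponentIn
      filter_upwards [hV.mem_nhds (mem_connectedComponentIn hv)] with z hz
      refine if_neg fun hzU => hvU ?_
      have h1 := connectedComponentIn_eq hz
      have h2 := connectedComponentIn_eq hzU
      rw [hU, h2, ← h1]
      exact mem_connectedComponentIn hv
  -- the exhausting domains
  set Wd : ℝ → Set ℂ := fun δ => connectedComponentIn {w | δ < infDist w E} 0 with hWd
  have hop : ∀ δ : ℝ, IsOpen {w : ℂ | δ < infDist w E} := fun δ => isOpen_lt continuous_const hcd
  have hWo : ∀ δ, IsOpen (Wd δ) := fun δ => (hop δ).connectedComponentIn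
  have hWU : ∀ δ > 0, Wd δ ⊆ U := by
    intro δ hδ
    apply connectedComponentIn_mono
    intro w hw hwE
    simp only [mem_ofPred_eq] at hw
    rw [infDist_zero_of_mem hwE] at hw; linarith
  have hWmono : ∀ δ δ', δ ≤ δ' → Wd δ' ⊆ Wd δ := by
    intro δ δ' h
    apply connectedComponentIn_mono
    intro w hw; exact lt_of_le_of_lt h hw
  have h0W : ∀ δ w, w ∈ Wd δ → (0 : ℂ) ∈ Wd δ := by
    intro δ w hw
    have : (0 : ℂ) ∈ {w : ℂ | δ < infDist w E} := by
      by_contra h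
      rw [hWd] at hw
      simp only [connectedComponentIn_eq_empty h] at hw
      exact hw
    exact mem_connectedComponentIn this
  have hcover : ∀ w ∈ U, ∃ δ > 0, w ∈ Wd δ := by
    intro w hw
    have hconn : IsConnected U := ⟨⟨0, h0U⟩, isPreconnected_connectedComponentIn⟩
    have hp := (hUo.isConnected_iff_isPathConnected.1 hconn).joinedIn 0 h0U w hw
    obtain ⟨p, hp⟩ := hp
    have hK : IsCompact (range p) := isCompact_range p.continuous
    obtain ⟨x, hx, hmin⟩ := hK.exists_isMinOn ⟨p 0, mem_range_self _⟩ hcd.continuousOn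
    have hxE : 0 < infDist x E := by
      obtain ⟨t, rfl⟩ := hx
      exact hposE _ (connectedComponentIn_subset _ _ (hp t))
    refine ⟨infDist x E / 2, by linarith, ?_⟩
    refine (isPreconnected_range p.continuous).subset_connectedComponentIn ⟨0, p.source⟩ ?_ ⟨1, p.target⟩
    intro y hy
    have := hmin hy
    simp only [mem_ofPred_eq] at this ⊢
    linarith
  have hprim : ∀ δ : ℝ, ∃ P : ℂ → ℂ, 0 < δ → (P 0 = Complex.log (q 0) ∧ ∀ w ∈ Wd δ, HasDerivAt P (deriv q w / q w) w) := by
    intro δ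
    by_cases hδ : 0 < δ
    · by_cases h : (0 : ℂ) ∈ Wd δ
      · obtain ⟨P, hP⟩ := exists_primitive_far hEcl hE hout hφd hδ (hWo δ)
          isPreconnected_connectedComponentIn h (fun w hw => connectedComponentIn_subset {w : ℂ | δ < infDist w E} 0 hw)
        refine ⟨fun w => P w + (Complex.log (q 0) - P 0), fun _ => ⟨by ring, fun w hw => ?_⟩⟩
        rw [← hφU w (hWU δ hδ hw)]
        exact (hP w hw).add_const _
      · exact ⟨fun _ => Complex.log (q 0), fun _ => ⟨rfl, fun w hw => absurd (h0W δ w hw) h⟩⟩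
    · exact ⟨0, fun h => absurd h hδ⟩
  choose P hP using hprim
  have hexp : ∀ δ > 0, ∀ w ∈ Wd δ, Complex.exp (P δ w) = q w := by
    intro δ hδ w hw
    have h0 := h0W δ w hw
    have hd : ∀ v ∈ Wd δ, HasDerivAt (fun v => q v * Complex.exp (-P δ v)) 0 v := by
      intro v hv
      have hvU := hWU δ hδ hv
      have h1 := (hq.differentiableAt (hUo.mem_nhds hvU)).hasDerivAt.mul ((hP δ hδ).2 v hv).neg.cexp
      refine h1.congr_deriv ?_
      have := hne v hvU
      field_simp
      ring
    have h1 := (hWo δ).is_const_of_deriv_eq_zero isPreconnected_connectedComponentIn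
      (fun v hv => (hd v hv).differentiableAt.differentiableWithinAt) (fun v hv => (hd v hv).deriv) hw h0
    simp only [(hP δ hδ).1] at h1
    rw [Complex.exp_neg, Complex.exp_neg, Complex.exp_log (hne 0 h0U), mul_inv_cancel₀ (hne 0 h0U)] at h1
    have := Complex.exp_ne_zero (P δ w)
    field_simp at h1
    exact h1.symm
  have hagree : ∀ δ > 0, ∀ δ' > 0, ∀ w ∈ Wd δ, w ∈ Wd δ' → P δ w = P δ' w := by
    have aux : ∀ δ > 0, ∀ δ', δ ≤ δ' → ∀ w ∈ Wd δ', P δ w = P δ' w := by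
      intro δ hδ δ' hle w hw
      have hδ' : 0 < δ' := hδ.trans_le hle
      have hd : ∀ v ∈ Wd δ', HasDerivAt (fun v => P δ v - P δ' v) 0 v := fun v hv =>
        (((hP δ hδ).2 v (hWmono _ _ hle hv)).sub ((hP δ' hδ').2 v hv)).congr_deriv (sub_self _)
      have h1 := (hWo δ').is_const_of_deriv_eq_zero isPreconnected_connectedComponentIn
        (fun v hv => (hd v hv).differentiableAt.differentiableWithinAt) (fun v hv => (hd v hv).deriv)
        hw (h0W δ' w hw)
      simp only [(hP δ hδ).1, (hP δ' hδ').1, sub_self] at h1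
      exact sub_eq_zero.1 h1
    intro δ hδ δ' hδ' w hw hw'
    rcases le_total δ δ' with h | h
    · exact aux δ hδ δ' h w hw'
    · exact (aux δ' hδ' δ h w hw).symm
  choose! dl hdl0 hdl using hcover
  refine ⟨fun w => Complex.exp (P (dl w) w / 2), fun w hw => ?_, fun w hw => ?_⟩
  · apply DifferentiableAt.differentiableWithinAt
    have h1 : DifferentiableAt ℂ (fun v => Complex.exp (P (dl w) v / 2)) w :=
      (((hP _ (hdl0 w hw)).2 w (hdl w hw)).differentiableAt.div_const 2).cexp
    refine h1.congr_of_eventuallyEq ?_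
    filter_upwards [(hWo (dl w)).mem_nhds (hdl w hw)] with v hv
    have hvU := hWU _ (hdl0 w hw) hv
    rw [hagree _ (hdl0 v hvU) _ (hdl0 w hw) v (hdl v hvU) hv]
  · rw [← Complex.exp_nat_mul, ← hexp _ (hdl0 w hw) w (hdl w hw)]
    congr 1
    push_cast
    ring

/-! ### Self-maps of the disk and chains -/

/-- Holomorphic self-maps `w` of the disk, vanishing only at the origin, with `w'(0) = e^{-h}`. -/
structure SelfMap (w : ℂ → ℂ) (h : ℝ) : Prop where
  diff : DifferentiableOn ℂ w (ball 0 1)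
  maps : MapsTo w (ball 0 1) (ball 0 1)
  zero : w 0 = 0
  der : deriv w 0 = Complex.exp (-h)
  ne : ∀ z ∈ ball (0 : ℂ) 1, z ≠ 0 → w z ≠ 0

/-- Maps obtained from the identity by successive precompositions with self-maps `w`,
`w'(0) = e^{-h}`, of step size `h ≤ ε`; the real parameter is the total of the steps. -/
inductive Chain (ε : ℝ) : (ℂ → ℂ) → ℝ → Prop
  | start : Chain ε (fun z => z) 0
  | step {G w F : ℂ → ℂ} {t h : ℝ} : Chain ε G t → SelfMap w h → h ≤ ε →
      EqOn F (G ∘ w) (ball 0 1) → Chain ε F (t + h)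

lemma SelfMap.exists_log {w : ℂ → ℂ} {h : ℝ} (hw : SelfMap w h) :
    ∃ k : ℂ → ℂ, DifferentiableOn ℂ k (ball 0 1) ∧ k 0 = h ∧
      (∀ z ∈ ball (0 : ℂ) 1, w z = z * Complex.exp (-k z)) ∧
      ∀ z ∈ ball (0 : ℂ) 1, 0 ≤ (k z).re := by
  have hnh : ball (0 : ℂ) 1 ∈ 𝓝 (0 : ℂ) := ball_mem_nhds _ one_pos
  have hd : DifferentiableOn ℂ (dslope w 0) (ball 0 1) :=
    (Complex.differentiableOn_dslope hnh).2 hw.diff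
  have hval : ∀ z ∈ ball (0 : ℂ) 1, w z = z * dslope w 0 z := by
    intro z hz
    have := sub_smul_dslope w 0 z
    rw [hw.zero, sub_zero, sub_zero, smul_eq_mul] at this
    exact this.symm
  have hne : ∀ z ∈ ball (0 : ℂ) 1, dslope w 0 z ≠ 0 := by
    intro z hz
    by_cases h0 : z = 0
    · rw [h0, dslope_same, hw.der]; exact Complex.exp_ne_zero _
    · intro hcon
      apply hw.ne z hz h0
      rw [hval z hz, hcon, mul_zero]
  obtain ⟨k, hk, hk0, hke⟩ := exists_log_ball one_pos hd hne (c := -h) (by rw [dslope_same, hw.der])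
  refine ⟨fun z => -k z, hk.neg, by simp [hk0], fun z hz => by rw [neg_neg, hke z hz, hval z hz], fun z hz => ?_⟩
  have h1 : ‖dslope w 0 z‖ ≤ 1 / 1 := Complex.norm_dslope_le_div_of_mapsTo_ball hw.diff
    (by rw [hw.zero]; exact fun z hz => ball_subset_closedBall (hw.maps hz)) hz
  rw [← hke z hz, Complex.norm_exp, div_one, Real.exp_le_one_iff] at h1
  simpa using h1

/-- `G` and `H` are mutually inverse conformal maps between the disk and `U`, fixing the origin,
with `G'(0) = e^{-t}`. -/
structure IsRiem (U : Set ℂ) (G H : ℂ → ℂ) (t : ℝ) : Prop where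
  diffG : DifferentiableOn ℂ G (ball 0 1)
  diffH : DifferentiableOn ℂ H U
  mapsG : MapsTo G (ball 0 1) U
  mapsH : MapsTo H U (ball 0 1)
  left : ∀ z ∈ ball (0 : ℂ) 1, H (G z) = z
  right : ∀ w ∈ U, G (H w) = w
  G0 : G 0 = 0
  H0 : H 0 = 0
  der : deriv G 0 = Complex.exp (-t)

lemma IsRiem.deriv_mul {U : Set ℂ} {G H : ℂ → ℂ} {t : ℝ} (h : IsRiem U G H t) (hU : IsOpen U)
    (h0 : (0 : ℂ) ∈ U) : deriv H 0 = Complex.exp t := by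
  have h1 : HasDerivAt G (deriv G 0) 0 :=
    (h.diffG.differentiableAt (ball_mem_nhds _ one_pos)).hasDerivAt
  have h2 : HasDerivAt H (deriv H 0) (G 0) := by
    rw [h.G0]; exact (h.diffH.differentiableAt (hU.mem_nhds h0)).hasDerivAt
  have h3 := h2.comp 0 h1
  have h4 : HasDerivAt (H ∘ G) 1 0 := by
    refine (hasDerivAt_id (0 : ℂ)).congr_of_eventuallyEq ?_
    filter_upwards [ball_mem_nhds (0 : ℂ) one_pos] with z hz using h.left z hz
  have h5 := h3.unique h4
  rw [h.der, Complex.exp_neg] at h5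
  have := Complex.exp_ne_zero (t : ℂ)
  field_simp at h5
  exact h5

/-- The transition map from a subdomain: if `g` maps the disk injectively into `U` then
`H ∘ g` is a self-map. -/
lemma IsRiem.selfMap {U : Set ℂ} {G H : ℂ → ℂ} {t : ℝ} (h : IsRiem U G H t) (hU : IsOpen U)
    (h0 : (0 : ℂ) ∈ U) {g : ℂ → ℂ} {s : ℝ} (hg : DifferentiableOn ℂ g (ball 0 1))
    (hgi : InjOn g (ball 0 1)) (hgm : MapsTo g (ball 0 1) U) (hg0 : g 0 = 0)
    (hgd : deriv g 0 = Complex.exp (-s)) :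
    SelfMap (fun z => H (g z)) (s - t) ∧ EqOn g (G ∘ fun z => H (g z)) (ball 0 1) := by
  refine ⟨⟨h.diffH.comp hg hgm, fun z hz => h.mapsH (hgm hz), by simp [hg0, h.H0], ?_, ?_⟩, ?_⟩
  · have h1 : HasDerivAt g (deriv g 0) 0 :=
      (hg.differentiableAt (ball_mem_nhds _ one_pos)).hasDerivAt
    have h2 : HasDerivAt H (deriv H 0) (g 0) := by
      rw [hg0]; exact (h.diffH.differentiableAt (hU.mem_nhds h0)).hasDerivAt
    have h3 : HasDerivAt (fun z => H (g z)) _ 0 := h2.comp 0 h1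
    rw [h3.deriv, h.deriv_mul hU h0, hgd, ← Complex.exp_add]
    congr 1; push_cast; ring
  · intro z hz hz0 hcon
    apply hz0
    apply hgi hz (mem_ball_self one_pos)
    have := h.right _ (hgm hz)
    rw [hcon, h.G0] at this
    rw [← this, hg0]
  · intro z hz
    exact (h.right _ (hgm hz)).symm

/-- Maximum principle with the boundary behaviour tested along ultrafilters tending to the circle. -/
lemma norm_zero_le_one_of_ultrafilter {Φ : ℂ → ℂ} (hΦ : DifferentiableOn ℂ Φ (ball 0 1))
    (h : ∀ 𝓤 : Ultrafilter ℂ, ball (0 : ℂ) 1 ∈ 𝓤 → Tendsto (fun z : ℂ => ‖z‖) 𝓤 (𝓝 1) →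
      ∀ η > 0, ∀ᶠ z in 𝓤, ‖Φ z‖ ≤ 1 + η) : ‖Φ 0‖ ≤ 1 := by
  refine le_of_forall_pos_le_add fun η hη => ?_
  by_contra hcon
  have hex : ∀ n : ℕ, ∃ z : ℂ, ‖z‖ = 1 - 1 / ((n : ℝ) + 2) ∧ ¬ ‖Φ z‖ ≤ 1 + η := by
    intro n
    by_contra! hn
    have hpos : 0 < 1 / ((n : ℝ) + 2) := by positivity
    have hlt : 1 / ((n : ℝ) + 2) < 1 := by
      rw [div_lt_one (by positivity)]; linarith [(Nat.cast_nonneg n : (0 : ℝ) ≤ n)]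
    set r := 1 - 1 / ((n : ℝ) + 2) with hr
    have hr0 : r ≠ 0 := by linarith
    refine hcon (Complex.norm_le_of_forall_mem_frontier_norm_le (U := ball (0 : ℂ) r) isBounded_ball ?_ ?_ ?_)
    · apply DifferentiableOn.diffContOnCl
      rw [closure_ball _ hr0]
      exact hΦ.mono (closedBall_subset_ball (by linarith))
    · intro z hz
      rw [frontier_ball _ hr0, mem_sphere_zero_iff_norm] at hz
      exact hn z hz
    · exact subset_closure (mem_ball_self (by linarith))
  choose z hz hz' using hex
  have hl : (hyperfilter ℕ : Filter ℕ) ≤ atTop := Nat.hyperfilter_le_atTop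
  have h1 := h ((hyperfilter ℕ).map z) (by
    rw [Ultrafilter.mem_map]
    refine Filter.univ_mem' fun n => ?_
    rw [mem_preimage, mem_ball_zero_iff, hz]
    have : 0 < 1 / ((n : ℝ) + 2) := by positivity
    linarith) (by
    rw [Ultrafilter.coe_map, tendsto_map'_iff]
    have h2 : (fun z : ℂ => ‖z‖) ∘ z = fun n : ℕ => 1 - 1 / ((n : ℝ) + 2) := funext hz
    rw [h2]
    refine Tendsto.mono_left ?_ hl
    have h3 : Tendsto (fun n : ℕ => 1 / ((n : ℝ) + 2)) atTop (𝓝 0) := by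
      refine tendsto_const_nhds.div_atTop (tendsto_atTop_add_const_right _ _ tendsto_natCast_atTop_atTop)
    simpa using h3.const_sub 1) η hη
  rw [Ultrafilter.coe_map, eventually_map] at h1
  obtain ⟨n, hn⟩ := h1.exists
  exact hz' n hn

/-- Removing a small disk from the domain changes the conformal radius by little. -/
lemma step_bound {E : Set ℂ} (hEcl : IsClosed E) (hout : ∀ z : ℂ, 1 ≤ ‖z‖ → z ∈ E)
    {p : ℂ} (hp : ‖p‖ ≤ 1) {δ ρ : ℝ} (hδ : 0 < δ) (hδ1 : δ < 1) (hρ : 0 < ρ) (hρ1 : ρ < 1)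
    (hball : ball (0 : ℂ) ρ ⊆ connectedComponentIn (E ∪ closedBall p δ)ᶜ 0)
    {G H G' H' : ℂ → ℂ} {t t' : ℝ} (hR : IsRiem (connectedComponentIn Eᶜ 0) G H t)
    (hR' : IsRiem (connectedComponentIn (E ∪ closedBall p δ)ᶜ 0) G' H' t') :
    (t' - t) * Real.log (2 / δ) ≤ Real.log (1 / ρ) * Real.log (2 / ρ) := by
  set U := connectedComponentIn Eᶜ 0 with hU
  set U' := connectedComponentIn (E ∪ closedBall p δ)ᶜ 0 with hU'
  have hUo : IsOpen U := hEcl.isOpen_compl.connectedComponentIn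
  have hU'o : IsOpen U' := (hEcl.union isClosed_closedBall).isOpen_compl.connectedComponentIn
  have hsub : U' ⊆ U := connectedComponentIn_mono _ (compl_subset_compl.2 subset_union_left)
  have h0' : (0 : ℂ) ∈ U' := hball (mem_ball_self hρ)
  have h0 : (0 : ℂ) ∈ U := hsub h0'
  have hUD : ∀ z ∈ U, ‖z‖ < 1 := fun z hz => by
    by_contra hcon
    exact connectedComponentIn_subset _ _ hz (hout z (not_lt.1 hcon))
  have hU'n : ∀ z ∈ U', z ∉ closedBall p δ := fun z hz hcon =>
    connectedComponentIn_subset _ _ hz (Or.inr hcon)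
  have hG'i : InjOn G' (ball 0 1) := fun x hx y hy hxy => by
    rw [← hR'.left x hx, ← hR'.left y hy, hxy]
  obtain ⟨hS, -⟩ := hR.selfMap hUo h0 hR'.diffG hG'i (fun z hz => hsub (hR'.mapsG hz)) hR'.G0 hR'.der
  set w : ℂ → ℂ := fun z => H (G' z) with hw
  obtain ⟨k, hkd, hk0, hkw, hkre⟩ := hS.exists_log
  -- closed components
  have hUcl : ∀ y ∈ closure U, y ∉ E → y ∈ U := by
    intro y hy hyE
    have hV : IsOpen (connectedComponentIn Eᶜ y) := hEcl.isOpen_compl.connectedComponentIn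
    obtain ⟨x, hx1, hx2⟩ := mem_closure_iff.1 hy _ hV (mem_connectedComponentIn hyE)
    rw [hU, connectedComponentIn_eq hx2, ← connectedComponentIn_eq hx1]
    exact mem_connectedComponentIn hyE
  have hU'cl : ∀ y ∈ closure U', y ∉ E ∪ closedBall p δ → y ∈ U' := by
    intro y hy hyE
    have hV : IsOpen (connectedComponentIn (E ∪ closedBall p δ)ᶜ y) :=
      (hEcl.union isClosed_closedBall).isOpen_compl.connectedComponentIn
    obtain ⟨x, hx1, hx2⟩ := mem_closure_iff.1 hy _ hV (mem_connectedComponentIn hyE)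
    rw [hU', connectedComponentIn_eq hx2, ← connectedComponentIn_eq hx1]
    exact mem_connectedComponentIn hyE
  have hpU' : p ∉ U' := fun h => hU'n p h (mem_closedBall_self hδ.le)
  have hpρ : ρ ≤ ‖p‖ := by
    by_contra hcon
    exact hpU' (hball (mem_ball_zero_iff.2 (not_le.1 hcon)))
  have hGp : ∀ z ∈ ball (0 : ℂ) 1, G' z - p ≠ 0 := fun z hz h =>
    hpU' (sub_eq_zero.1 h ▸ hR'.mapsG hz)
  have hqne : ∀ z ∈ ball (0 : ℂ) 1, (G' z - p) / 2 ≠ 0 := fun z hz =>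
    div_ne_zero (hGp z hz) two_ne_zero
  obtain ⟨ℓ, hℓd, -, hℓ⟩ := exists_log_ball one_pos ((hR'.diffG.sub_const p).div_const 2) hqne
    (Complex.exp_log (hqne 0 (mem_ball_self one_pos)))
  have hl2δ : 0 < Real.log (2 / δ) := Real.log_pos (by rw [lt_div_iff₀ hδ]; linarith)
  have hl1ρ : 0 < Real.log (1 / ρ) := Real.log_pos (by rw [lt_div_iff₀ hρ]; linarith)
  set c : ℝ := Real.log (1 / ρ) / Real.log (2 / δ) with hc
  have hc0 : 0 < c := div_pos hl1ρ hl2δ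
  have hcδ : (δ / 2) ^ c = ρ := by
    rw [Real.rpow_def_of_pos (by positivity), ← inv_div, Real.log_inv, hc]
    rw [show -Real.log (2 / δ) * (Real.log (1 / ρ) / Real.log (2 / δ)) = -Real.log (1 / ρ) by field_simp]
    rw [← Real.log_inv, one_div, inv_inv, Real.exp_log hρ]
  set Φ : ℂ → ℂ := fun z => Complex.exp (k z + c * ℓ z) with hΦ
  have hΦn : ∀ z ∈ ball (0 : ℂ) 1, ‖Φ z‖ = Real.exp (k z).re * (‖G' z - p‖ / 2) ^ c := by
    intro z hz
    have h1 : ‖G' z - p‖ / 2 = Real.exp (ℓ z).re := by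
      rw [← Complex.norm_exp, hℓ z hz, norm_div]; simp
    rw [hΦ, Complex.norm_exp, h1, ← Real.exp_mul, ← Real.exp_add]
    congr 1
    simp [mul_comm]
  have hΦw : ∀ z ∈ ball (0 : ℂ) 1, z ≠ 0 → ‖Φ z‖ = (‖z‖ / ‖w z‖) * (‖G' z - p‖ / 2) ^ c := by
    intro z hz hz0
    have h2 : 0 < ‖z‖ := norm_pos_iff.2 hz0
    rw [hΦn z hz, hkw z hz, norm_mul, Complex.norm_exp, Complex.neg_re, Real.exp_neg]
    congr 1
    field_simp
  have hmain : ‖Φ 0‖ ≤ 1 := by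
    refine norm_zero_le_one_of_ultrafilter (hkd.add (hℓd.const_mul _)).cexp ?_
    intro 𝓤 hball𝓤 hnorm η hη
    have hne𝓤 : ∀ᶠ z in (𝓤 : Filter ℂ), z ≠ 0 := by
      filter_upwards [hnorm.eventually (lt_mem_nhds (show (0 : ℝ) < 1 by norm_num))] with z hz
      exact norm_pos_iff.1 hz
    have hbev : ∀ᶠ z in (𝓤 : Filter ℂ), z ∈ ball (0 : ℂ) 1 := hball𝓤
    -- limit of `G'`
    obtain ⟨y, -, hy⟩ := (isCompact_closedBall (0 : ℂ) 1).ultrafilter_le_nhds (𝓤.map G') (by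
      rw [le_principal_iff]
      show ∀ᶠ z in (𝓤 : Filter ℂ), G' z ∈ closedBall (0 : ℂ) 1
      filter_upwards [hbev] with z hz
      exact mem_closedBall_zero_iff.2 (hUD _ (hsub (hR'.mapsG hz))).le)
    have hyT : Tendsto G' 𝓤 (𝓝 y) := hy
    obtain ⟨b, hb1, hb⟩ := (isCompact_closedBall (0 : ℂ) 1).ultrafilter_le_nhds (𝓤.map w) (by
      rw [le_principal_iff]
      show ∀ᶠ z in (𝓤 : Filter ℂ), w z ∈ closedBall (0 : ℂ) 1
      filter_upwards [hbev] with z hz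
      exact ball_subset_closedBall (hS.maps hz))
    have hbT : Tendsto w 𝓤 (𝓝 b) := hb
    have hyU'cl : y ∈ closure U' := mem_closure_of_tendsto hyT (hbev.mono fun z hz => hR'.mapsG hz)
    have hyU' : y ∉ U' := by
      intro hyU
      have h1 : Tendsto (fun z => H' (G' z)) 𝓤 (𝓝 (H' y)) :=
        ((hR'.diffH.differentiableAt (hU'o.mem_nhds hyU)).continuousAt.tendsto).comp hyT
      have h2 : Tendsto (fun z => ‖H' (G' z)‖) 𝓤 (𝓝 1) := by
        refine hnorm.congr' ?_
        filter_upwards [hbev] with z hz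
        rw [hR'.left z hz]
      have h3 := tendsto_nhds_unique h1.norm h2
      have h4 := hR'.mapsH hyU
      rw [mem_ball_zero_iff, h3] at h4
      exact lt_irrefl _ h4
    have hcases : ‖b‖ ≠ 0 ∧ (1 / ‖b‖) * (‖y - p‖ / 2) ^ c ≤ 1 := by
      by_cases hyE : y ∈ E
      · have hb1' : ‖b‖ = 1 := by
          refine le_antisymm (mem_closedBall_zero_iff.1 hb1) ?_
          by_contra hlt
          rw [not_le] at hlt
          have hbb : b ∈ ball (0 : ℂ) 1 := mem_ball_zero_iff.2 hlt
          have h1 : Tendsto (fun z => G (w z)) 𝓤 (𝓝 (G b)) :=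
            ((hR.diffG.differentiableAt (isOpen_ball.mem_nhds hbb)).continuousAt.tendsto).comp hbT
          have h2 : Tendsto (fun z => G (w z)) 𝓤 (𝓝 y) := by
            refine hyT.congr' ?_
            filter_upwards [hbev] with z hz
            exact (hR.right _ (hsub (hR'.mapsG hz))).symm
          have h3 := tendsto_nhds_unique h1 h2
          exact connectedComponentIn_subset _ _ (hR.mapsG hbb) (h3 ▸ hyE)
        rw [hb1']
        refine ⟨one_ne_zero, ?_⟩
        rw [div_one, one_mul]
        refine Real.rpow_le_one (by positivity) ?_ hc0.le
        have hy1 : ‖y‖ ≤ 1 := by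
          refine le_of_tendsto hyT.norm ?_
          filter_upwards [hbev] with z hz using (hUD _ (hsub (hR'.mapsG hz))).le
        have := norm_sub_le y p
        linarith
      · have hyU : y ∈ U := hUcl y (closure_mono hsub hyU'cl) hyE
        have hyb : y ∈ closedBall p δ := by
          by_contra hcon
          exact hyU' (hU'cl y hyU'cl (by simp only [mem_union, not_or]; exact ⟨hyE, hcon⟩))
        have hbH : b = H y := by
          refine tendsto_nhds_unique hbT ?_
          exact ((hR.diffH.differentiableAt (hUo.mem_nhds hyU)).continuousAt.tendsto).comp hyT
        have hyρ : ρ ≤ ‖y‖ := by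
          by_contra hcon
          exact hyU' (hball (mem_ball_zero_iff.2 (not_le.1 hcon)))
        have hyHy : ‖y‖ ≤ ‖b‖ := by
          have h1 := Complex.norm_le_norm_of_mapsTo_ball hR.diffG (fun z hz =>
            mem_closedBall_zero_iff.2 (hUD _ (hR.mapsG hz)).le) hR.G0 (mem_ball_zero_iff.1 (hR.mapsH hyU))
          rwa [hR.right y hyU, ← hbH] at h1
        have hbρ : ρ ≤ ‖b‖ := hyρ.trans hyHy
        refine ⟨by linarith, ?_⟩
        rw [mem_closedBall, dist_eq_norm] at hyb
        calc (1 / ‖b‖) * (‖y - p‖ / 2) ^ c ≤ (1 / ρ) * (δ / 2) ^ c := by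
              gcongr
          _ = 1 := by rw [hcδ]; field_simp
    have hlim : Tendsto (fun z => (‖z‖ / ‖w z‖) * (‖G' z - p‖ / 2) ^ c) 𝓤
        (𝓝 ((1 / ‖b‖) * (‖y - p‖ / 2) ^ c)) := by
      refine (hnorm.div hbT.norm hcases.1).mul ?_
      exact ((hyT.sub_const p).norm.div_const 2).rpow_const (Or.inr hc0.le)
    have hlt : (1 / ‖b‖) * (‖y - p‖ / 2) ^ c < 1 + η := by linarith [hcases.2]
    filter_upwards [hlim.eventually (gt_mem_nhds hlt), hbev, hne𝓤] with z h1 h2 h3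
    rw [hΦw z h2 h3]; exact h1.le
  rw [hΦn 0 (mem_ball_self one_pos), hk0, hR'.G0, zero_sub, norm_neg, Complex.ofReal_re] at hmain
  have hpp : 0 < ‖p‖ := hρ.trans_le hpρ
  have h1 : (t' - t) + c * Real.log (‖p‖ / 2) ≤ 0 := by
    rw [Real.rpow_def_of_pos (by positivity), ← Real.exp_add, Real.exp_le_one_iff] at hmain
    linarith
  have h2 : -Real.log (2 / ρ) ≤ Real.log (‖p‖ / 2) := by
    rw [← Real.log_inv, inv_div]
    exact Real.log_le_log (by positivity) (by linarith)
  have h3 : t' - t ≤ c * Real.log (2 / ρ) := by nlinarith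
  calc (t' - t) * Real.log (2 / δ) ≤ (c * Real.log (2 / ρ)) * Real.log (2 / δ) := by gcongr
    _ = Real.log (1 / ρ) * Real.log (2 / ρ) := by rw [hc]; field_simp

/-- The exterior of the unit disk together with `n` closed disks of radius `δ`. -/
def discs (p : ℕ → ℂ) (δ : ℝ) : ℕ → Set ℂ
  | 0 => {z : ℂ | 1 ≤ ‖z‖}
  | n + 1 => discs p δ n ∪ closedBall (p n) δ

lemma discs_isClosed (p : ℕ → ℂ) (δ : ℝ) (n : ℕ) : IsClosed (discs p δ n) := by
  induction n with
  | zero => exact isClosed_le continuous_const continuous_norm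
  | succ n ih => exact ih.union isClosed_closedBall

lemma discs_out (p : ℕ → ℂ) (δ : ℝ) (n : ℕ) (z : ℂ) (hz : 1 ≤ ‖z‖) : z ∈ discs p δ n := by
  induction n with
  | zero => exact hz
  | succ n ih => exact Or.inl ih

lemma mem_discs (p : ℕ → ℂ) (δ : ℝ) {i n : ℕ} (h : i < n) {z : ℂ} (hz : z ∈ closedBall (p i) δ) :
    z ∈ discs p δ n := by
  induction n with
  | zero => omega
  | succ n ih =>
    rcases Nat.lt_succ_iff_lt_or_eq.1 h with h | h
    · exact Or.inl (ih h)
    · subst h; exact Or.inr hz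

lemma notMem_discs (p : ℕ → ℂ) (δ : ℝ) (n : ℕ) {z : ℂ} (h1 : ‖z‖ < 1)
    (h2 : ∀ i, z ∉ closedBall (p i) δ) : z ∉ discs p δ n := by
  induction n with
  | zero => exact not_le.2 h1
  | succ n ih => rintro (h | h); exacts [ih h, h2 n h]

lemma discs_isPreconnected (p : ℕ → ℂ) {δ : ℝ} (hδ : 0 < δ) (hp0 : p 0 = 1)
    (hstep : ∀ i, dist (p i) (p (i + 1)) ≤ δ) (n : ℕ) : IsPreconnected (discs p δ n) := by
  induction n with
  | zero =>
    have h1 : discs p δ 0 = Complex.exp '' {z : ℂ | 0 ≤ z.re} := by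
      ext z
      simp only [discs, mem_ofPred_eq, mem_image]
      constructor
      · intro hz
        have hz0 : z ≠ 0 := by rintro rfl; norm_num at hz
        refine ⟨Complex.log z, ?_, Complex.exp_log hz0⟩
        rw [Complex.log_re]; exact Real.log_nonneg hz
      · rintro ⟨w, hw, rfl⟩
        rw [Complex.norm_exp]; exact Real.one_le_exp hw
    rw [h1]
    exact (convex_halfSpace_re_ge 0).isPreconnected.image _ Complex.continuous_exp.continuousOn
  | succ n ih =>
    refine ih.union (p n) ?_ (mem_closedBall_self hδ.le) (convex_closedBall _ _).isPreconnected
    cases n with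
    | zero => rw [hp0]; simp [discs]
    | succ m => exact Or.inr (by rw [mem_closedBall, dist_comm]; exact hstep m)

/-- Removing the disks one at a time gives Riemann maps that form a chain with steps at most `ε`. -/
lemma exists_domains {p : ℕ → ℂ} {δ ρ ε : ℝ} (hδ : 0 < δ) (hδ1 : δ < 1) (hρ : 0 < ρ) (hρ1 : ρ < 1)
    (hp0 : p 0 = 1) (hp : ∀ i, ‖p i‖ ≤ 1) (hstep : ∀ i, dist (p i) (p (i + 1)) ≤ δ)
    {S : Set ℂ} (hS : IsPreconnected S) (hSρ : ball (0 : ℂ) ρ ⊆ S) (hS1 : ∀ z ∈ S, ‖z‖ < 1)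
    (hSp : ∀ z ∈ S, ∀ i, z ∉ closedBall (p i) δ)
    (hε : Real.log (1 / ρ) * Real.log (2 / ρ) ≤ ε * Real.log (2 / δ)) (n : ℕ) :
    S ⊆ connectedComponentIn (discs p δ n)ᶜ 0 ∧
    ∃ (G H : ℂ → ℂ) (t : ℝ), IsRiem (connectedComponentIn (discs p δ n)ᶜ 0) G H t ∧ Chain ε G t := by
  have hsub : ∀ n, S ⊆ connectedComponentIn (discs p δ n)ᶜ 0 := fun n =>
    hS.subset_connectedComponentIn (hSρ (mem_ball_self hρ))
      fun z hz => notMem_discs p δ n (hS1 z hz) (hSp z hz)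
  refine ⟨hsub n, ?_⟩
  induction n with
  | zero =>
    have h1 : (discs p δ 0)ᶜ = ball (0 : ℂ) 1 := by
      ext z; simp [discs]
    have h2 : connectedComponentIn (discs p δ 0)ᶜ 0 = ball (0 : ℂ) 1 := by
      rw [h1]
      exact (convex_ball (0 : ℂ) 1).isPreconnected.connectedComponentIn (mem_ball_self one_pos)
    rw [h2]
    refine ⟨fun z => z, fun z => z, 0, ⟨differentiableOn_id, differentiableOn_id, fun _ h => h,
      fun _ h => h, fun _ _ => rfl, fun _ _ => rfl, rfl, rfl, ?_⟩, Chain.start⟩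
    simp
  | succ n ih =>
    obtain ⟨G, H, t, hR, hch⟩ := ih
    have hcl := discs_isClosed p δ (n + 1)
    have h0 : (0 : ℂ) ∈ connectedComponentIn (discs p δ (n + 1))ᶜ 0 := hsub _ (hSρ (mem_ball_self hρ))
    have hD : connectedComponentIn (discs p δ (n + 1))ᶜ 0 ⊆ ball 0 1 := by
      intro z hz
      rw [mem_ball_zero_iff]
      by_contra hcon
      exact connectedComponentIn_subset _ _ hz (discs_out p δ _ z (not_lt.1 hcon))
    obtain ⟨G', H', t', a1, a2, a3, a4, a5, a6, a7, a8, a9⟩ :=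
      riemann_map_inverse hcl.isOpen_compl.connectedComponentIn isPreconnected_connectedComponentIn h0 hD
        (exists_sqrt_component hcl (discs_isPreconnected p hδ hp0 hstep _) (discs_out p δ _)
          (connectedComponentIn_subset _ _ h0))
    have hR' : IsRiem (connectedComponentIn (discs p δ (n + 1))ᶜ 0) G' H' t' :=
      ⟨a1, a2, a3, a4, a5, a6, a7, a8, a9⟩
    refine ⟨G', H', t', hR', ?_⟩
    have hb := step_bound (discs_isClosed p δ n) (discs_out p δ n) (hp n) hδ hδ1 hρ hρ1
      (hSρ.trans (hsub (n + 1))) hR hR'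
    have hsub2 : connectedComponentIn (discs p δ (n + 1))ᶜ 0 ⊆ connectedComponentIn (discs p δ n)ᶜ 0 :=
      connectedComponentIn_mono _ (compl_subset_compl.2 subset_union_left)
    obtain ⟨hSM, heq⟩ := hR.selfMap (discs_isClosed p δ n).isOpen_compl.connectedComponentIn (hsub2 h0)
      hR'.diffG (fun x hx y hy hxy => by rw [← hR'.left x hx, ← hR'.left y hy, hxy])
      (fun z hz => hsub2 (hR'.mapsG hz)) hR'.G0 hR'.der
    have hle : t' - t ≤ ε := by
      have hl2δ : 0 < Real.log (2 / δ) := Real.log_pos (by rw [lt_div_iff₀ hδ]; linarith)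
      exact le_of_mul_le_mul_right (hb.trans hε) hl2δ
    have := Chain.step hch hSM hle heq
    rwa [add_sub_cancel] at this

/-- A univalent function on a disk of radius `R > 1`, bounded by one, is reached by chains of
arbitrarily small step. -/
theorem exists_chain {f : ℂ → ℂ} {R : ℝ} (hR : 1 < R) (hf : DifferentiableOn ℂ f (ball 0 R))
    (hi : InjOn f (ball 0 R)) (hm : MapsTo f (ball 0 R) (ball 0 1)) (h0 : f 0 = 0) {T : ℝ}
    (hd : deriv f 0 = Complex.exp (-T)) {ε : ℝ} (hε : 0 < ε) : Chain ε f T := by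
  -- the outer radius
  obtain ⟨r, hr1, hrR, hrε⟩ : ∃ r : ℝ, 1 < r ∧ r < R ∧ Real.log r ≤ ε := by
    refine ⟨min ((1 + R) / 2) (Real.exp ε), ?_, ?_, ?_⟩
    · exact lt_min (by linarith) (Real.one_lt_exp_iff.2 hε)
    · exact (min_le_left _ _).trans_lt (by linarith)
    · rw [Real.log_le_iff_le_exp (lt_min (by linarith) (Real.exp_pos _))]
      exact min_le_right _ _
  have hcb : closedBall (0 : ℂ) r ⊆ ball 0 R := closedBall_subset_ball hrR
  have hfc : ContinuousOn f (closedBall 0 r) := hf.continuousOn.mono hcb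
  have hKr : IsCompact (f '' closedBall 0 r) := (isCompact_closedBall _ _).image_of_continuousOn hfc
  have hbR : ball (0 : ℂ) r ⊆ ball 0 R := ball_subset_ball hrR.le
  have hop : IsOpen (f '' ball 0 r) :=
    (differentiableOn_invFunOn isOpen_ball (hf.mono hbR) (hi.mono hbR)).1
  have h1R : closedBall (0 : ℂ) 1 ⊆ ball 0 R := closedBall_subset_ball hR
  have hK1 : IsCompact (f '' closedBall 0 1) :=
    (isCompact_closedBall _ _).image_of_continuousOn (hf.continuousOn.mono h1R)
  have hop1 : IsOpen (f '' ball 0 1) :=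
    (differentiableOn_invFunOn isOpen_ball (hf.mono (ball_subset_ball hR.le))
      (hi.mono (ball_subset_ball hR.le))).1
  -- the last point of the segment `[0, 1]` in the image of the closed disk
  obtain ⟨s₀, hs₀, hs₀1, hs₀max⟩ : ∃ s₀ : ℝ, ((s₀ : ℂ) ∈ f '' closedBall 0 r) ∧ s₀ ∈ Icc (0 : ℝ) 1 ∧
      ∀ s ∈ Icc (0 : ℝ) 1, (s : ℂ) ∈ f '' closedBall 0 r → s ≤ s₀ := by
    have hA : IsCompact (Icc (0 : ℝ) 1 ∩ (fun s : ℝ => (s : ℂ)) ⁻¹' (f '' closedBall 0 r)) :=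
      isCompact_Icc.inter_right (hKr.isClosed.preimage Complex.continuous_ofReal)
    obtain ⟨s, hs, hmax⟩ := hA.exists_isMaxOn
      ⟨0, ⟨le_rfl, zero_le_one⟩, ⟨0, mem_closedBall_self (by linarith), by simp [h0]⟩⟩ continuousOn_id
    exact ⟨s, hs.2, hs.1, fun s' h1 h2 => hmax ⟨h1, h2⟩⟩
  obtain ⟨z₀, hz₀, hfz₀⟩ := hs₀
  have hs₀lt : s₀ < 1 := by
    have := hm (hcb hz₀)
    rw [hfz₀, mem_ball_zero_iff, Complex.norm_real, Real.norm_of_nonneg hs₀1.1] at this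
    exact this
  have hz₀r : ‖z₀‖ = r := by
    rw [mem_closedBall_zero_iff] at hz₀
    refine le_antisymm hz₀ ?_
    by_contra hlt
    rw [not_le] at hlt
    have hmem : (s₀ : ℂ) ∈ f '' ball 0 r := ⟨z₀, mem_ball_zero_iff.2 hlt, hfz₀⟩
    have hev : ∀ᶠ s : ℝ in 𝓝 s₀, (s : ℂ) ∈ f '' ball 0 r :=
      Complex.continuous_ofReal.continuousAt.eventually (hop.mem_nhds hmem)
    have hev2 : ∀ᶠ s : ℝ in 𝓝[>] s₀, s₀ < s ∧ s < 1 ∧ (s : ℂ) ∈ f '' ball 0 r := by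
      filter_upwards [self_mem_nhdsWithin, mem_nhdsWithin_of_mem_nhds (gt_mem_nhds hs₀lt),
        mem_nhdsWithin_of_mem_nhds hev] with s h1 h2 h3 using ⟨h1, h2, h3⟩
    obtain ⟨s, h1, h2, h3⟩ := hev2.exists
    have := hs₀max s ⟨hs₀1.1.trans h1.le, h2.le⟩ (image_mono ball_subset_closedBall h3)
    linarith
  -- the path: a segment followed by the image of the circle of radius `r`
  set lp : ℝ → ℂ := fun t => f (z₀ * Complex.exp (2 * Real.pi * (t - 1) * I)) with hlp
  have hlpn : ∀ t : ℝ, ‖z₀ * Complex.exp (2 * Real.pi * (t - 1) * I)‖ = r := by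
    intro t
    have : (2 * Real.pi * (t - 1) * I : ℂ) = ((2 * Real.pi * (t - 1) : ℝ) : ℂ) * I := by push_cast; ring
    rw [norm_mul, this, Complex.norm_exp_ofReal_mul_I, mul_one, hz₀r]
  have hlpc : Continuous lp := by
    refine hfc.comp_continuous (by fun_prop) fun t => ?_
    rw [mem_closedBall_zero_iff, hlpn t]
  set γ : ℝ → ℂ := fun t => if t ≤ 1 then ((1 - t * (1 - s₀) : ℝ) : ℂ) else lp t with hγ
  have hγc : Continuous γ := by
    refine Continuous.if_le (by fun_prop) hlpc continuous_id continuous_const ?_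
    intro t ht
    simp only [ht, hlp, Complex.ofReal_one, sub_self, mul_zero, zero_mul, Complex.exp_zero, mul_one]
    rw [hfz₀]; push_cast; ring
  have hγ1 : ∀ t ∈ Icc (0 : ℝ) 2, ‖γ t‖ ≤ 1 := by
    intro t ht
    simp only [hγ]
    split_ifs with h
    · rw [Complex.norm_real, Real.norm_of_nonneg] <;> nlinarith [ht.1, hs₀1.1]
    · exact (mem_ball_zero_iff.1 (hm (hcb (mem_closedBall_zero_iff.2 (hlpn t).le)))).le
  have hfr : ∀ z, ‖z‖ = r → f z ∉ f '' closedBall 0 1 := by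
    rintro z hz ⟨y, hy, hyz⟩
    have := hi (h1R hy) (hcb (mem_closedBall_zero_iff.2 hz.le)) hyz
    rw [this, mem_closedBall_zero_iff] at hy
    linarith
  have hγn : ∀ t ∈ Icc (0 : ℝ) 2, γ t ∉ f '' closedBall 0 1 := by
    intro t ht
    simp only [hγ]
    split_ifs with h
    · intro hmem
      have h2 := hs₀max (1 - t * (1 - s₀)) ⟨by nlinarith [ht.1, hs₀1.1], by nlinarith [ht.1]⟩
        (image_mono (closedBall_subset_closedBall hr1.le) hmem)
      have h3 : t = 1 := by nlinarith [ht.1]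
      subst h3
      have h4 : ((1 - 1 * (1 - s₀) : ℝ) : ℂ) = f z₀ := by rw [hfz₀]; push_cast; ring
      rw [h4] at hmem
      exact hfr z₀ hz₀r hmem
    · exact hfr _ (hlpn t)
  have hKγ : IsCompact (γ '' Icc 0 2) := isCompact_Icc.image hγc
  have hdisj : Disjoint (γ '' Icc 0 2) (f '' closedBall 0 1) := by
    rw [Set.disjoint_left]; rintro _ ⟨t, ht, rfl⟩; exact hγn t ht
  obtain ⟨d, hd0, hdsep⟩ : ∃ d > 0, ∀ x ∈ γ '' Icc 0 2, ∀ y ∈ f '' closedBall 0 1, d < dist x y := by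
    obtain ⟨d, hd0, hd⟩ := hdisj.exists_thickenings hKγ hK1.isClosed
    refine ⟨d / 2, by positivity, fun x hx y hy => ?_⟩
    by_contra hcon
    refine Set.disjoint_left.1 hd (self_subset_thickening hd0 _ hx) ?_
    rw [mem_thickening_iff]
    exact ⟨y, hy, by linarith⟩
  obtain ⟨ρ, hρ0, hρ1, hρ⟩ : ∃ ρ > 0, ρ < 1 ∧ ball (0 : ℂ) ρ ⊆ f '' ball 0 1 := by
    obtain ⟨ρ, hρ0, hρ⟩ := Metric.isOpen_iff.1 hop1 0 ⟨0, mem_ball_self one_pos, h0⟩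
    exact ⟨min ρ (1 / 2), by positivity, (min_le_right _ _).trans_lt (by norm_num),
      (ball_subset_ball (min_le_left _ _)).trans hρ⟩
  -- the radius of the removed disks
  set C := Real.log (1 / ρ) * Real.log (2 / ρ) with hC
  set δ := min (min (d / 2) (1 / 2)) (2 * Real.exp (-(C / ε))) with hδdef
  have hδ0 : 0 < δ := by positivity
  have hδd : δ < d := ((min_le_left _ _).trans (min_le_left _ _)).trans_lt (by linarith)
  have hδ1 : δ < 1 := ((min_le_left _ _).trans (min_le_right _ _)).trans_lt (by norm_num)
  have hCε : C ≤ ε * Real.log (2 / δ) := by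
    have h1 : δ ≤ 2 * Real.exp (-(C / ε)) := min_le_right _ _
    have h2 : C / ε ≤ Real.log (2 / δ) := by
      rw [Real.le_log_iff_exp_le (by positivity), le_div_iff₀ hδ0]
      calc Real.exp (C / ε) * δ ≤ Real.exp (C / ε) * (2 * Real.exp (-(C / ε))) := by gcongr
        _ = 2 := by rw [Real.exp_neg]; field_simp
    rw [div_le_iff₀ hε] at h2; linarith
  obtain ⟨η, hη0, hη⟩ : ∃ η > 0, ∀ s ∈ Icc (0 : ℝ) 2, ∀ t ∈ Icc (0 : ℝ) 2, |s - t| ≤ η →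
      dist (γ s) (γ t) ≤ δ := by
    have := isCompact_Icc.uniformContinuousOn_of_continuous (hγc.continuousOn (s := Icc (0 : ℝ) 2))
    obtain ⟨η, hη0, hη⟩ := Metric.uniformContinuousOn_iff.1 this δ hδ0
    refine ⟨η / 2, by positivity, fun s hs t ht h => (hη s hs t ht ?_).le⟩
    rw [Real.dist_eq]; linarith
  set p : ℕ → ℂ := fun i => γ (min (i * η) 2) with hp
  have hmem : ∀ i : ℕ, min ((i : ℝ) * η) 2 ∈ Icc (0 : ℝ) 2 := fun i =>
    ⟨le_min (by positivity) (by norm_num), min_le_right _ _⟩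
  have hSp : ∀ z ∈ f '' ball 0 1, ∀ i, z ∉ closedBall (p i) δ := by
    intro z hz i hcon
    have := hdsep (p i) ⟨_, hmem i, rfl⟩ z (image_mono ball_subset_closedBall hz)
    rw [mem_closedBall, dist_comm] at hcon
    linarith
  obtain ⟨N, hN⟩ : ∃ N : ℕ, 2 < N * η := by
    obtain ⟨N, hN⟩ := exists_nat_gt (2 / η)
    exact ⟨N, by rwa [div_lt_iff₀ hη0] at hN⟩
  obtain ⟨hsub, G, H, t, hRm, hch⟩ := exists_domains (p := p) (S := f '' ball 0 1) hδ0 hδ1 hρ0 hρ1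
    (by simp [hp, hγ]) (fun i => hγ1 _ (hmem i)) (fun i => by
      refine hη _ (hmem i) _ (hmem (i + 1)) ?_
      refine (abs_min_sub_min_le_max _ _ _ _).trans ?_
      push_cast
      rw [sub_self, abs_zero]
      refine max_le ?_ hη0.le
      rw [show (i : ℝ) * η - (i + 1) * η = -η by ring, abs_neg, abs_of_pos hη0])
    ((convex_ball (0 : ℂ) 1).isPreconnected.image _ (hf.continuousOn.mono (ball_subset_ball hR.le)))
    hρ (by
      rintro _ ⟨z, hz, rfl⟩
      exact mem_ball_zero_iff.1 (hm (ball_subset_ball hR.le hz))) hSp hCε (N + 1)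
  have hUo : IsOpen (connectedComponentIn (discs p δ (N + 1))ᶜ 0) :=
    (discs_isClosed p δ _).isOpen_compl.connectedComponentIn
  have h0U : (0 : ℂ) ∈ connectedComponentIn (discs p δ (N + 1))ᶜ 0 := hsub (hρ (mem_ball_self hρ0))
  -- the final domain is contained in `f (ball 0 r)`
  have hsphere : ∀ z, ‖z‖ = r → f z ∈ discs p δ (N + 1) := by
    intro z hz
    have hz₀0 : z₀ ≠ 0 := norm_pos_iff.1 (by rw [hz₀r]; linarith)
    obtain ⟨t, ht, htz⟩ : ∃ t ∈ Icc (1 : ℝ) 2, γ t = f z := by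
      have hq : ‖z / z₀‖ = 1 := by rw [norm_div, hz, hz₀r, div_self (by linarith)]
      obtain ⟨θ, hθ, hθe⟩ : ∃ θ ∈ Icc (0 : ℝ) (2 * Real.pi), Complex.exp (θ * I) = z / z₀ := by
        have e1 : Complex.exp (Complex.arg (z / z₀) * I) = z / z₀ := by
          have := Complex.norm_mul_exp_arg_mul_I (z / z₀)
          rwa [hq, Complex.ofReal_one, one_mul] at this
        have e2 := Complex.neg_pi_lt_arg (z / z₀)
        have e3 := Complex.arg_le_pi (z / z₀)
        by_cases hpos : 0 ≤ Complex.arg (z / z₀)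
        · exact ⟨_, ⟨hpos, by linarith [Real.pi_pos]⟩, e1⟩
        · refine ⟨Complex.arg (z / z₀) + 2 * Real.pi, ⟨by linarith, by linarith⟩, ?_⟩
          push_cast
          rw [add_mul, Complex.exp_add, e1, Complex.exp_two_pi_mul_I, mul_one]
      have hγlp : ∀ t : ℝ, 1 ≤ t → γ t = lp t := by
        intro t ht
        simp only [hγ]
        split_ifs with h
        · have : t = 1 := le_antisymm h ht
          simp only [this, hlp, Complex.ofReal_one, sub_self, mul_zero, zero_mul, Complex.exp_zero, mul_one]
          rw [hfz₀]; push_cast; ring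
        · rfl
      have hpi : (0 : ℝ) < 2 * Real.pi := by positivity
      refine ⟨1 + θ / (2 * Real.pi), ⟨by linarith [div_nonneg hθ.1 hpi.le], ?_⟩, ?_⟩
      · have : θ / (2 * Real.pi) ≤ 1 := by rw [div_le_one hpi]; exact hθ.2
        linarith
      · rw [hγlp _ (by linarith [div_nonneg hθ.1 hpi.le])]
        simp only [hlp]
        congr 1
        have : (2 * Real.pi * (((1 + θ / (2 * Real.pi) : ℝ) : ℂ) - 1) * I : ℂ) = θ * I := by
          push_cast
          have : (Real.pi : ℂ) ≠ 0 := by exact_mod_cast Real.pi_ne_zero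
          field_simp
          ring
        rw [this, hθe]
        field_simp
    have ht0 : 0 ≤ t := by linarith [ht.1]
    set i := ⌊t / η⌋₊ with hidef
    have hi1 : (i : ℝ) * η ≤ t := by
      have := Nat.floor_le (div_nonneg ht0 hη0.le)
      rwa [le_div_iff₀ hη0] at this
    have hi2 : t < (i + 1) * η := by
      have := Nat.lt_floor_add_one (t / η)
      rwa [div_lt_iff₀ hη0] at this
    have hiN : i < N + 1 := by
      have : (i : ℝ) < N := by
        by_contra hcon
        rw [not_lt] at hcon
        have : (N : ℝ) * η ≤ i * η := by gcongr
        linarith [ht.2]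
      have : i < N := by exact_mod_cast this
      omega
    refine mem_discs p δ hiN ?_
    rw [mem_closedBall, ← htz]
    refine hη t ⟨ht0, ht.2⟩ _ (hmem i) ?_
    rw [min_eq_left (hi1.trans ht.2), abs_of_nonneg (by linarith)]
    linarith
  have hUsub : connectedComponentIn (discs p δ (N + 1))ᶜ 0 ⊆ f '' ball 0 r := by
    refine IsPreconnected.subset_left_of_subset_union hop hKr.isClosed.isOpen_compl ?_ ?_ ?_
      isPreconnected_connectedComponentIn
    · rw [Set.disjoint_left]
      intro x hx hx'
      exact hx' (image_mono ball_subset_closedBall hx)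
    · intro x hx
      by_cases hxK : x ∈ f '' closedBall 0 r
      · left
        obtain ⟨z, hz, rfl⟩ := hxK
        rw [mem_closedBall_zero_iff] at hz
        rcases hz.lt_or_eq with h | h
        · exact ⟨z, mem_ball_zero_iff.2 h, rfl⟩
        · exact absurd (hsphere z h) (connectedComponentIn_subset _ _ hx)
      · right; exact hxK
    · exact ⟨0, h0U, 0, mem_ball_self (by linarith), h0⟩
  obtain ⟨hSM, heq⟩ := hRm.selfMap hUo h0U (hf.mono (ball_subset_ball hR.le))
    (hi.mono (ball_subset_ball hR.le)) (fun z hz => hsub ⟨z, hz, rfl⟩) h0 hd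
  have hle : T - t ≤ ε := by
    obtain ⟨-, hvd, hvi, -⟩ := differentiableOn_invFunOn isOpen_ball (hf.mono hbR) (hi.mono hbR)
    set v := Function.invFunOn f (ball 0 r) with hv
    have hmaps : MapsTo (fun z => v (G z)) (ball 0 1) (ball 0 r) := by
      intro z hz
      obtain ⟨y, hy, hyz⟩ := hUsub (hRm.mapsG hz)
      simp only [← hyz, hvi y hy]
      exact hy
    have hv0 : v 0 = 0 := by
      have := hvi 0 (mem_ball_self (by linarith)); rwa [h0] at this
    have hvG0 : v (G 0) = 0 := by rw [hRm.G0, hv0]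
    have hvG : DifferentiableOn ℂ (fun z => v (G z)) (ball 0 1) :=
      hvd.comp hRm.diffG fun z hz => hUsub (hRm.mapsG hz)
    have hb := Complex.norm_deriv_le_div_of_mapsTo_ball (R₂ := r) hvG (by
      simp only [hvG0]; exact fun z hz => ball_subset_closedBall (hmaps hz)) one_pos
    have hprod : Complex.exp (-T) * deriv (fun z => v (G z)) 0 = Complex.exp (-t) := by
      have e1 : HasDerivAt (fun z => v (G z)) (deriv (fun z => v (G z)) 0) 0 :=
        (hvG.differentiableAt (ball_mem_nhds _ one_pos)).hasDerivAt
      have e2 : HasDerivAt f (Complex.exp (-T)) (v (G 0)) := by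
        rw [hvG0, ← hd]
        exact (hf.differentiableAt (ball_mem_nhds _ (by linarith))).hasDerivAt
      have e3 := e2.comp 0 e1
      have e4 : HasDerivAt G (Complex.exp (-t)) 0 := by
        rw [← hRm.der]
        exact (hRm.diffG.differentiableAt (ball_mem_nhds _ one_pos)).hasDerivAt
      refine e3.unique (e4.congr_of_eventuallyEq ?_)
      filter_upwards [ball_mem_nhds (0 : ℂ) one_pos] with z hz
      obtain ⟨y, hy, hyz⟩ := hUsub (hRm.mapsG hz)
      simp only [Function.comp, ← hyz, hvi y hy]
    have hn := congrArg norm hprod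
    rw [norm_mul, Complex.norm_exp, Complex.norm_exp] at hn
    simp only [Complex.neg_re, Complex.ofReal_re] at hn
    have h5 : Real.exp (-t) ≤ Real.exp (-T) * r := by
      rw [← hn]; gcongr; simpa using hb
    have h6 : -t ≤ -T + Real.log r := by
      have := Real.log_le_log (Real.exp_pos _) h5
      rwa [Real.log_exp, Real.log_mul (Real.exp_ne_zero _) (by linarith), Real.log_exp] at this
    linarith
  have := Chain.step hch hSM hle heq
  rwa [add_sub_cancel] at this

/-! ### Taylor coefficients at the origin -/

/-- The `n`-th Taylor coefficient of `F` at `0`. -/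
noncomputable def cf (n : ℕ) (F : ℂ → ℂ) : ℂ := iteratedDeriv n F 0 / (n.factorial : ℂ)

lemma cf_zero (F : ℂ → ℂ) : cf 0 F = F 0 := by simp [cf]

/-- Cauchy's formula for the coefficients, on any circle of radius `r < 1`. -/
lemma circleAverage_eq_cf {F : ℂ → ℂ} (hF : DifferentiableOn ℂ F (ball 0 1)) {r : ℝ} (hr : 0 < r)
    (hr1 : r < 1) (n : ℕ) : circleAverage (fun z => F z * (z⁻¹) ^ n) 0 r = cf n F := by
  lift r to NNReal using hr.le
  have hd : DifferentiableOn ℂ F (closedBall 0 r) :=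
    hF.mono (closedBall_subset_ball hr1)
  have h1 := (hd.hasFPowerSeriesOnBall (by exact_mod_cast hr)).hasFPowerSeriesAt
  have h2 : HasFPowerSeriesAt F
      (FormalMultilinearSeries.ofScalars ℂ (fun n ↦ iteratedDeriv n F 0 / n.factorial)) 0 :=
    (hF.analyticAt (ball_mem_nhds _ one_pos)).hasFPowerSeriesAt
  have h3 := h1.eq_formalMultilinearSeries h2
  have h4 := congrArg (fun p => p n (fun _ => (1 : ℂ))) h3
  simp only [cauchyPowerSeries_apply] at h4
  rw [circleAverage_eq_circleIntegral hr.ne', cf]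
  simp only [FormalMultilinearSeries.ofScalars_apply_eq, one_pow] at h4
  rw [show (iteratedDeriv n F 0 / (n.factorial : ℂ)) • (1 : ℂ) = iteratedDeriv n F 0 / n.factorial by
    rw [smul_eq_mul, mul_one]] at h4
  rw [← h4]
  congr 1
  apply circleIntegral.integral_congr hr.le
  intro z hz
  simp only [sub_zero, smul_eq_mul, one_div]
  ring

lemma continuousOn_sphere_inv {r : ℝ} (hr : 0 < r) (n : ℕ) :
    ContinuousOn (fun z : ℂ => (z⁻¹) ^ n) (sphere 0 r) := by
  apply ContinuousOn.pow
  apply continuousOn_inv₀.mono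
  intro z hz
  exact ne_of_mem_sphere hz hr.ne'

lemma DifferentiableOn.continuousOn_sphere {F : ℂ → ℂ} (hF : DifferentiableOn ℂ F (ball 0 1)) {r : ℝ}
    (hr1 : r < 1) : ContinuousOn F (sphere 0 r) :=
  hF.continuousOn.mono fun z hz => by
    rw [mem_sphere_zero_iff_norm] at hz
    simpa [hz] using hr1

lemma circleIntegrable_coeff {F : ℂ → ℂ} (hF : DifferentiableOn ℂ F (ball 0 1)) {r : ℝ} (hr : 0 < r)
    (hr1 : r < 1) (n : ℕ) : CircleIntegrable (fun z => F z * (z⁻¹) ^ n) 0 r :=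
  ((DifferentiableOn.continuousOn_sphere hF hr1).mul (continuousOn_sphere_inv hr n)).circleIntegrable hr.le

lemma cf_congr {F G : ℂ → ℂ} (h : EqOn F G (ball 0 1)) (n : ℕ) : cf n F = cf n G := by
  have : F =ᶠ[𝓝 0] G := h.eventuallyEq_of_mem (ball_mem_nhds _ one_pos)
  rw [cf, cf, this.iteratedDeriv_eq n]

lemma cf_add {F G : ℂ → ℂ} (hF : DifferentiableOn ℂ F (ball 0 1))
    (hG : DifferentiableOn ℂ G (ball 0 1)) (n : ℕ) :
    cf n (fun z => F z + G z) = cf n F + cf n G := by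
  have h0 : (0 : ℝ) < 1 / 2 := by norm_num
  have h1 : (1 / 2 : ℝ) < 1 := by norm_num
  rw [← circleAverage_eq_cf hF h0 h1, ← circleAverage_eq_cf hG h0 h1,
    ← circleAverage_eq_cf (F := fun z => F z + G z) (hF.add hG) h0 h1, ← circleAverage_fun_add
      (circleIntegrable_coeff hF h0 h1 n) (circleIntegrable_coeff hG h0 h1 n)]
  simp only [add_mul]

lemma cf_const_mul {F : ℂ → ℂ} (hF : DifferentiableOn ℂ F (ball 0 1)) (c : ℂ) (n : ℕ) :
    cf n (fun z => c * F z) = c * cf n F := by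
  have h0 : (0 : ℝ) < 1 / 2 := by norm_num
  have h1 : (1 / 2 : ℝ) < 1 := by norm_num
  rw [← circleAverage_eq_cf hF h0 h1, ← circleAverage_eq_cf (hF.const_mul c) h0 h1,
    ← smul_eq_mul, ← circleAverage_fun_smul]
  simp only [smul_eq_mul, mul_assoc]

lemma cf_sum {ι : Type*} (S : Finset ι) {F : ι → ℂ → ℂ}
    (hF : ∀ i ∈ S, DifferentiableOn ℂ (F i) (ball 0 1)) (n : ℕ) :
    cf n (fun z => ∑ i ∈ S, F i z) = ∑ i ∈ S, cf n (F i) := by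
  classical
  induction S using Finset.induction_on with
  | empty => simp [cf]
  | insert a s ha ih =>
    simp only [Finset.sum_insert ha]
    rw [cf_add (hF a (Finset.mem_insert_self _ _)) (DifferentiableOn.fun_sum fun i hi =>
      hF i (Finset.mem_insert_of_mem hi)), ih fun i hi => hF i (Finset.mem_insert_of_mem hi)]

lemma norm_circleAverage_le {F : ℂ → ℂ} {r C : ℝ} (hr : 0 < r) (h : ∀ z ∈ sphere (0 : ℂ) r, ‖F z‖ ≤ C) :
    ‖circleAverage F 0 r‖ ≤ C := by
  rw [circleAverage_def, norm_smul]
  have := intervalIntegral.norm_integral_le_of_norm_le_const (a := 0) (b := 2 * π)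
    (f := fun θ => F (circleMap 0 r θ)) (C := C) fun θ _ => h _ (circleMap_mem_sphere _ hr.le θ)
  have hp := Real.pi_pos
  rw [sub_zero, abs_of_pos (by positivity)] at this
  rw [Real.norm_eq_abs, abs_of_pos (by positivity), inv_mul_le_iff₀ (by positivity)]
  linarith

lemma norm_cf_le {F : ℂ → ℂ} (hF : DifferentiableOn ℂ F (ball 0 1)) {C : ℝ}
    (h : ∀ z ∈ sphere (0 : ℂ) (1 / 2), ‖F z‖ ≤ C) (n : ℕ) : ‖cf n F‖ ≤ 2 ^ n * C := by
  rw [← circleAverage_eq_cf hF (r := 1 / 2) (by norm_num) (by norm_num)]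
  refine norm_circleAverage_le (by norm_num) fun z hz => ?_
  rw [norm_mul, norm_pow, norm_inv, mem_sphere_zero_iff_norm.1 hz, mul_comm]
  norm_num
  exact h z hz

lemma cf_pow_mul {F : ℂ → ℂ} (hF : DifferentiableOn ℂ F (ball 0 1)) (n j : ℕ) :
    cf n (fun z => z ^ j * F z) = if j ≤ n then cf (n - j) F else 0 := by
  have h0 : (0 : ℝ) < 1 / 2 := by norm_num
  have h1 : (1 / 2 : ℝ) < 1 := by norm_num
  have hd : DifferentiableOn ℂ (fun z : ℂ => z ^ j * F z) (ball 0 1) :=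
    (differentiable_id.pow j).differentiableOn.mul hF
  rw [← circleAverage_eq_cf hd h0 h1]
  split_ifs with h
  · rw [← circleAverage_eq_cf hF h0 h1]
    apply circleAverage_congr_sphere
    intro z hz
    have hz0 : z ≠ 0 := ne_of_mem_sphere hz (by norm_num)
    obtain ⟨m, rfl⟩ := Nat.exists_eq_add_of_le h
    simp only [Nat.add_sub_cancel_left]
    rw [pow_add, inv_pow, inv_pow]
    field_simp
  · push Not at h
    obtain ⟨m, rfl⟩ := Nat.exists_eq_add_of_lt h
    have hd' : DifferentiableOn ℂ (fun z : ℂ => z ^ (m + 1) * F z) (ball 0 1) :=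
      (differentiable_id.pow (m + 1)).differentiableOn.mul hF
    have : circleAverage (fun z : ℂ => z ^ (n + m + 1) * F z * z⁻¹ ^ n) 0 (1 / 2)
        = circleAverage (fun z : ℂ => z ^ (m + 1) * F z * z⁻¹ ^ 0) 0 (1 / 2) := by
      apply circleAverage_congr_sphere
      intro z hz
      have hz0 : z ≠ 0 := ne_of_mem_sphere hz (by norm_num)
      simp only [pow_zero, mul_one]
      rw [add_assoc, pow_add, inv_pow]
      field_simp
    rw [this, circleAverage_eq_cf hd' h0 h1, cf_zero]
    simp

lemma cf_const (n : ℕ) (c : ℂ) : cf n (fun _ => c) = if n = 0 then c else 0 := by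
  simp [cf, iteratedDeriv_const]
  split_ifs with h
  · simp [h]
  · simp

lemma exists_taylor {F : ℂ → ℂ} (hF : DifferentiableOn ℂ F (ball 0 1)) (n : ℕ) :
    ∃ R : ℂ → ℂ, DifferentiableOn ℂ R (ball 0 1) ∧
      ∀ z, F z = ∑ j ∈ Finset.range n, cf j F * z ^ j + z ^ n * R z := by
  induction n with
  | zero => exact ⟨F, hF, fun z => by simp⟩
  | succ n ih =>
    obtain ⟨R, hR, hFR⟩ := ih
    have hR0 : cf n F = R 0 := by
      have e : cf n F = cf n (fun z => ∑ j ∈ Finset.range n, cf j F * z ^ j + z ^ n * R z) :=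
        congrArg (cf n) (funext hFR)
      rw [cf_add (F := fun z => ∑ j ∈ Finset.range n, cf j F * z ^ j) (G := fun z => z ^ n * R z)
        (by fun_prop) ((differentiable_id.pow n).differentiableOn.mul hR), cf_pow_mul hR,
        cf_sum _ (fun i _ => by fun_prop)] at e
      rw [e, if_pos le_rfl, Nat.sub_self, cf_zero, Finset.sum_eq_zero, zero_add]
      intro i hi
      rw [cf_const_mul (F := fun z => z ^ i) (by fun_prop)]
      have := cf_pow_mul (F := fun _ => 1) (by fun_prop) n i
      simp only [mul_one] at this
      rw [this, cf_const]
      have : i < n := Finset.mem_range.1 hi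
      rw [if_pos this.le, if_neg (by omega), mul_zero]
    refine ⟨dslope R 0, (Complex.differentiableOn_dslope (ball_mem_nhds _ one_pos)).2 hR, fun z => ?_⟩
    have := sub_smul_dslope R 0 z
    rw [sub_zero, smul_eq_mul] at this
    rw [Finset.sum_range_succ, hFR z, hR0, pow_succ, mul_assoc, this]
    ring

/-! ### Functions with non-negative real part -/

/-- The coefficients of the extreme functions `(1 + ζ z) / (1 - ζ z)`. -/
noncomputable def cker (m : ℕ) (ζ : ℂ) : ℂ := if m = 0 then 1 else 2 * ζ ^ m

lemma circleAverage_re {k : ℂ → ℂ} (hk : DifferentiableOn ℂ k (ball 0 1)) (hk0 : (k 0).im = 0)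
    {r : ℝ} (hr : 0 < r) (hr1 : r < 1) (m : ℕ) :
    circleAverage (fun z => ((k z).re : ℂ) * cker m (r * z⁻¹)) 0 r = r ^ m * cf m k := by
  have e : ∀ z ∈ sphere (0 : ℂ) |r|, ((k z).re : ℂ) * cker m (r * z⁻¹) =
      (if m = 0 then 1 / 2 else (r : ℂ) ^ m) * (k z * z⁻¹ ^ m) +
      (if m = 0 then 1 / 2 else ((r : ℂ) ^ m)⁻¹) * (starRingEnd ℂ) (z ^ m * k z * z⁻¹ ^ 0) := by
    intro z hz
    rw [abs_of_pos hr] at hz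
    have hz0 : z ≠ 0 := ne_of_mem_sphere hz hr.ne'
    have hzz : z * (starRingEnd ℂ) z = (r : ℂ) ^ 2 := by
      rw [Complex.mul_conj, Complex.normSq_eq_norm_sq, mem_sphere_zero_iff_norm.1 hz]; push_cast; rfl
    have hc : (starRingEnd ℂ) z = r ^ 2 * z⁻¹ := by rw [← hzz]; field_simp
    have hr0 : (r : ℂ) ≠ 0 := by exact_mod_cast hr.ne'
    rw [Complex.re_eq_add_conj, cker]
    split_ifs with h
    · subst h; simp; ring
    · simp only [pow_zero, mul_one, map_mul, map_pow, hc]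
      rw [mul_pow, mul_pow, ← pow_mul, mul_comm 2 m, pow_mul]
      field_simp
  have hd : DifferentiableOn ℂ (fun z : ℂ => z ^ m * k z) (ball 0 1) :=
    (differentiable_id.pow m).differentiableOn.mul hk
  have i1 := circleIntegrable_coeff hk hr hr1 m
  have i2 := circleIntegrable_coeff hd hr hr1 0
  have c2 : circleAverage (fun z => (starRingEnd ℂ) (z ^ m * k z * z⁻¹ ^ 0)) 0 r =
      (starRingEnd ℂ) (cf 0 (fun z => z ^ m * k z)) := by
    rw [← circleAverage_eq_cf hd hr hr1]
    exact ContinuousLinearMap.circleAverage_comp_comm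
      (Complex.conjCLE : ℂ →L[ℝ] ℂ) i2
  have i2' : CircleIntegrable (fun z => (starRingEnd ℂ) (z ^ m * k z * z⁻¹ ^ 0)) 0 r := by
    apply ContinuousOn.circleIntegrable hr.le
    exact Complex.continuous_conj.comp_continuousOn
      ((DifferentiableOn.continuousOn_sphere hd hr1).mul (continuousOn_sphere_inv hr 0))
  have i1s : ∀ c : ℂ, CircleIntegrable (fun z => c • (k z * z⁻¹ ^ m)) 0 r := fun c => i1.const_smul
  have i2s : ∀ c : ℂ, CircleIntegrable (fun z => c • (starRingEnd ℂ) (z ^ m * k z * z⁻¹ ^ 0)) 0 r :=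
    fun c => i2'.const_smul
  rw [circleAverage_congr_sphere e]
  simp only [← smul_eq_mul (_ : ℂ) (k _ * _), ← smul_eq_mul (_ : ℂ) ((starRingEnd ℂ) _)]
  rw [circleAverage_fun_add (i1s _) (i2s _), circleAverage_fun_smul,
    circleAverage_fun_smul, circleAverage_eq_cf hk hr hr1, c2, cf_zero]
  by_cases h : m = 0
  · subst h
    have : (starRingEnd ℂ) (k 0) = k 0 := Complex.conj_eq_iff_im.2 hk0
    simp [cf_zero, this]; ring
  · simp [h]

/-- A real-linear functional of the coefficients that is non-positive on the extreme functions
is non-positive on every function with non-negative real part. -/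
lemma pos_functional {k : ℂ → ℂ} (hk : DifferentiableOn ℂ k (ball 0 1)) (hk0 : (k 0).im = 0)
    (hre : ∀ z ∈ ball (0 : ℂ) 1, 0 ≤ (k z).re) {ι : Type*} (S : Finset ι) (c : ι → ℂ) (m : ι → ℕ)
    (H : ∀ ζ : ℂ, ‖ζ‖ = 1 → (∑ i ∈ S, c i * cker (m i) ζ).re ≤ 0) :
    (∑ i ∈ S, c i * cf (m i) k).re ≤ 0 := by
  have key : ∀ r : ℝ, 0 < r → r < 1 → (∑ i ∈ S, c i * (r ^ m i * cf (m i) k)).re ≤ 0 := by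
    intro r hr hr1
    have hInt : ∀ n, ContinuousOn (fun z => ((k z).re : ℂ) * cker n (r * z⁻¹)) (sphere 0 r) := by
      intro n
      refine ((Complex.continuous_ofReal.comp Complex.continuous_re).comp_continuousOn
        (DifferentiableOn.continuousOn_sphere hk hr1)).mul ?_
      simp only [cker]
      split_ifs
      · exact continuousOn_const
      · simp only [mul_pow]
        exact continuousOn_const.mul (continuousOn_const.mul (continuousOn_sphere_inv hr n))
    have hs : ∀ i, CircleIntegrable (fun z => c i • (((k z).re : ℂ) * cker (m i) (r * z⁻¹))) 0 r :=
      fun i => ((hInt (m i)).circleIntegrable hr.le).const_smul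
    have e1 : ∑ i ∈ S, c i * (r ^ m i * cf (m i) k) =
        circleAverage (fun z => ∑ i ∈ S, c i • (((k z).re : ℂ) * cker (m i) (r * z⁻¹))) 0 r := by
      rw [circleAverage_fun_sum (fun i _ => hs i)]
      refine Finset.sum_congr rfl fun i _ => ?_
      rw [circleAverage_fun_smul, circleAverage_re hk hk0 hr hr1, smul_eq_mul]
    have e2 : (∑ i ∈ S, c i * (r ^ m i * cf (m i) k)).re =
        circleAverage (fun z => (∑ i ∈ S, c i • (((k z).re : ℂ) * cker (m i) (r * z⁻¹))).re) 0 r := by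
      rw [e1]
      exact (ContinuousLinearMap.circleAverage_comp_comm Complex.reCLM
        (f := fun z => ∑ i ∈ S, c i • (((k z).re : ℂ) * cker (m i) (r * z⁻¹)))
        (CircleIntegrable.fun_sum _ fun i _ => hs i)).symm
    rw [e2]
    refine circleAverage_mono_on_of_le_circle ?_ fun z hz => ?_
    · apply ContinuousOn.circleIntegrable hr.le
      apply Complex.continuous_re.comp_continuousOn
      exact continuousOn_finsetSum _ fun i _ => (hInt (m i)).fun_const_smul (c i)
    · rw [abs_of_pos hr] at hz
      have hzn := mem_sphere_zero_iff_norm.1 hz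
      have h1 : ‖(r : ℂ) * z⁻¹‖ = 1 := by
        rw [norm_mul, norm_inv, hzn, Complex.norm_real, Real.norm_eq_abs, abs_of_pos hr]
        field_simp
      have h2 := H _ h1
      have h3 := hre z (by rw [mem_ball_zero_iff, hzn]; exact hr1)
      have : ∑ i ∈ S, c i • (((k z).re : ℂ) * cker (m i) (r * z⁻¹)) =
          ((k z).re : ℂ) * ∑ i ∈ S, c i * cker (m i) (r * z⁻¹) := by
        rw [Finset.mul_sum]
        refine Finset.sum_congr rfl fun i _ => ?_
        rw [smul_eq_mul]; ring
      simp only [this, Complex.re_ofReal_mul]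
      exact mul_nonpos_of_nonneg_of_nonpos h3 h2
  have hlim : Tendsto (fun r : ℝ => (∑ i ∈ S, c i * ((r : ℂ) ^ m i * cf (m i) k)).re) (𝓝[<] 1)
      (𝓝 (∑ i ∈ S, c i * (((1 : ℝ) : ℂ) ^ m i * cf (m i) k)).re) := by
    apply Tendsto.mono_left _ nhdsWithin_le_nhds
    apply Continuous.tendsto (f := fun r : ℝ => (∑ i ∈ S, c i * ((r : ℂ) ^ m i * cf (m i) k)).re)
    fun_prop
  have := le_of_tendsto hlim (b := 0) (by
    filter_upwards [Ioo_mem_nhdsLT (show (0 : ℝ) < 1 by norm_num)] with r hr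
    exact key r hr.1 hr.2)
  simpa using this

lemma norm_cf_le_of_re_nonneg {k : ℂ → ℂ} (hk : DifferentiableOn ℂ k (ball 0 1)) {h : ℝ} (hk0 : k 0 = h)
    (hre : ∀ z ∈ ball (0 : ℂ) 1, 0 ≤ (k z).re) (m : ℕ) : ‖cf m k‖ ≤ 2 * h := by
  have hh : 0 ≤ h := by simpa [hk0] using hre 0 (by simp)
  obtain ⟨c, hc1, hc2⟩ : ∃ c : ℂ, ‖c‖ = 1 ∧ (c * cf m k).re = ‖cf m k‖ := by
    by_cases h0 : cf m k = 0
    · exact ⟨1, by simp, by simp [h0]⟩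
    · refine ⟨(starRingEnd ℂ) (cf m k) / ‖cf m k‖, ?_, ?_⟩
      · rw [norm_div, RCLike.norm_conj, Complex.norm_real, norm_norm, div_self (norm_ne_zero_iff.2 h0)]
      · rw [div_mul_eq_mul_div, mul_comm, Complex.mul_conj, Complex.normSq_eq_norm_sq]
        have : (‖cf m k‖ : ℂ) ≠ 0 := by exact_mod_cast norm_ne_zero_iff.2 h0
        rw [show ((‖cf m k‖ ^ 2 : ℝ) : ℂ) / ‖cf m k‖ = (‖cf m k‖ : ℂ) by push_cast; field_simp]
        simp
  have := pos_functional hk (by simp [hk0]) hre (Finset.univ : Finset Bool)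
    (fun b => if b then c else -2) (fun b => if b then m else 0) (by
      intro ζ hζ
      simp only [Fintype.univ_bool, Finset.mem_singleton, Bool.true_eq_false, not_false_eq_true,
        Finset.sum_insert, Finset.sum_singleton, if_true, Bool.false_eq_true, if_false, cker]
      have : ‖c * (if m = 0 then 1 else 2 * ζ ^ m)‖ ≤ 2 := by
        split_ifs <;> simp [hc1, hζ]
      have h2 := (Complex.re_le_norm _).trans this
      simp only [Complex.add_re, mul_one, Complex.neg_re, Complex.re_ofNat]
      linarith)
  simp only [Fintype.univ_bool, Finset.mem_singleton, Bool.true_eq_false, not_false_eq_true,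
    Finset.sum_insert, Finset.sum_singleton, if_true, Bool.false_eq_true, if_false, cf_zero, hk0,
    Complex.add_re, hc2] at this
  have e : ((-2 : ℂ) * h).re = -2 * h := by simp
  rw [e] at this
  linarith

/-! ### First-order expansion of one step -/

lemma norm_le_three_mul {k : ℂ → ℂ} (hk : DifferentiableOn ℂ k (ball 0 1)) {h : ℝ} (hk0 : k 0 = h)
    (hre : ∀ z ∈ ball (0 : ℂ) 1, 0 ≤ (k z).re) {z : ℂ} (hz : z ∈ sphere (0 : ℂ) (1 / 2)) :
    ‖k z‖ ≤ 3 * h := by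
  have hh : 0 ≤ h := by simpa [hk0] using hre 0 (by simp)
  have hzn := mem_sphere_zero_iff_norm.1 hz
  refine le_of_forall_pos_le_add fun M hM => ?_
  have := Complex.borelCaratheodory (f := fun z => -k z) (M := M / 2) (R := 1) (z := z)
    (by positivity) hk.neg
    (fun x hx => by
      have := hre x hx
      simp only [mem_ofPred_eq, Complex.neg_re]; linarith) one_pos
    (by rw [mem_ball_zero_iff, hzn]; norm_num)
  simp only [norm_neg, hzn, hk0, Complex.norm_real, Real.norm_eq_abs, abs_of_nonneg hh] at this
  norm_num at this
  linarith

lemma norm_cf_exp_le {k : ℂ → ℂ} (hk : DifferentiableOn ℂ k (ball 0 1)) {h : ℝ} (hk0 : k 0 = h)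
    (hre : ∀ z ∈ ball (0 : ℂ) 1, 0 ≤ (k z).re) (j m : ℕ) (hj : 3 * j * h ≤ 1) :
    ‖cf m (fun z => Complex.exp (-(j * k z))) - (if m = 0 then 1 else 0) + j * cf m k‖
      ≤ 2 ^ m * (9 * j ^ 2 * h ^ 2) := by
  have hE : DifferentiableOn ℂ (fun z => Complex.exp (-(j * k z))) (ball 0 1) :=
    (hk.const_mul (j : ℂ)).neg.cexp
  have hF : DifferentiableOn ℂ (fun z => (-1 : ℂ) + j * k z) (ball 0 1) :=
    (hk.const_mul (j : ℂ)).const_add _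
  have e : cf m (fun z => Complex.exp (-(j * k z))) - (if m = 0 then 1 else 0) + j * cf m k =
      cf m (fun z => Complex.exp (-(j * k z)) + (-1 + j * k z)) := by
    rw [cf_add hE hF, cf_add (F := fun _ => -1) (by fun_prop) (hk.const_mul (j : ℂ)),
      cf_const_mul hk, cf_const]
    split_ifs <;> ring
  rw [e]
  refine norm_cf_le (hE.add hF) (fun z hz => ?_) m
  have h1 : ‖-(j * k z)‖ ≤ 3 * j * h := by
    rw [norm_neg, norm_mul, Complex.norm_natCast]
    have := mul_le_mul_of_nonneg_left (norm_le_three_mul hk hk0 hre hz) (Nat.cast_nonneg (α := ℝ) j)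
    linarith
  have h2 := Complex.norm_exp_sub_one_sub_id_le (h1.trans hj)
  have h3 : Complex.exp (-(j * k z)) - 1 - -(j * k z) = Complex.exp (-(j * k z)) + (-1 + j * k z) := by
    ring
  rw [h3] at h2
  refine h2.trans ?_
  calc ‖-(j * k z)‖ ^ 2 ≤ (3 * j * h) ^ 2 := by gcongr
    _ = 9 * j ^ 2 * h ^ 2 := by ring

/-- The normalised coefficients `d₀ = 1`, `dⱼ = -j κⱼ` of `z F'(z) / F(z)` for `F(z) = z e^{-κ(z)}`. -/
noncomputable def dd (κ : ℂ → ℂ) (j : ℕ) : ℂ := if j = 0 then 1 else -(j * cf j κ)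

lemma differentiableOn_comp_step {κ k : ℂ → ℂ} (hκ : DifferentiableOn ℂ κ (ball 0 1))
    (hk : DifferentiableOn ℂ k (ball 0 1)) (hre : ∀ z ∈ ball (0 : ℂ) 1, 0 ≤ (k z).re) :
    DifferentiableOn ℂ (fun z => κ (z * Complex.exp (-k z))) (ball 0 1) := by
  refine hκ.comp (differentiableOn_id.mul hk.neg.cexp) fun z hz => ?_
  rw [mem_ball_zero_iff] at hz ⊢
  have : ‖Complex.exp (-k z)‖ ≤ 1 := by
    rw [Complex.norm_exp, Real.exp_le_one_iff, Complex.neg_re]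
    linarith [hre z (mem_ball_zero_iff.2 hz)]
  simp only [norm_mul]
  calc ‖z‖ * ‖Complex.exp (-k z)‖ ≤ ‖z‖ * 1 := by gcongr
    _ < 1 := by simpa using hz

lemma norm_cf_step_le {κ k : ℂ → ℂ} (hκ : DifferentiableOn ℂ κ (ball 0 1))
    (hk : DifferentiableOn ℂ k (ball 0 1)) {h : ℝ} (hk0 : k 0 = h)
    (hre : ∀ z ∈ ball (0 : ℂ) 1, 0 ≤ (k z).re) {n : ℕ} (hnh : 3 * n * h ≤ 1) {B : ℝ}
    (hB : ∀ j, ‖cf j κ‖ ≤ B) :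
    ‖cf n (fun z => k z + κ (z * Complex.exp (-k z))) - cf n κ
      - ∑ j ∈ Finset.range (n + 1), dd κ j * cf (n - j) k‖ ≤ (n + 1) * (B * (2 ^ n * (9 * n ^ 2 * h ^ 2))) := by
  have hh : 0 ≤ h := by simpa [hk0] using hre 0 (by simp)
  have hB0 : 0 ≤ B := (norm_nonneg _).trans (hB 0)
  obtain ⟨R, hR, hκR⟩ := exists_taylor hκ (n + 1)
  have hE : ∀ j : ℕ, DifferentiableOn ℂ (fun z => Complex.exp (-(j * k z))) (ball 0 1) := fun j =>
    (hk.const_mul (j : ℂ)).neg.cexp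
  have hzE : ∀ j : ℕ, DifferentiableOn ℂ (fun z => z ^ j * Complex.exp (-(j * k z))) (ball 0 1) :=
    fun j => (differentiable_id.pow j).differentiableOn.mul (hE j)
  have hRE : DifferentiableOn ℂ (fun z => Complex.exp (-((n + 1 : ℕ) * k z)) * R (z * Complex.exp (-k z)))
      (ball 0 1) := (hE (n + 1)).mul (differentiableOn_comp_step hR hk hre)
  have hcomp : (fun z => κ (z * Complex.exp (-k z))) = fun z =>
      (∑ j ∈ Finset.range (n + 1), cf j κ * (z ^ j * Complex.exp (-(j * k z)))) +
        z ^ (n + 1) * (Complex.exp (-((n + 1 : ℕ) * k z)) * R (z * Complex.exp (-k z))) := by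
    funext z
    rw [hκR]
    have hp : ∀ j : ℕ, (z * Complex.exp (-k z)) ^ j = z ^ j * Complex.exp (-(j * k z)) := by
      intro j
      rw [mul_pow, ← Complex.exp_nat_mul]
      ring_nf
    rw [hp (n + 1), mul_assoc]
    congr 1
    exact Finset.sum_congr rfl fun j _ => by rw [hp j]
  have hc : cf n (fun z => κ (z * Complex.exp (-k z))) =
      ∑ j ∈ Finset.range (n + 1), cf j κ * cf (n - j) (fun z => Complex.exp (-(j * k z))) := by
    rw [hcomp, cf_add (F := fun z => ∑ j ∈ Finset.range (n + 1), cf j κ * (z ^ j * Complex.exp (-(j * k z))))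
      (G := fun z => z ^ (n + 1) * (Complex.exp (-((n + 1 : ℕ) * k z)) * R (z * Complex.exp (-k z))))
      (DifferentiableOn.fun_sum fun j _ => (hzE j).const_mul _)
      ((differentiable_id.pow (n + 1)).differentiableOn.mul hRE), cf_pow_mul hRE,
      if_neg (by omega), add_zero, cf_sum _ (fun j _ => (hzE j).const_mul _)]
    refine Finset.sum_congr rfl fun j hj => ?_
    rw [cf_const_mul (hzE j), cf_pow_mul (hE j), if_pos (by have := Finset.mem_range.1 hj; omega)]
  have key : cf n (fun z => k z + κ (z * Complex.exp (-k z))) - cf n κ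
      - ∑ j ∈ Finset.range (n + 1), dd κ j * cf (n - j) k =
      ∑ j ∈ Finset.range (n + 1), cf j κ *
        (cf (n - j) (fun z => Complex.exp (-(j * k z))) - (if n - j = 0 then 1 else 0)
          + j * cf (n - j) k) := by
    rw [cf_add hk (differentiableOn_comp_step hκ hk hre), hc]
    have e1 : ∑ j ∈ Finset.range (n + 1), cf j κ * (if n - j = 0 then (1 : ℂ) else 0) = cf n κ := by
      rw [Finset.sum_eq_single n]
      · simp
      · intro j hj hjn
        have := Finset.mem_range.1 hj
        rw [if_neg (by omega), mul_zero]
      · simp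
    have e2 : ∑ j ∈ Finset.range (n + 1), dd κ j * cf (n - j) k =
        cf n k - ∑ j ∈ Finset.range (n + 1), cf j κ * (j * cf (n - j) k) := by
      rw [Finset.sum_range_succ', Finset.sum_range_succ' (fun j => cf j κ * (j * cf (n - j) k))]
      simp only [dd, Nat.succ_ne_zero, if_false, if_true, Nat.cast_zero, zero_mul, mul_zero, add_zero,
        one_mul, Nat.sub_zero]
      rw [add_comm, sub_eq_add_neg, ← Finset.sum_neg_distrib]
      congr 1
      exact Finset.sum_congr rfl fun j _ => by ring
    simp only [mul_add, mul_sub, Finset.sum_add_distrib, Finset.sum_sub_distrib]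
    rw [e1, e2]
    ring
  rw [key]
  refine (norm_sum_le _ _).trans ?_
  have : ∀ j ∈ Finset.range (n + 1), ‖cf j κ * (cf (n - j) (fun z => Complex.exp (-(j * k z)))
      - (if n - j = 0 then 1 else 0) + j * cf (n - j) k)‖ ≤ B * (2 ^ n * (9 * n ^ 2 * h ^ 2)) := by
    intro j hj
    have hjn : j ≤ n := by have := Finset.mem_range.1 hj; omega
    have hjn' : (j : ℝ) ≤ n := by exact_mod_cast hjn
    rw [norm_mul]
    have := norm_cf_exp_le hk hk0 hre j (n - j) (by
      refine le_trans ?_ hnh; gcongr)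
    refine mul_le_mul (hB j) (this.trans ?_) (norm_nonneg _) hB0
    gcongr
    · norm_num
    · omega
  refine (Finset.sum_le_card_nsmul _ _ _ this).trans ?_
  simp

/-! ### The de Branges functional along one step -/

/-- The pointwise inequality behind de Branges' functional: with `eₖ = dₖ ζ⁻ᵏ` and
`Cₖ = ∑_{j ≤ k} eⱼ`, the quadratic form equals `-∑ aₖ |Cₖ + Cₖ₋₁|²`. -/
lemma deBranges_kernel {N : ℕ} {a τ : ℕ → ℝ} (ha : ∀ k, 0 ≤ a (k + 1))
    (hτ : ∀ k, τ (k + 1) - τ (k + 2) = a (k + 1) + a (k + 2)) (haN : a (N + 1) = 0)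
    (hτN : τ (N + 1) = 0) {d : ℕ → ℂ} (hd : d 0 = 1) {ζ : ℂ} (hζ : ‖ζ‖ = 1) :
    ∑ i ∈ Finset.range N, (a (i + 1) * (‖d (i + 1)‖ ^ 2 - 4) - 2 * τ (i + 1) *
      ((starRingEnd ℂ) (d (i + 1)) * ∑ j ∈ Finset.range (i + 2), d j * cker (i + 1 - j) ζ).re) ≤ 0 := by
  have hζ0 : ζ ≠ 0 := by rintro rfl; simp at hζ
  have hcz : (starRingEnd ℂ) ζ = ζ⁻¹ := by
    rw [Complex.inv_def, Complex.normSq_eq_norm_sq, hζ]; simp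
  set C : ℕ → ℂ := fun k => ∑ j ∈ Finset.range (k + 1), d j * (ζ⁻¹) ^ j with hC
  have hCs : ∀ i, C (i + 1) = C i + d (i + 1) * (ζ⁻¹) ^ (i + 1) := fun i => Finset.sum_range_succ _ _
  have hC0 : C 0 = 1 := by simp [hC, hd]
  have hsum : ∀ i, ∑ j ∈ Finset.range (i + 2), d j * cker (i + 1 - j) ζ =
      ζ ^ (i + 1) * (C (i + 1) + C i) := by
    intro i
    have e : ∑ j ∈ Finset.range (i + 1), d j * cker (i + 1 - j) ζ = 2 * ζ ^ (i + 1) * C i := by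
      rw [hC, Finset.mul_sum]
      refine Finset.sum_congr rfl fun j hj => ?_
      have hj' := Finset.mem_range.1 hj
      rw [cker, if_neg (by omega), inv_pow, pow_sub₀ _ hζ0 (by omega)]
      ring
    rw [Finset.sum_range_succ, e, hCs, Nat.sub_self, cker, if_pos rfl, inv_pow]
    field_simp
    ring
  have hre : ∀ i, ((starRingEnd ℂ) (d (i + 1)) * ∑ j ∈ Finset.range (i + 2), d j * cker (i + 1 - j) ζ).re
      = ‖C (i + 1)‖ ^ 2 - ‖C i‖ ^ 2 := by
    intro i
    have e1 : (starRingEnd ℂ) (d (i + 1)) * (ζ ^ (i + 1) * (C (i + 1) + C i)) =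
        (starRingEnd ℂ) (C (i + 1) - C i) * (C (i + 1) + C i) := by
      have : C (i + 1) - C i = d (i + 1) * (ζ⁻¹) ^ (i + 1) := by rw [hCs]; ring
      rw [this, map_mul, map_pow, map_inv₀, hcz, inv_inv]
      ring
    rw [hsum, e1, ← Complex.normSq_eq_norm_sq, ← Complex.normSq_eq_norm_sq]
    simp only [Complex.mul_re, Complex.conj_re, Complex.conj_im, Complex.sub_re, Complex.sub_im,
      Complex.add_re, Complex.add_im, Complex.normSq_apply]
    ring
  have hnd : ∀ i, ‖d (i + 1)‖ ^ 2 = 2 * ‖C (i + 1)‖ ^ 2 + 2 * ‖C i‖ ^ 2 - ‖C (i + 1) + C i‖ ^ 2 := by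
    intro i
    have : ‖d (i + 1)‖ = ‖C (i + 1) - C i‖ := by
      rw [hCs]; simp [hζ]
    rw [this]
    have := parallelogram_law_with_norm ℂ (C (i + 1)) (C i)
    nlinarith [this]
  have key : ∀ n, ∑ i ∈ Finset.range n, (a (i + 1) * (‖d (i + 1)‖ ^ 2 - 4) - 2 * τ (i + 1) *
      ((starRingEnd ℂ) (d (i + 1)) * ∑ j ∈ Finset.range (i + 2), d j * cker (i + 1 - j) ζ).re) =
      -(∑ i ∈ Finset.range n, a (i + 1) * ‖C (i + 1) + C i‖ ^ 2)
        - 2 * (τ (n + 1) + a (n + 1)) * (‖C n‖ ^ 2 - 1) := by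
    intro n
    induction n with
    | zero => simp [hC0]
    | succ n ih =>
      rw [Finset.sum_range_succ, ih, hre, hnd, Finset.sum_range_succ]
      have := hτ n
      have e : τ (n + 1 + 1) + a (n + 1 + 1) = τ (n + 1) - a (n + 1) := by
        have : τ (n + 2) + a (n + 2) = τ (n + 1) - a (n + 1) := by linarith
        exact this
      rw [e]
      ring
  rw [key, haN, hτN]
  have : 0 ≤ ∑ i ∈ Finset.range N, a (i + 1) * ‖C (i + 1) + C i‖ ^ 2 :=
    Finset.sum_nonneg fun i _ => mul_nonneg (ha i) (sq_nonneg _)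
  linarith

/-- The first variation of de Branges' functional under one step is non-positive. -/
lemma deBranges_first_variation {N : ℕ} {a τ : ℕ → ℝ} (ha : ∀ k, 0 ≤ a (k + 1))
    (hτ : ∀ k, τ (k + 1) - τ (k + 2) = a (k + 1) + a (k + 2)) (haN : a (N + 1) = 0)
    (hτN : τ (N + 1) = 0) {d : ℕ → ℂ} (hd : d 0 = 1) {k : ℂ → ℂ}
    (hk : DifferentiableOn ℂ k (ball 0 1)) {h : ℝ} (hk0 : k 0 = h)
    (hre : ∀ z ∈ ball (0 : ℂ) 1, 0 ≤ (k z).re) :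
    ∑ i ∈ Finset.range N, (h * (a (i + 1) * (‖d (i + 1)‖ ^ 2 - 4)) - 2 * τ (i + 1) *
      ((starRingEnd ℂ) (d (i + 1)) * ∑ j ∈ Finset.range (i + 2), d j * cf (i + 1 - j) k).re) ≤ 0 := by
  -- the two index families are: `none` for the constant term, `(i, j)` for the double sum
  have hform : ∀ y : ℕ → ℂ, ∀ x : ℝ, y 0 = x →
      (∑ p ∈ Finset.insertNone ((Finset.range N).sigma fun i => Finset.range (i + 2)),
        (p.elim ((∑ i ∈ Finset.range N, a (i + 1) * (‖d (i + 1)‖ ^ 2 - 4) : ℝ) : ℂ)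
          fun q => -(2 * τ (q.1 + 1) * (starRingEnd ℂ) (d (q.1 + 1)) * d q.2)) *
        y (p.elim 0 fun q => q.1 + 1 - q.2)).re =
      ∑ i ∈ Finset.range N, (x * (a (i + 1) * (‖d (i + 1)‖ ^ 2 - 4)) - 2 * τ (i + 1) *
      ((starRingEnd ℂ) (d (i + 1)) * ∑ j ∈ Finset.range (i + 2), d j * y (i + 1 - j)).re) := by
    intro y x hyx
    rw [Finset.sum_insertNone]
    simp only [Option.elim]
    rw [Finset.sum_sigma, hyx, Complex.add_re, ← Complex.ofReal_mul, Complex.ofReal_re,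
      Complex.re_sum, Finset.sum_mul, ← Finset.sum_add_distrib]
    refine Finset.sum_congr rfl fun i _ => ?_
    have : ∑ j ∈ Finset.range (i + 2), -(2 * (τ (i + 1) : ℂ) * (starRingEnd ℂ) (d (i + 1)) * d j) *
        y (i + 1 - j) = ((-(2 * τ (i + 1)) : ℝ) : ℂ) *
        ((starRingEnd ℂ) (d (i + 1)) * ∑ j ∈ Finset.range (i + 2), d j * y (i + 1 - j)) := by
      rw [Finset.mul_sum, Finset.mul_sum]
      refine Finset.sum_congr rfl fun j _ => ?_
      push_cast; ring
    rw [this, Complex.re_ofReal_mul]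
    ring
  rw [← hform (fun m => cf m k) h (by simp [cf_zero, hk0])]
  refine pos_functional hk (by simp [hk0]) hre _ _ _ fun ζ hζ => ?_
  rw [hform (fun m => cker m ζ) 1 (by simp [cker])]
  simpa using deBranges_kernel ha hτ haN hτN hd hζ

/-- Weight functions for de Branges' method: `τₖ' = -k aₖ` and `τₖ - τₖ₊₁ = aₖ + aₖ₊₁`, with
`aₖ ≥ 0` and everything vanishing beyond `N`. -/
structure Weights (N : ℕ) (a τ : ℕ → ℝ → ℝ) : Prop where
  nonneg : ∀ k s, 0 ≤ s → 0 ≤ a (k + 1) s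
  cont : ∀ k, Continuous (a k)
  deriv : ∀ (k : ℕ) s, HasDerivAt (τ k) (-(k * a k s)) s
  tele : ∀ k s, τ (k + 1) s - τ (k + 2) s = a (k + 1) s + a (k + 2) s
  a_end : ∀ s, a (N + 1) s = 0
  τ_end : ∀ s, τ (N + 1) s = 0
  τ_nonneg : ∀ k s, 0 ≤ s → 0 ≤ τ k s

/-- De Branges' functional `∑ₖ τₖ(s) (k |κₖ|² - 4 / k)`. -/
noncomputable def Phi (N : ℕ) (τ : ℕ → ℝ → ℝ) (s : ℝ) (κ : ℂ → ℂ) : ℝ :=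
  ∑ i ∈ Finset.range N, τ (i + 1) s * ((i + 1 : ℕ) * ‖cf (i + 1) κ‖ ^ 2 - 4 / (i + 1 : ℕ))

lemma exists_taylor_one {a τ : ℝ → ℝ} {k : ℝ} (ha : Continuous a)
    (hτ : ∀ s, HasDerivAt τ (-(k * a s)) s) (T : ℝ) {η : ℝ} (hη : 0 < η) :
    ∃ ε > 0, ∀ s ∈ Icc 0 T, ∀ h, 0 ≤ h → h ≤ ε → h ≤ s →
      |τ (s - h) - τ s - h * (k * a s)| ≤ η * h := by
  have huc := isCompact_Icc.uniformContinuousOn_of_continuous (s := Icc (0 : ℝ) T)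
    (f := fun u => k * a u) (continuous_const.mul ha).continuousOn
  obtain ⟨ε, hε, H⟩ := Metric.uniformContinuousOn_iff.1 huc η hη
  refine ⟨ε / 2, by positivity, fun s hs h hh hhε hhs => ?_⟩
  have hg : ∀ u ∈ Icc (s - h) s, HasDerivWithinAt (fun u => τ u + u * (k * a s))
      (-(k * a u) + k * a s) (Icc (s - h) s) u := by
    intro u _
    exact ((hτ u).add ((hasDerivAt_id u).mul_const (k * a s))).congr_deriv (by ring) |>.hasDerivWithinAt
  have := Convex.norm_image_sub_le_of_norm_hasDerivWithin_le hg (C := η) (fun u hu => by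
    have h1 : u ∈ Icc 0 T := ⟨by linarith [hu.1], by linarith [hu.2, hs.2]⟩
    have h2 := H u h1 s hs (by
      rw [Real.dist_eq, abs_lt]; constructor <;> linarith [hu.1, hu.2])
    rw [Real.dist_eq] at h2
    rw [Real.norm_eq_abs, show -(k * a u) + k * a s = -(k * a u - k * a s) by ring, abs_neg]
    exact h2.le) (convex_Icc _ _) (right_mem_Icc.2 (by linarith)) (left_mem_Icc.2 (by linarith))
  rw [Real.norm_eq_abs, Real.norm_eq_abs, show s - h - s = -h by ring, abs_neg, abs_of_nonneg hh] at this
  convert this using 2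
  ring

set_option maxHeartbeats 1000000 in
lemma exists_step_term {a τ : ℝ → ℝ} {k : ℕ} (hk : 1 ≤ k) (ha : Continuous a)
    (hτ : ∀ s, HasDerivAt τ (-(k * a s)) s) (T : ℝ) {B C₁ C₂ : ℝ} (hB : 0 ≤ B) (hC₁ : 0 ≤ C₁)
    (hC₂ : 0 ≤ C₂) {η : ℝ} (hη : 0 < η) :
    ∃ ε > 0, ∀ s ∈ Icc 0 T, ∀ h, 0 ≤ h → h ≤ ε → h ≤ s → ∀ x x' D : ℂ, ‖x‖ ≤ B →
      ‖D‖ ≤ C₂ * h → ‖x' - x - D‖ ≤ C₁ * h ^ 2 →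
      τ (s - h) * (k * ‖x'‖ ^ 2 - 4 / k) ≤ τ s * (k * ‖x‖ ^ 2 - 4 / k) +
        (h * (a s * (‖(k : ℂ) * x‖ ^ 2 - 4)) + 2 * τ s * (k * ((starRingEnd ℂ) x * D).re)) + η * h := by
  obtain ⟨M₁, hM₁⟩ := isCompact_Icc.exists_bound_of_continuousOn (s := Icc (0 : ℝ) T) ha.continuousOn
  have hτc : Continuous τ := continuous_iff_continuousAt.2 fun s => (hτ s).continuousAt
  obtain ⟨M₂, hM₂⟩ := isCompact_Icc.exists_bound_of_continuousOn (s := Icc (0 : ℝ) T) hτc.continuousOn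
  set M := max (max M₁ M₂) 0 with hM
  have hM0 : 0 ≤ M := le_max_right _ _
  have hk0 : (0 : ℝ) < k := by exact_mod_cast hk
  have hk1 : (1 : ℝ) ≤ k := by exact_mod_cast hk
  set P := k * B ^ 2 + 4 with hP
  have hP0 : 0 < P := by positivity
  set η' := η / (2 * P) with hη'
  have hη'0 : 0 < η' := by positivity
  set C := C₁ + C₂ with hC
  set K := M * k * (2 * B * C₁ + C ^ 2) + (k * M + η') * (k * (2 * B * C + C ^ 2)) with hK
  have hK0 : 0 ≤ K := by positivity
  obtain ⟨ε₁, hε₁, H⟩ := exists_taylor_one ha hτ T hη'0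
  refine ⟨min (min ε₁ 1) (η / (2 * (K + 1))), by positivity, ?_⟩
  intro s hs h hh hhε hhs x x' D hx hD hE
  have hh1 : h ≤ 1 := hhε.trans ((min_le_left _ _).trans (min_le_right _ _))
  have hhε₁ : h ≤ ε₁ := hhε.trans ((min_le_left _ _).trans (min_le_left _ _))
  have hhK : h * (2 * (K + 1)) ≤ η := by
    have := hhε.trans (min_le_right _ _)
    rwa [le_div_iff₀ (by positivity)] at this
  have h1 := H s hs h hh hhε₁ hhs
  have ha1 : |a s| ≤ M := (hM₁ s hs).trans ((le_max_left _ _).trans (le_max_left _ _))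
  have hτ1 : |τ s| ≤ M := (hM₂ s hs).trans ((le_max_right _ _).trans (le_max_left _ _))
  set E := x' - x - D with hEdef
  have hx' : x' = x + (D + E) := by rw [hEdef]; ring
  have hδ : ‖D + E‖ ≤ C * h := by
    calc ‖D + E‖ ≤ ‖D‖ + ‖E‖ := norm_add_le _ _
      _ ≤ C₂ * h + C₁ * h ^ 2 := add_le_add hD hE
      _ ≤ C₂ * h + C₁ * h := by
        have : h ^ 2 ≤ h := pow_le_of_le_one hh hh1 two_ne_zero
        gcongr
      _ = C * h := by rw [hC]; ring
  have hexp : ‖x'‖ ^ 2 = ‖x‖ ^ 2 + 2 * ((starRingEnd ℂ) x * (D + E)).re + ‖D + E‖ ^ 2 := by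
    rw [hx']
    simp only [← Complex.normSq_eq_norm_sq, Complex.normSq_apply, Complex.mul_re, Complex.conj_re,
      Complex.conj_im, Complex.add_re, Complex.add_im]
    ring
  have hreδ : |((starRingEnd ℂ) x * (D + E)).re| ≤ B * (C * h) := by
    refine (Complex.abs_re_le_norm _).trans ?_
    rw [norm_mul, RCLike.norm_conj]
    exact mul_le_mul hx hδ (norm_nonneg _) hB
  have hreE : |((starRingEnd ℂ) x * E).re| ≤ B * (C₁ * h ^ 2) := by
    refine (Complex.abs_re_le_norm _).trans ?_
    rw [norm_mul, RCLike.norm_conj]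
    exact mul_le_mul hx hE (norm_nonneg _) hB
  have hsplit : ((starRingEnd ℂ) x * (D + E)).re = ((starRingEnd ℂ) x * D).re + ((starRingEnd ℂ) x * E).re := by
    rw [mul_add, Complex.add_re]
  have hδ2 : ‖D + E‖ ^ 2 ≤ C ^ 2 * h ^ 2 := by
    rw [← mul_pow]; gcongr
  set X := k * ‖x‖ ^ 2 - 4 / k with hX
  set Y := 2 * ((starRingEnd ℂ) x * (D + E)).re + ‖D + E‖ ^ 2 with hY
  have hX1 : |X| ≤ P := by
    have h4 : 4 / (k : ℝ) ≤ 4 := by rw [div_le_iff₀ hk0]; linarith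
    have h4' : 0 ≤ 4 / (k : ℝ) := by positivity
    have hx2 : k * ‖x‖ ^ 2 ≤ k * B ^ 2 := by gcongr
    have hx3 : 0 ≤ k * ‖x‖ ^ 2 := by positivity
    have hx4 : 0 ≤ k * B ^ 2 := by positivity
    rw [abs_le]; constructor <;> rw [hX, hP] <;> linarith
  have hY1 : |Y| ≤ (2 * B * C + C ^ 2) * h := by
    have hsq : C ^ 2 * h ^ 2 ≤ C ^ 2 * h := by
      have : h ^ 2 ≤ h := pow_le_of_le_one hh hh1 two_ne_zero
      gcongr
    have := abs_le.1 hreδ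
    have h0 := sq_nonneg ‖D + E‖
    have h0' : 0 ≤ C ^ 2 * h := by positivity
    rw [abs_le]; constructor <;> rw [hY] <;> linarith
  have hX' : k * ‖x'‖ ^ 2 - 4 / k = X + k * Y := by rw [hexp, hX, hY]; ring
  set Δ := τ (s - h) - τ s with hΔ
  have hΔ1 : |Δ| ≤ (k * M + η') * h := by
    have e : Δ = (Δ - h * (k * a s)) + h * (k * a s) := by ring
    rw [e]
    refine (abs_add_le _ _).trans ?_
    have : |h * (k * a s)| ≤ h * (k * M) := by
      rw [abs_mul, abs_mul, abs_of_nonneg hh, abs_of_nonneg hk0.le]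
      gcongr
    linarith
  have hka : h * (a s * (‖(k : ℂ) * x‖ ^ 2 - 4)) = h * (k * a s) * X := by
    rw [norm_mul, Complex.norm_natCast, hX]; field_simp
  have hτs : τ (s - h) = τ s + Δ := by rw [hΔ]; ring
  rw [hX', hka, hτs]
  have t1 : (Δ - h * (k * a s)) * X ≤ η' * h * P := by
    refine (le_abs_self _).trans ?_
    rw [abs_mul]
    exact mul_le_mul h1 hX1 (abs_nonneg _) (by positivity)
  have t2 : Δ * (k * Y) ≤ (k * M + η') * h * (k * ((2 * B * C + C ^ 2) * h)) := by
    refine (le_abs_self _).trans ?_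
    rw [abs_mul, abs_mul, abs_of_nonneg hk0.le]
    exact mul_le_mul hΔ1 (mul_le_mul_of_nonneg_left hY1 hk0.le) (by positivity) (by positivity)
  have t3 : τ s * (k * (2 * ((starRingEnd ℂ) x * E).re + ‖D + E‖ ^ 2)) ≤
      M * (k * ((2 * B * C₁ + C ^ 2) * h ^ 2)) := by
    refine (le_abs_self _).trans ?_
    rw [abs_mul, abs_mul, abs_of_nonneg hk0.le]
    refine mul_le_mul hτ1 (mul_le_mul_of_nonneg_left ?_ hk0.le) (by positivity) hM0
    have := abs_le.1 hreE
    have h0 := sq_nonneg ‖D + E‖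
    have h0' : 0 ≤ C ^ 2 * h ^ 2 := by positivity
    rw [abs_le]; constructor <;> linarith
  have t4 : η' * h * P = η / 2 * h := by rw [hη']; field_simp
  have t5 : M * (k * ((2 * B * C₁ + C ^ 2) * h ^ 2)) + (k * M + η') * h * (k * ((2 * B * C + C ^ 2) * h))
      = K * h * h := by rw [hK]; ring
  have t6 : K * h * h ≤ η / 2 * h := by
    have : K * h ≤ h * (K + 1) := by linarith
    gcongr
    linarith
  have e : (τ s + Δ) * (X + k * Y) = τ s * X + (h * (k * a s) * X + 2 * τ s * (k * ((starRingEnd ℂ) x * D).re))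
      + ((Δ - h * (k * a s)) * X + Δ * (k * Y) + τ s * (k * (2 * ((starRingEnd ℂ) x * E).re + ‖D + E‖ ^ 2))) := by
    rw [hY, hsplit]; ring
  rw [e]
  linarith

/-- De Branges' functional does not increase along a small step, up to an error `η h`. -/
lemma exists_step {N : ℕ} {a τ : ℕ → ℝ → ℝ} (hW : Weights N a τ) {T : ℝ} (hT : 0 ≤ T) {η : ℝ}
    (hη : 0 < η) :
    ∃ ε > 0, ∀ s ∈ Icc 0 T, ∀ h, h ≤ ε → h ≤ s → ∀ κ k : ℂ → ℂ,
      DifferentiableOn ℂ κ (ball 0 1) → (∀ j, ‖cf j κ‖ ≤ 2 * T) →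
      DifferentiableOn ℂ k (ball 0 1) → k 0 = h → (∀ z ∈ ball (0 : ℂ) 1, 0 ≤ (k z).re) →
      Phi N τ (s - h) (fun z => k z + κ (z * Complex.exp (-k z))) ≤ Phi N τ s κ + η * h := by
  set C₁ : ℝ := (N + 1) * (2 * T * (2 ^ N * (9 * N ^ 2))) with hC₁
  set C₂ : ℝ := (N + 1) * ((1 + N * (2 * T)) * 2) with hC₂
  have hη' : 0 < η / (N + 1) := by positivity
  have key : ∀ i ∈ Finset.range N, ∀ᶠ ε in 𝓝[>] (0 : ℝ), ∀ s ∈ Icc 0 T, ∀ h, 0 ≤ h → h ≤ ε → h ≤ s →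
      ∀ x x' D : ℂ, ‖x‖ ≤ 2 * T → ‖D‖ ≤ C₂ * h → ‖x' - x - D‖ ≤ C₁ * h ^ 2 →
      τ (i + 1) (s - h) * ((i + 1 : ℕ) * ‖x'‖ ^ 2 - 4 / (i + 1 : ℕ)) ≤
        τ (i + 1) s * ((i + 1 : ℕ) * ‖x‖ ^ 2 - 4 / (i + 1 : ℕ)) +
        (h * (a (i + 1) s * (‖((i + 1 : ℕ) : ℂ) * x‖ ^ 2 - 4)) +
          2 * τ (i + 1) s * ((i + 1 : ℕ) * ((starRingEnd ℂ) x * D).re)) + η / (N + 1) * h := by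
    intro i _
    obtain ⟨ε, hε, H⟩ := exists_step_term (k := i + 1) (by omega) (hW.cont (i + 1))
      (hW.deriv (i + 1)) T (B := 2 * T) (C₁ := C₁) (C₂ := C₂) (by positivity) (by positivity)
      (by positivity) hη'
    filter_upwards [Ioo_mem_nhdsGT hε] with ε' hε' s hs h hh hhε
    exact H s hs h hh (hhε.trans hε'.2.le)
  have key' := (Finset.range N).eventually_all.2 key
  have hsm : ∀ᶠ ε in 𝓝[>] (0 : ℝ), ε ∈ Ioo (0 : ℝ) (1 / (3 * N + 1)) := Ioo_mem_nhdsGT (by positivity)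
  obtain ⟨ε, H, hε⟩ := (key'.and hsm).exists
  refine ⟨ε, hε.1, fun s hs h hhε hhs κ k hκ hB hk hk0 hre => ?_⟩
  have hh : 0 ≤ h := by simpa [hk0] using hre 0 (by simp)
  have hNh : 3 * N * h ≤ 1 := by
    have h1 : h ≤ 1 / (3 * N + 1) := hhε.trans hε.2.le
    rw [le_div_iff₀ (by positivity)] at h1
    linarith
  set D : ℕ → ℂ := fun n => ∑ j ∈ Finset.range (n + 1), dd κ j * cf (n - j) k with hD
  have hterm : ∀ i ∈ Finset.range N, _ := fun i hi => H i hi s hs h hh hhε hhs (cf (i + 1) κ)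
    (cf (i + 1) (fun z => k z + κ (z * Complex.exp (-k z)))) (D (i + 1)) (hB _) (by
      have hiN : i + 1 ≤ N := Finset.mem_range.1 hi
      have hiN' : ((i + 1 : ℕ) : ℝ) ≤ N := by exact_mod_cast hiN
      refine (norm_sum_le _ _).trans ?_
      have : ∀ j ∈ Finset.range (i + 1 + 1), ‖dd κ j * cf (i + 1 - j) k‖ ≤ (1 + N * (2 * T)) * (2 * h) := by
        intro j hj
        have hjN : (j : ℝ) ≤ N := by
          have := Finset.mem_range.1 hj
          exact_mod_cast (by omega : j ≤ N)
        rw [norm_mul]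
        refine mul_le_mul ?_ (norm_cf_le_of_re_nonneg hk hk0 hre _) (norm_nonneg _) (by positivity)
        rw [dd]
        split_ifs
        · rw [norm_one]; linarith [mul_nonneg (Nat.cast_nonneg (α := ℝ) N) hT]
        · rw [norm_neg, norm_mul, Complex.norm_natCast]
          have := mul_le_mul hjN (hB j) (norm_nonneg _) (Nat.cast_nonneg N)
          linarith
      refine (Finset.sum_le_card_nsmul _ _ _ this).trans ?_
      rw [Finset.card_range, nsmul_eq_mul, hC₂]
      have : ((i + 1 + 1 : ℕ) : ℝ) ≤ N + 1 := by push_cast at hiN' ⊢; linarith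
      calc ((i + 1 + 1 : ℕ) : ℝ) * ((1 + N * (2 * T)) * (2 * h))
          ≤ (N + 1) * ((1 + N * (2 * T)) * (2 * h)) := by gcongr
        _ = _ := by ring) (by
      have hiN : i + 1 ≤ N := Finset.mem_range.1 hi
      have hiN' : ((i + 1 : ℕ) : ℝ) ≤ N := by exact_mod_cast hiN
      refine (norm_cf_step_le hκ hk hk0 hre (n := i + 1) ?_ hB).trans ?_
      · refine le_trans ?_ hNh; gcongr
      · rw [hC₁]
        calc (((i + 1 : ℕ) : ℝ) + 1) * (2 * T * (2 ^ (i + 1) * (9 * ((i + 1 : ℕ) : ℝ) ^ 2 * h ^ 2)))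
            ≤ ((N : ℝ) + 1) * (2 * T * (2 ^ N * (9 * (N : ℝ) ^ 2 * h ^ 2))) := by
              gcongr
              norm_num
          _ = _ := by ring)
  have hvar := deBranges_first_variation (N := N) (a := fun k => a k s) (τ := fun k => τ k s)
    (fun k => hW.nonneg k s hs.1) (fun k => hW.tele k s) (hW.a_end s) (hW.τ_end s) (d := dd κ)
    (by simp [dd]) hk hk0 hre
  have hsum := Finset.sum_le_sum hterm
  rw [Finset.sum_add_distrib, Finset.sum_add_distrib] at hsum
  have e1 : ∀ i, h * (a (i + 1) s * (‖((i + 1 : ℕ) : ℂ) * cf (i + 1) κ‖ ^ 2 - 4)) +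
          2 * τ (i + 1) s * ((i + 1 : ℕ) * ((starRingEnd ℂ) (cf (i + 1) κ) * D (i + 1)).re) =
      h * (a (i + 1) s * (‖dd κ (i + 1)‖ ^ 2 - 4)) - 2 * τ (i + 1) s *
      ((starRingEnd ℂ) (dd κ (i + 1)) * ∑ j ∈ Finset.range (i + 2), dd κ j * cf (i + 1 - j) k).re := by
    intro i
    have hdd : dd κ (i + 1) = -(((i + 1 : ℕ) : ℂ) * cf (i + 1) κ) := by rw [dd, if_neg (by omega)]
    rw [hdd, norm_neg, map_neg, map_mul, Complex.conj_natCast]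
    have : -(((i + 1 : ℕ) : ℂ) * (starRingEnd ℂ) (cf (i + 1) κ)) *
        ∑ j ∈ Finset.range (i + 2), dd κ j * cf (i + 1 - j) k =
        ((-((i + 1 : ℕ) : ℝ) : ℝ) : ℂ) * ((starRingEnd ℂ) (cf (i + 1) κ) * D (i + 1)) := by
      rw [hD]; push_cast; ring
    rw [this, Complex.re_ofReal_mul]
    ring
  simp only [e1] at hsum
  have e2 : ∑ _i ∈ Finset.range N, η / (N + 1) * h ≤ η * h := by
    rw [Finset.sum_const, Finset.card_range, nsmul_eq_mul]
    have : (N : ℝ) * (η / (N + 1)) ≤ η := by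
      rw [mul_div_assoc', div_le_iff₀ (by positivity)]; linarith
    calc (N : ℝ) * (η / (N + 1) * h) = N * (η / (N + 1)) * h := by ring
      _ ≤ η * h := by gcongr
  rw [Phi, Phi]
  linarith

/-- Along a chain with small steps the functional stays almost non-positive. -/
lemma Chain.exists_log {N : ℕ} {a τ : ℕ → ℝ → ℝ} {T η ε : ℝ}
    (Hstep : ∀ s ∈ Icc 0 T, ∀ h, h ≤ ε → h ≤ s → ∀ κ k : ℂ → ℂ,
      DifferentiableOn ℂ κ (ball 0 1) → (∀ j, ‖cf j κ‖ ≤ 2 * T) →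
      DifferentiableOn ℂ k (ball 0 1) → k 0 = h → (∀ z ∈ ball (0 : ℂ) 1, 0 ≤ (k z).re) →
      Phi N τ (s - h) (fun z => k z + κ (z * Complex.exp (-k z))) ≤ Phi N τ s κ + η * h)
    (hW : Weights N a τ) {F : ℂ → ℂ} {t : ℝ} (hF : Chain ε F t) :
    t ≤ T → ∃ κ : ℂ → ℂ, DifferentiableOn ℂ κ (ball 0 1) ∧ κ 0 = t ∧
      (∀ z ∈ ball (0 : ℂ) 1, F z = z * Complex.exp (-κ z)) ∧
      (∀ z ∈ ball (0 : ℂ) 1, 0 ≤ (κ z).re) ∧ Phi N τ (T - t) κ ≤ η * t := by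
  induction hF with
  | start =>
    intro hT
    refine ⟨fun _ => 0, differentiableOn_const _, by simp, by simp, by simp, ?_⟩
    rw [Phi, mul_zero, sub_zero]
    refine Finset.sum_nonpos fun i _ => mul_nonpos_of_nonneg_of_nonpos (hW.τ_nonneg _ _ hT) ?_
    rw [cf_const, if_neg (by omega), norm_zero]
    have : (0 : ℝ) ≤ 4 / (i + 1 : ℕ) := by positivity
    linarith
  | @step G w F t h hG hw hh hFG ih =>
    intro hT
    obtain ⟨k, hk, hk0, hwk, hre⟩ := hw.exists_log
    have hh0 : 0 ≤ h := by simpa [hk0] using hre 0 (by simp)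
    obtain ⟨κ, hκ, hκ0, hGκ, hκre, hPhi⟩ := ih (by linarith)
    have ht0 : 0 ≤ t := by simpa [hκ0] using hκre 0 (by simp)
    have hwm : ∀ z ∈ ball (0 : ℂ) 1, z * Complex.exp (-k z) ∈ ball (0 : ℂ) 1 := fun z hz => by
      rw [← hwk z hz]; exact hw.maps hz
    refine ⟨fun z => k z + κ (z * Complex.exp (-k z)),
      hk.add (differentiableOn_comp_step hκ hk hre), ?_, ?_, ?_, ?_⟩
    · simp [hk0, hκ0]; ring
    · intro z hz
      rw [hFG hz, Function.comp_apply, hwk z hz, hGκ _ (hwm z hz), neg_add, Complex.exp_add, mul_assoc]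
    · intro z hz
      rw [Complex.add_re]
      exact add_nonneg (hre z hz) (hκre _ (hwm z hz))
    · have := Hstep (T - t) ⟨by linarith, by linarith⟩ h hh (by linarith) κ k hκ
        (fun j => (norm_cf_le_of_re_nonneg hκ hκ0 hκre j).trans (by linarith)) hk hk0 hre
      rw [show T - (t + h) = T - t - h by ring]
      linarith

lemma eqOn_of_exp_eq {κ₁ κ₂ : ℂ → ℂ} (h₁ : DifferentiableOn ℂ κ₁ (ball 0 1))
    (h₂ : DifferentiableOn ℂ κ₂ (ball 0 1)) (h0 : κ₁ 0 = κ₂ 0)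
    (he : ∀ z ∈ ball (0 : ℂ) 1, z ≠ 0 → Complex.exp (κ₁ z) = Complex.exp (κ₂ z)) :
    EqOn κ₁ κ₂ (ball 0 1) := by
  have hb : IsOpen (ball (0 : ℂ) 1) := isOpen_ball
  have hE : ∀ z ∈ ball (0 : ℂ) 1, Complex.exp (κ₁ z) = Complex.exp (κ₂ z) := by
    intro z hz
    by_cases hz0 : z = 0
    · rw [hz0, h0]
    · exact he z hz hz0
  have hder : ∀ z ∈ ball (0 : ℂ) 1, deriv (fun z => κ₁ z - κ₂ z) z = 0 := by
    intro z hz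
    have d1 := (h₁.differentiableAt (hb.mem_nhds hz)).hasDerivAt
    have d2 := (h₂.differentiableAt (hb.mem_nhds hz)).hasDerivAt
    have e : (fun z => Complex.exp (κ₁ z)) =ᶠ[𝓝 z] fun z => Complex.exp (κ₂ z) := by
      filter_upwards [hb.mem_nhds hz] with w hw using hE w hw
    have := (d1.cexp).unique (d2.cexp.congr_of_eventuallyEq e)
    rw [hE z hz] at this
    have := mul_left_cancel₀ (Complex.exp_ne_zero _) this
    rw [(d1.fun_sub d2).deriv, this, sub_self]
  intro z hz
  have := hb.is_const_of_deriv_eq_zero (convex_ball _ _).isPreconnected (h₁.sub h₂) hder hz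
    (mem_ball_self one_pos)
  simp only [Pi.sub_apply, h0, sub_self] at this
  exact sub_eq_zero.1 this

/-- De Branges' inequality for bounded univalent functions that extend beyond the closed disc. -/
theorem Phi_nonpos {N : ℕ} {a τ : ℕ → ℝ → ℝ} (hW : Weights N a τ) {f : ℂ → ℂ} {R : ℝ} (hR : 1 < R)
    (hf : DifferentiableOn ℂ f (ball 0 R)) (hi : InjOn f (ball 0 R))
    (hm : MapsTo f (ball 0 R) (ball 0 1)) {T : ℝ} (hT : 0 ≤ T) {κ : ℂ → ℂ}
    (hκ : DifferentiableOn ℂ κ (ball 0 1)) (hκ0 : κ 0 = T)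
    (hfκ : ∀ z ∈ ball (0 : ℂ) 1, f z = z * Complex.exp (-κ z)) : Phi N τ 0 κ ≤ 0 := by
  have h0 : f 0 = 0 := by simpa using hfκ 0 (by simp)
  have hd : deriv f 0 = Complex.exp (-T) := by
    have h1 : HasDerivAt (fun z => z * Complex.exp (-κ z)) (Complex.exp (-T)) 0 := by
      have h2 := (hκ.differentiableAt (ball_mem_nhds _ one_pos)).hasDerivAt.neg.cexp
      exact ((hasDerivAt_id (0 : ℂ)).mul h2).congr_deriv (by simp [hκ0])
    have e : f =ᶠ[𝓝 0] fun z => z * Complex.exp (-κ z) := by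
      filter_upwards [ball_mem_nhds (0 : ℂ) one_pos] with w hw using hfκ w hw
    exact (h1.congr_of_eventuallyEq e).deriv
  refine le_of_forall_pos_le_add fun η hη => ?_
  obtain ⟨ε, hε, Hstep⟩ := exists_step hW hT (η := η / (T + 1)) (by positivity)
  have hch := exists_chain hR hf hi hm h0 hd hε
  obtain ⟨κ', hκ', hκ'0, hfκ', -, hPhi⟩ := hch.exists_log Hstep hW le_rfl
  have heq : EqOn κ κ' (ball 0 1) := by
    have := eqOn_of_exp_eq hκ.neg hκ'.neg (by simp [hκ0, hκ'0]) (fun z hz hz0 => by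
      have := (hfκ z hz).symm.trans (hfκ' z hz)
      exact mul_left_cancel₀ hz0 this)
    intro z hz
    simpa using this hz
  have e : Phi N τ 0 κ = Phi N τ (T - T) κ' := by
    rw [Phi, Phi, sub_self]
    exact Finset.sum_congr rfl fun i _ => by rw [cf_congr heq]
  rw [e, zero_add]
  refine hPhi.trans ?_
  rw [div_mul_eq_mul_div, div_le_iff₀ (by positivity)]
  linarith

/-! ### Passing from bounded functions to the class of all univalent functions -/

lemma cf_comp_mul {F : ℂ → ℂ} (hF : DifferentiableOn ℂ F (ball 0 1)) {ρ : ℝ} (h0 : 0 < ρ) (h1 : ρ < 1)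
    (n : ℕ) : cf n (fun z => F (ρ * z)) = ρ ^ n * cf n F := by
  have hm : MapsTo (fun z : ℂ => (ρ : ℂ) * z) (ball 0 1) (ball 0 1) := by
    intro z hz
    rw [mem_ball_zero_iff] at hz ⊢
    rw [norm_mul, Complex.norm_real, Real.norm_of_nonneg h0.le]
    nlinarith [norm_nonneg z]
  have hd : DifferentiableOn ℂ (fun z => F (ρ * z)) (ball 0 1) :=
    hF.comp ((differentiable_id.const_mul (ρ : ℂ)).differentiableOn) hm
  have hhalf : (0 : ℝ) < 1 / 2 := by norm_num
  rw [← circleAverage_eq_cf hd hhalf (by norm_num) n,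
    ← circleAverage_eq_cf hF (mul_pos h0 hhalf) (by linarith) n]
  rw [circleAverage, circleAverage]
  rw [mul_smul_comm, ← intervalIntegral.integral_const_mul]
  congr 1
  apply intervalIntegral.integral_congr
  intro θ _
  have h2 : (ρ : ℂ) ≠ 0 := by exact_mod_cast h0.ne'
  have h3 : circleMap 0 (ρ * (1 / 2)) θ = ρ * circleMap 0 (1 / 2) θ := by
    simp only [circleMap]; push_cast; ring
  simp only [h3, mul_inv, mul_pow]
  have h4 : (ρ : ℂ) ^ n * ((ρ : ℂ)⁻¹) ^ n = 1 := by rw [← mul_pow, mul_inv_cancel₀ h2, one_pow]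
  linear_combination (-(F (ρ * circleMap 0 (1 / 2) θ) * ((circleMap 0 (1 / 2) θ)⁻¹) ^ n)) * h4

/-- The de Branges inequality for an arbitrary admissible weight system: `g` is the branch of
`log (f z / z)`, and the weights are evaluated at the initial time. -/
theorem weighted_log_coeff_le {N : ℕ} {a τ : ℕ → ℝ → ℝ} (hW : Weights N a τ) {f g : ℂ → ℂ}
    (hf : DifferentiableOn ℂ f (ball 0 1)) (hi : InjOn f (ball 0 1)) (hf0 : f 0 = 0)
    (hg : DifferentiableOn ℂ g (ball 0 1)) (hg0 : g 0 = 0)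
    (hfg : ∀ z ∈ ball (0 : ℂ) 1, z ≠ 0 → exp (g z) = f z / z) :
    ∑ i ∈ Finset.range N, τ (i + 1) 0 * ((i + 1 : ℕ) * ‖cf (i + 1) g‖ ^ 2 - 4 / (i + 1 : ℕ)) ≤ 0 := by
  have key : ∀ ρ : ℝ, 0 < ρ → ρ < 1 → ∑ i ∈ Finset.range N, τ (i + 1) 0 *
      ((i + 1 : ℕ) * (ρ ^ (i + 1) * ‖cf (i + 1) g‖) ^ 2 - 4 / (i + 1 : ℕ)) ≤ 0 := by
    intro ρ h0 h1
    have hρ : (ρ : ℂ) ≠ 0 := by exact_mod_cast h0.ne'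
    obtain ⟨B, hB⟩ := ((isCompact_closedBall (0 : ℂ) ((1 + ρ) / 2)).image_of_continuousOn
      (hf.continuousOn.mono (closedBall_subset_ball (by linarith)))).isBounded.exists_norm_le
    set M : ℝ := max 1 (B + 1) with hMdef
    have hM1 : 1 ≤ M := le_max_left _ _
    have hM0 : 0 < M := by linarith
    have hMB : B < M := lt_of_lt_of_le (by linarith) (le_max_right _ _)
    have hMc : (M : ℂ) ≠ 0 := by exact_mod_cast hM0.ne'
    have hR : 1 < (1 + ρ) / 2 / ρ := by rw [lt_div_iff₀ h0]; linarith
    have hm : MapsTo (fun z : ℂ => (ρ : ℂ) * z) (ball 0 ((1 + ρ) / 2 / ρ)) (ball 0 ((1 + ρ) / 2)) := by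
      intro z hz
      rw [mem_ball_zero_iff, lt_div_iff₀ h0] at hz
      rw [mem_ball_zero_iff, norm_mul, Complex.norm_real, Real.norm_of_nonneg h0.le, mul_comm]
      exact hz
    have hsub : ball (0 : ℂ) ((1 + ρ) / 2) ⊆ ball 0 1 := ball_subset_ball (by linarith)
    have hm1 : MapsTo (fun z : ℂ => (ρ : ℂ) * z) (ball 0 1) (ball 0 1) := fun z hz =>
      hsub (hm (ball_subset_ball hR.le hz))
    have hlin : Differentiable ℂ (fun z : ℂ => (ρ : ℂ) * z) := differentiable_id.const_mul _
    have hgd : DifferentiableOn ℂ (fun z => g (ρ * z)) (ball 0 1) :=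
      hg.comp hlin.differentiableOn hm1
    have hP := Phi_nonpos (f := fun z => f (ρ * z) / M)
      (κ := fun z => (Real.log (M / ρ) : ℂ) + (-1) * g (ρ * z)) (T := Real.log (M / ρ)) hW hR
      ((hf.comp hlin.differentiableOn (hm.mono_right hsub)).div_const _) ?_ ?_ ?_ ?_ ?_ ?_
    · rw [Phi] at hP
      refine le_trans (le_of_eq ?_) hP
      apply Finset.sum_congr rfl
      intro i _
      have : cf (i + 1) (fun z => (Real.log (M / ρ) : ℂ) + (-1) * g (ρ * z))
          = - (ρ ^ (i + 1) * cf (i + 1) g) := by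
        rw [cf_add (F := fun _ => (Real.log (M / ρ) : ℂ)) (G := fun z => (-1) * g (ρ * z))
          (differentiableOn_const _) (hgd.const_mul _), cf_const,
          cf_const_mul (F := fun z => g (ρ * z)) hgd, cf_comp_mul hg h0 h1]
        simp
      rw [this, norm_neg, norm_mul, norm_pow, Complex.norm_real, Real.norm_of_nonneg h0.le]
    · intro x hx y hy hxy
      have h2 : f (ρ * x) = f (ρ * y) := by
        simpa [div_left_inj' hMc] using hxy
      exact mul_left_cancel₀ hρ (hi (hsub (hm hx)) (hsub (hm hy)) h2)
    · intro z hz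
      rw [mem_ball_zero_iff, norm_div, Complex.norm_real, Real.norm_of_nonneg hM0.le, div_lt_one hM0]
      exact lt_of_le_of_lt (hB _ ⟨_, ball_subset_closedBall (hm hz), rfl⟩) hMB
    · apply Real.log_nonneg
      rw [le_div_iff₀ h0]; linarith
    · exact (differentiableOn_const _).add (hgd.const_mul _)
    · simp [hg0]
    · intro z hz
      by_cases hz0 : z = 0
      · simp [hz0, hf0]
      have h2 := hfg (ρ * z) (hm1 hz) (mul_ne_zero hρ hz0)
      have h3 : exp (-((Real.log (M / ρ) : ℂ) + (-1) * g (ρ * z))) = (ρ / M) * exp (g (ρ * z)) := by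
        rw [show -((Real.log (M / ρ) : ℂ) + (-1) * g (ρ * z)) = ((-Real.log (M / ρ) : ℝ) : ℂ) + g (ρ * z) by
          push_cast; ring, Complex.exp_add, ← Complex.ofReal_exp, Real.exp_neg,
          Real.exp_log (div_pos hM0 h0)]
        push_cast
        rw [inv_div]
      simp only [h3, h2]
      field_simp
  have hc : Continuous (fun ρ : ℝ => ∑ i ∈ Finset.range N, τ (i + 1) 0 *
      ((i + 1 : ℕ) * (ρ ^ (i + 1) * ‖cf (i + 1) g‖) ^ 2 - 4 / (i + 1 : ℕ))) := by fun_prop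
  have ht := (hc.tendsto 1).mono_left (nhdsWithin_le_nhds (s := Iio 1))
  have h2 := le_of_tendsto ht (by
    filter_upwards [Ioo_mem_nhdsLT (show (0 : ℝ) < 1 by norm_num)] with ρ hρ using key ρ hρ.1 hρ.2)
  simpa using h2

/-! ### Lazy random walk weights -/

/-- The probability that a lazy symmetric random walk on `ℤ` (staying put with probability `1 - p`,
moving by `±1` with probability `p / 2` each) is at `k` after `n` steps. -/
noncomputable def xw (p : ℝ) : ℕ → ℤ → ℝ
  | 0, k => if k = 0 then 1 else 0
  | n + 1, k => (1 - p) * xw p n k + p / 2 * (xw p n (k - 1) + xw p n (k + 1))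

lemma xw_zero (p : ℝ) (k : ℤ) : xw p 0 k = if k = 0 then 1 else 0 := rfl

lemma xw_succ (p : ℝ) (n : ℕ) (k : ℤ) :
    xw p (n + 1) k = (1 - p) * xw p n k + p / 2 * (xw p n (k - 1) + xw p n (k + 1)) := rfl

lemma xw_nonneg {p : ℝ} (h0 : 0 ≤ p) (h1 : p ≤ 1) (n : ℕ) (k : ℤ) : 0 ≤ xw p n k := by
  induction n generalizing k with
  | zero => rw [xw_zero]; split_ifs <;> norm_num
  | succ n ih =>
    rw [xw_succ]
    have := ih k
    have := add_nonneg (ih (k - 1)) (ih (k + 1))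
    have : 0 ≤ 1 - p := by linarith
    positivity

lemma xw_neg (p : ℝ) (n : ℕ) (k : ℤ) : xw p n (-k) = xw p n k := by
  induction n generalizing k with
  | zero => simp [xw_zero]
  | succ n ih =>
    rw [xw_succ, xw_succ, ih k, show -k - 1 = -(k + 1) by ring, show -k + 1 = -(k - 1) by ring, ih, ih]
    ring

lemma xw_eq_zero (p : ℝ) (n : ℕ) (k : ℤ) (h : (n : ℤ) < k) : xw p n k = 0 := by
  induction n generalizing k with
  | zero => rw [xw_zero, if_neg]; push_cast at h; omega
  | succ n ih =>
    push_cast at h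
    rw [xw_succ, ih k (by omega), ih (k - 1) (by omega), ih (k + 1) (by omega)]
    ring

lemma xw_continuous (n : ℕ) (k : ℤ) : Continuous fun p => xw p n k := by
  induction n generalizing k with
  | zero => simp only [xw_zero]; fun_prop
  | succ n ih =>
    have h1 := ih k
    have h2 := ih (k - 1)
    have h3 := ih (k + 1)
    simp only [xw_succ]
    fun_prop

/-- Comes from differentiating the generating function `(1 - p + p cos θ) ^ n` in `p`. -/
lemma xw_hasDerivAt (n : ℕ) (k : ℤ) (p : ℝ) :
    HasDerivAt (fun p => xw p (n + 1) k)
      ((n + 1) / 2 * (xw p n (k - 1) - 2 * xw p n k + xw p n (k + 1))) p := by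
  have hp : HasDerivAt (fun p : ℝ => 1 - p) (-1) p := (hasDerivAt_id p).const_sub 1
  have hq : HasDerivAt (fun p : ℝ => p / 2) (1 / 2) p := (hasDerivAt_id p).div_const 2
  induction n generalizing k with
  | zero =>
    have := (hp.mul_const (xw p 0 k)).fun_add (hq.mul_const (xw p 0 (k - 1) + xw p 0 (k + 1)))
    refine this.congr_deriv ?_
    push_cast; ring
  | succ n ih =>
    have := (hp.fun_mul (ih k)).fun_add (hq.fun_mul ((ih (k - 1)).fun_add (ih (k + 1))))
    refine this.congr_deriv ?_
    have e1 : k - 1 + 1 = k := by ring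
    have e2 : k + 1 - 1 = k := by ring
    rw [e1, e2]
    have r1 := xw_succ p n k
    have r2 := xw_succ p n (k - 1)
    have r3 := xw_succ p n (k + 1)
    rw [e1] at r2
    rw [e2] at r3
    push_cast
    rw [r1, r2, r3]
    ring

/-- Comes from differentiating the generating function `(1 - p + p cos θ) ^ n` in `θ`. -/
lemma xw_index (p : ℝ) (n : ℕ) (k : ℤ) :
    k * xw p (n + 1) k = (n + 1) * (p / 2) * (xw p n (k - 1) - xw p n (k + 1)) := by
  induction n generalizing k with
  | zero =>
    rw [xw_succ]
    simp only [xw_zero]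
    by_cases h0 : k = 0
    · subst h0; norm_num
    by_cases h1 : k = 1
    · subst h1; norm_num
    by_cases h2 : k = -1
    · subst h2; norm_num
    rw [if_neg h0, if_neg (by omega), if_neg (by omega)]; ring
  | succ n ih =>
    have e1 : k - 1 + 1 = k := by ring
    have e2 : k + 1 - 1 = k := by ring
    have i1 := ih k
    have i2 := ih (k - 1)
    have i3 := ih (k + 1)
    have r2 := xw_succ p n (k - 1)
    have r3 := xw_succ p n (k + 1)
    rw [e1] at i2 r2
    rw [e2] at i3 r3
    push_cast at i2 i3 ⊢
    rw [xw_succ p (n + 1) k]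
    linear_combination (1 - p) * i1 + p / 2 * i2 + p / 2 * i3 - (n + 1) * (p / 2) * r2
      + (n + 1) * (p / 2) * r3

/-- The walk is unimodal for small `p`. -/
lemma xw_succ_le {p : ℝ} (h0 : 0 ≤ p) (h1 : p ≤ 1 / 2) (n : ℕ) (k : ℕ) :
    xw p n (k + 1) ≤ xw p n k := by
  induction n generalizing k with
  | zero =>
    rw [xw_zero, xw_zero, if_neg (by omega)]
    split_ifs <;> norm_num
  | succ n ih =>
    rw [xw_succ, xw_succ]
    have i1 := ih k
    have i2 := ih (k + 1)
    push_cast at i2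
    have e2 : (k : ℤ) + 1 - 1 = k := by ring
    rw [e2]
    have m1 : 0 ≤ p * (xw p n (k + 1) - xw p n (k + 1 + 1)) := mul_nonneg h0 (by linarith)
    have m2 : 0 ≤ (1 - 3 / 2 * p) * (xw p n k - xw p n (k + 1)) :=
      mul_nonneg (by linarith) (by linarith)
    rcases k with _ | k
    · have := xw_neg p n 1
      simp only [Nat.cast_zero, zero_add, zero_sub] at m1 m2 ⊢
      rw [this]
      generalize xw p n (1 + 1) = y at m1 ⊢
      generalize xw p n 1 = y₁ at m1 m2 ⊢
      generalize xw p n 0 = y₀ at m2 ⊢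
      linarith
    · have i3 := ih k
      have e3 : ((k + 1 : ℕ) : ℤ) - 1 = k := by push_cast; ring
      rw [e3]
      have e4 : ((k + 1 : ℕ) : ℤ) = k + 1 := by push_cast; ring
      rw [e4] at m1 m2 ⊢
      have m3 : 0 ≤ p * (xw p n k - xw p n (k + 1)) := mul_nonneg h0 (by linarith)
      have m4 : 0 ≤ p * (xw p n (k + 1) - xw p n (k + 1 + 1)) :=
        mul_nonneg h0 (by have := ih (k + 1); push_cast at this; linarith)
      linarith

/-- `(2 / p) * xw p n 1` decreases in `p`; its value is bounded below by the one at `p = 1 / 2`. -/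
lemma xw_one_ge {p : ℝ} (h0 : 0 ≤ p) (h1 : p ≤ 1 / 2) (n : ℕ) :
    p / 2 * (4 * xw (1 / 2) n 1) ≤ xw p n 1 := by
  rcases n with _ | n
  · simp [xw_zero]
  have anti : AntitoneOn (fun p => xw p n 0 - xw p n 2) (Icc 0 (1 / 2)) := by
    rcases n with _ | n
    · simp only [xw_zero]; exact antitoneOn_const
    apply antitoneOn_of_hasDerivWithinAt_nonpos (convex_Icc _ _)
      ((xw_continuous _ _).sub (xw_continuous _ _)).continuousOn
      (fun x _ => ((xw_hasDerivAt n 0 x).fun_sub (xw_hasDerivAt n 2 x)).hasDerivWithinAt)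
    intro x hx
    rw [interior_Icc] at hx
    have s1 := xw_succ_le hx.1.le hx.2.le (n + 1) 1
    push_cast at s1
    have j1 := xw_index x n 1
    have j2 := xw_index x n 2
    have hm1 := xw_neg x n 1
    norm_num at j1 j2 s1 ⊢
    rw [hm1]
    have hn : (0 : ℝ) < n + 1 := by positivity
    have hc : xw x n 1 - xw x n 3 ≤ 2 * (xw x n 0 - xw x n 2) := by
      have : (n + 1) * (x / 2) * (xw x n 1 - xw x n 3) ≤ (n + 1) * (x / 2) * (2 * (xw x n 0 - xw x n 2)) := by
        linarith
      exact le_of_mul_le_mul_left this (mul_pos hn (by linarith [hx.1]))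
    have := mul_nonneg hn.le (sub_nonneg.2 hc)
    linarith
  have h2 := anti ⟨h0, h1⟩ ⟨by norm_num, le_refl (1 / 2 : ℝ)⟩ h1
  have j1 := xw_index p n 1
  have j2 := xw_index (1 / 2) n 1
  norm_num at j1 j2 h2 ⊢
  rw [j1, j2]
  have := mul_le_mul_of_nonneg_left h2 (show 0 ≤ (n + 1) * (p / 2) by positivity)
  linarith

/-! ### The walk at `p = 1 / 2` -/

lemma xw_half_ratio (n : ℕ) (k : ℤ) :
    (n + k + 1) * xw (1 / 2) n (k + 1) = (n - k) * xw (1 / 2) n k := by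
  induction n generalizing k with
  | zero =>
    simp only [xw_zero]
    by_cases h0 : k = 0
    · subst h0; norm_num
    by_cases h2 : k = -1
    · subst h2; norm_num
    rw [if_neg h0, if_neg (by omega)]; ring
  | succ n ih =>
    have e1 : k - 1 + 1 = k := by ring
    have e2 : k + 1 - 1 = k := by ring
    have i1 := ih k
    have i2 := ih (k - 1)
    have i3 := ih (k + 1)
    rw [e1] at i2
    rw [xw_succ, xw_succ, e2]
    push_cast at i2 i3 ⊢
    linear_combination (1 / 2) * i1 + (1 / 4) * i2 + (1 / 4) * i3

lemma xw_half_succ (n : ℕ) (k : ℤ) :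
    ((n + 1) ^ 2 - k ^ 2) * xw (1 / 2) (n + 1) k = (n + 1) * (n + 1 / 2) * xw (1 / 2) n k := by
  have i1 := xw_half_ratio n k
  have i2 := xw_half_ratio n (k - 1)
  rw [show k - 1 + 1 = k by ring] at i2
  rw [xw_succ]
  push_cast at i2
  linear_combination (1 / 4) * (n + 1 - k) * i1 - (1 / 4) * (n + 1 + k) * i2

lemma xw_half_zero_pos (n : ℕ) : 0 < xw (1 / 2) n 0 := by
  induction n with
  | zero => simp [xw_zero]
  | succ n ih =>
    have := xw_half_succ n 0
    have h2 : 0 < (n + 1 : ℝ) * (n + 1 / 2) * xw (1 / 2) n 0 := by positivity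
    rw [← this] at h2
    rw [Int.cast_zero, zero_pow two_ne_zero, sub_zero] at h2
    exact (mul_pos_iff_of_pos_left (by positivity)).1 h2

lemma xw_half_le_zero (n k : ℕ) : xw (1 / 2) n k ≤ xw (1 / 2) n 0 := by
  induction k with
  | zero => simp
  | succ k ih =>
    have := xw_succ_le (p := 1 / 2) (by norm_num) le_rfl n k
    push_cast
    linarith

lemma xw_half_tendsto (k : ℕ) :
    Tendsto (fun n : ℕ => xw (1 / 2) n k / xw (1 / 2) n 0) atTop (𝓝 1) := by
  induction k with
  | zero =>
    refine tendsto_const_nhds.congr fun n => ?_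
    rw [Nat.cast_zero, div_self (xw_half_zero_pos n).ne']
  | succ k ih =>
    have hn : Tendsto (fun n : ℕ => ((n : ℝ) + k + 1)) atTop atTop := by
      apply tendsto_atTop_add_const_right
      exact tendsto_atTop_add_const_right _ _ tendsto_natCast_atTop_atTop
    have h1 : Tendsto (fun n : ℕ => 1 - (2 * k + 1 : ℝ) / ((n : ℝ) + k + 1)) atTop (𝓝 (1 - 0)) :=
      tendsto_const_nhds.sub (tendsto_const_nhds.div_atTop hn)
    have h2 := h1.mul ih
    rw [sub_zero, mul_one] at h2
    refine h2.congr fun n => ?_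
    have hr := xw_half_ratio n k
    have hp := xw_half_zero_pos n
    have hd : (n : ℝ) + k + 1 ≠ 0 := by positivity
    push_cast at hr ⊢
    have : xw (1 / 2) n (k + 1) = (n - k) * xw (1 / 2) n k / (n + k + 1) := by
      rw [eq_div_iff hd]; linarith
    rw [this]
    field_simp
    ring

/-! ### Weight systems built from the random walk -/

/-- The functions `a k` of the weight system attached to a sequence `t`, at time `s`; the parameter
of the walk is `exp (-s) / 2`. -/
noncomputable def aw (N : ℕ) (t : ℕ → ℝ) (k : ℕ) (s : ℝ) : ℝ :=
  ∑ n ∈ Finset.range N, t n * (xw (Real.exp (-s) / 2) (n + 1) k - xw (Real.exp (-s) / 2) n k)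

/-- The weights `τ k` attached to a sequence `t`, at time `s`. -/
noncomputable def tw (N : ℕ) (t : ℕ → ℝ) (k : ℕ) (s : ℝ) : ℝ :=
  ∑ n ∈ Finset.range N, t n * (k * xw (Real.exp (-s) / 2) (n + 1) k / (n + 1))

lemma half_exp_mem {s : ℝ} (hs : 0 ≤ s) : 0 ≤ Real.exp (-s) / 2 ∧ Real.exp (-s) / 2 ≤ 1 / 2 := by
  have h1 : Real.exp (-s) ≤ 1 := Real.exp_le_one_iff.2 (by linarith)
  have h2 := (Real.exp_pos (-s)).le
  constructor <;> linarith

/-- The relations `τₖ' = -k aₖ` and `τₖ - τₖ₊₁ = aₖ + aₖ₊₁` follow from `xw_hasDerivAt` and `xw_index`; only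
the sign of `aₖ` depends on the sequence `t`. -/
lemma weights_of_walk {N : ℕ} {t : ℕ → ℝ} (ht : ∀ n, 0 ≤ t n)
    (ha : ∀ (k : ℕ) (p : ℝ), 0 ≤ p → p ≤ 1 / 2 →
      0 ≤ ∑ n ∈ Finset.range N, t n * (xw p (n + 1) (k + 1) - xw p n (k + 1))) :
    Weights N (aw N t) (tw N t) where
  nonneg k s hs := by
    have := ha k _ (half_exp_mem hs).1 (half_exp_mem hs).2
    simpa [aw] using this
  cont k := by
    have hx : ∀ n, Continuous fun s => xw (Real.exp (-s) / 2) n k := fun n =>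
      (xw_continuous n k).comp (by fun_prop)
    unfold aw
    exact continuous_finsetSum _ fun n _ => ((hx (n + 1)).sub (hx n)).const_mul _
  deriv k s := by
    have hp : HasDerivAt (fun s : ℝ => Real.exp (-s) / 2) (-(Real.exp (-s) / 2)) s := by
      have := ((hasDerivAt_id s).neg.exp).div_const 2
      refine this.congr_deriv ?_
      simp; ring
    have hx : ∀ n : ℕ, HasDerivAt (fun s => xw (Real.exp (-s) / 2) (n + 1) k)
        (-((n + 1) * (xw (Real.exp (-s) / 2) (n + 1) k - xw (Real.exp (-s) / 2) n k))) s := by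
      intro n
      have := (xw_hasDerivAt n k (Real.exp (-s) / 2)).comp s hp
      refine HasDerivAt.congr_deriv this ?_
      rw [xw_succ]
      ring
    have hs : HasDerivAt (fun s => ∑ n ∈ Finset.range N,
        t n * (k * xw (Real.exp (-s) / 2) (n + 1) k / (n + 1))) _ s :=
      HasDerivAt.fun_sum fun n _ => (((hx n).const_mul (k : ℝ)).div_const (n + 1 : ℝ)).const_mul (t n)
    refine HasDerivAt.congr_deriv hs ?_
    rw [aw, Finset.mul_sum, ← Finset.sum_neg_distrib]
    apply Finset.sum_congr rfl
    intro n _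
    have : (n : ℝ) + 1 ≠ 0 := by positivity
    field_simp
  tele k s := by
    simp only [tw, aw]
    rw [← Finset.sum_sub_distrib, ← Finset.sum_add_distrib]
    apply Finset.sum_congr rfl
    intro n _
    generalize Real.exp (-s) / 2 = p
    have hn : (n : ℝ) + 1 ≠ 0 := by positivity
    have j1 : ((k + 1 : ℕ) : ℝ) * xw p (n + 1) (k + 1 : ℕ) / (n + 1)
        = p / 2 * (xw p n k - xw p n (k + 2)) := by
      rw [div_eq_iff hn]
      have := xw_index p n (k + 1)
      rw [show (k : ℤ) + 1 - 1 = k by ring, show (k : ℤ) + 1 + 1 = k + 2 by ring] at this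
      push_cast at this ⊢
      linarith
    have j2 : ((k + 2 : ℕ) : ℝ) * xw p (n + 1) (k + 2 : ℕ) / (n + 1)
        = p / 2 * (xw p n (k + 1) - xw p n (k + 3)) := by
      rw [div_eq_iff hn]
      have := xw_index p n (k + 2)
      rw [show (k : ℤ) + 2 - 1 = k + 1 by ring, show (k : ℤ) + 2 + 1 = k + 3 by ring] at this
      push_cast at this ⊢
      linarith
    rw [j1, j2, xw_succ, xw_succ]
    push_cast
    rw [show (k : ℤ) + 1 - 1 = k by ring, show (k : ℤ) + 1 + 1 = k + 2 by ring,
      show (k : ℤ) + 2 - 1 = k + 1 by ring, show (k : ℤ) + 2 + 1 = k + 3 by ring]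
    ring
  a_end s := by
    apply Finset.sum_eq_zero
    intro n hn
    have := Finset.mem_range.1 hn
    rw [xw_eq_zero _ _ _ (by push_cast; omega), xw_eq_zero _ _ _ (by push_cast; omega)]
    ring
  τ_end s := by
    apply Finset.sum_eq_zero
    intro n hn
    have := Finset.mem_range.1 hn
    rw [xw_eq_zero _ _ _ (by push_cast; omega)]
    ring
  τ_nonneg k s hs := by
    apply Finset.sum_nonneg
    intro n _
    have := xw_nonneg (half_exp_mem hs).1 (by linarith [(half_exp_mem hs).2]) (n + 1) k
    have := ht n
    positivity

/-! ### The sequence adapted to `n ^ 2 / (n ^ 2 + u)` -/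

/-- `tq u n = ∏ (j ^ 2 + u) / (j (j + 1 / 2))`, the product over `1 ≤ j ≤ n`; here `u = α ^ 2`. -/
noncomputable def tq (u : ℝ) : ℕ → ℝ
  | 0 => 1
  | n + 1 => tq u n * (((n + 1) ^ 2 + u) / ((n + 1) * (n + 3 / 2)))

lemma tq_pos {u : ℝ} (hu : 0 ≤ u) (n : ℕ) : 0 < tq u n := by
  induction n with
  | zero => simp [tq]
  | succ n ih => rw [tq]; positivity

lemma tq_mono {u : ℝ} (hu : 0 ≤ u) (hu1 : u ≤ 1) (n : ℕ) : tq u n ≤ tq 1 n := by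
  induction n with
  | zero => simp [tq]
  | succ n ih =>
    rw [tq, tq]
    have := (tq_pos hu n).le
    have := (tq_pos zero_le_one n).le
    gcongr

lemma tq_anti {u : ℝ} (hu : 0 ≤ u) (hu1 : u ≤ 1) (n : ℕ) : tq u (n + 2) ≤ tq u (n + 1) := by
  rw [tq]
  apply mul_le_of_le_one_right (tq_pos hu _).le
  rw [div_le_one (by positivity)]
  push_cast
  have : (0 : ℝ) ≤ n := by positivity
  linarith

/-- `tq u` with its initial entry lowered by `ε`. The gain `ε` only affects the weight of the first
logarithmic coefficient, and is what separates Koebe functions from the others. -/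
noncomputable def te (ε u : ℝ) (n : ℕ) : ℝ := if n = 0 then 1 - ε else tq u n

lemma te_succ (ε u : ℝ) (n : ℕ) : te ε u (n + 1) = tq u (n + 1) := by simp [te]

lemma te_zero (ε u : ℝ) : te ε u 0 = 1 - ε := by simp [te]

lemma xw_one_one (p : ℝ) : xw p 1 1 = p / 2 := by
  rw [xw_succ]; simp [xw_zero]

lemma xw_half_one_values :
    xw (1 / 2) 2 1 = 1 / 4 ∧ xw (1 / 2) 3 1 = 15 / 64 ∧ xw (1 / 2) 4 1 = 7 / 32 ∧
    xw (1 / 2) 5 1 = 105 / 512 ∧ xw (1 / 2) 6 1 = 99 / 512 ∧ xw (1 / 2) 7 1 = 3003 / 16384 ∧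
    xw (1 / 2) 8 1 = 715 / 4096 ∧ xw (1 / 2) 9 1 = 21879 / 131072 ∧
    xw (1 / 2) 10 1 = 20995 / 131072 := by
  have h1 : xw (1 / 2) 1 1 = 1 / 4 := by rw [xw_one_one]; norm_num
  have r := fun n : ℕ => xw_half_succ n 1
  have h2 := r 1
  have h3 := r 2
  have h4 := r 3
  have h5 := r 4
  have h6 := r 5
  have h7 := r 6
  have h8 := r 7
  have h9 := r 8
  have h10 := r 9
  norm_num at h1 h2 h3 h4 h5 h6 h7 h8 h9 h10 ⊢
  rw [h1] at h2
  have g2 : xw (1 / 2) 2 1 = 1 / 4 := by linarith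
  rw [g2] at h3
  have g3 : xw (1 / 2) 3 1 = 15 / 64 := by linarith
  rw [g3] at h4
  have g4 : xw (1 / 2) 4 1 = 7 / 32 := by linarith
  rw [g4] at h5
  have g5 : xw (1 / 2) 5 1 = 105 / 512 := by linarith
  rw [g5] at h6
  have g6 : xw (1 / 2) 6 1 = 99 / 512 := by linarith
  rw [g6] at h7
  have g7 : xw (1 / 2) 7 1 = 3003 / 16384 := by linarith
  rw [g7] at h8
  have g8 : xw (1 / 2) 8 1 = 715 / 4096 := by linarith
  rw [g8] at h9
  have g9 : xw (1 / 2) 9 1 = 21879 / 131072 := by linarith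
  rw [g9] at h10
  exact ⟨g2, g3, g4, g5, g6, g7, g8, g9, by linarith⟩

/-- By Abel summation this is `∑ (t n - t (n + 1)) * xw p (n + 1) k` over `n < N`, if `k ≠ 0`; it grows
with `N` as long as `t` decreases. -/
noncomputable def walkDefect (t : ℕ → ℝ) (p : ℝ) (k : ℤ) (N : ℕ) : ℝ :=
  ∑ n ∈ Finset.range N, t n * (xw p (n + 1) k - xw p n k) - t N * xw p N k

lemma walkDefect_succ (t : ℕ → ℝ) (p : ℝ) (k : ℤ) (N : ℕ) :
    walkDefect t p k (N + 1) = walkDefect t p k N + (t N - t (N + 1)) * xw p (N + 1) k := by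
  rw [walkDefect, walkDefect, Finset.sum_range_succ]; ring

lemma walkDefect_mono {ε u p : ℝ} (hu : 0 ≤ u) (hu1 : u ≤ 1) (h0 : 0 ≤ p) (h1 : p ≤ 1 / 2) (k : ℤ)
    (M N : ℕ) : walkDefect (te ε u) p k (M + 1) ≤ walkDefect (te ε u) p k (M + 1 + N) := by
  induction N with
  | zero => simp
  | succ N ih =>
    rw [← add_assoc, walkDefect_succ _ _ _ (M + 1 + N)]
    have h2 := xw_nonneg h0 (by linarith) (M + 1 + N + 1) k
    have h3 : 0 ≤ te ε u (M + 1 + N) - te ε u (M + 1 + N + 1) := by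
      rw [show M + 1 + N = (M + N) + 1 by ring, te_succ, te_succ]
      linarith [tq_anti hu hu1 (M + N)]
    have := mul_nonneg h3 h2
    linarith

/-- The only delicate sign: for `k = 1` the negative first increment is outweighed by the next nine
ones. -/
lemma walkDefect_ten {u p : ℝ} (hu : 0 ≤ u) (hu1 : u ≤ 1) (h0 : 0 ≤ p) (h1 : p ≤ 1 / 2) :
    0 ≤ walkDefect (te (1 / 200) u) p 1 10 := by
  have key : ∀ n : ℕ, (tq u (n + 1) - tq u (n + 2)) * (p / 2 * (4 * xw (1 / 2) (n + 2) 1)) ≤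
      (tq u (n + 1) - tq u (n + 2)) * xw p (n + 2) 1 := fun n =>
    mul_le_mul_of_nonneg_left (xw_one_ge h0 h1 _) (by linarith [tq_anti hu hu1 n])
  have hz : walkDefect (te (1 / 200) u) p 1 0 = 0 := by simp [walkDefect, xw_zero]
  have e : walkDefect (te (1 / 200) u) p 1 10 =
      (1 - 1 / 200 - tq u 1) * (p / 2) + (tq u 1 - tq u 2) * xw p 2 1 + (tq u 2 - tq u 3) * xw p 3 1 +
      (tq u 3 - tq u 4) * xw p 4 1 + (tq u 4 - tq u 5) * xw p 5 1 + (tq u 5 - tq u 6) * xw p 6 1 +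
      (tq u 6 - tq u 7) * xw p 7 1 + (tq u 7 - tq u 8) * xw p 8 1 + (tq u 8 - tq u 9) * xw p 9 1 +
      (tq u 9 - tq u 10) * xw p 10 1 := by
    simp only [walkDefect_succ, hz, te_succ, te_zero]
    norm_num [xw_one_one]
  obtain ⟨g2, g3, g4, g5, g6, g7, g8, g9, g10⟩ := xw_half_one_values
  have k0 := key 0
  have k1 := key 1
  have k2 := key 2
  have k3 := key 3
  have k4 := key 4
  have k5 := key 5
  have k6 := key 6
  have k7 := key 7
  have k8 := key 8
  simp only [zero_add, Nat.reduceAdd] at k0 k1 k2 k3 k4 k5 k6 k7 k8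
  rw [g2] at k0
  rw [g3] at k1
  rw [g4] at k2
  rw [g5] at k3
  rw [g6] at k4
  rw [g7] at k5
  rw [g8] at k6
  rw [g9] at k7
  rw [g10] at k8
  have m := tq_mono hu hu1
  have m1 := m 1
  have m2 := m 2
  have m3 := m 3
  have m4 := m 4
  have m5 := m 5
  have m6 := m 6
  have m7 := m 7
  have m8 := m 8
  have m9 := m 9
  have m10 := m 10
  norm_num [tq.eq_2 1, tq.eq_1 1] at m1 m2 m3 m4 m5 m6 m7 m8 m9 m10
  have hG : 0 ≤ (1 - 1 / 200 - tq u 1) + (tq u 1 - tq u 2) * (4 * (1 / 4)) +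
      (tq u 2 - tq u 3) * (4 * (15 / 64)) + (tq u 3 - tq u 4) * (4 * (7 / 32)) +
      (tq u 4 - tq u 5) * (4 * (105 / 512)) + (tq u 5 - tq u 6) * (4 * (99 / 512)) +
      (tq u 6 - tq u 7) * (4 * (3003 / 16384)) + (tq u 7 - tq u 8) * (4 * (715 / 4096)) +
      (tq u 8 - tq u 9) * (4 * (21879 / 131072)) + (tq u 9 - tq u 10) * (4 * (20995 / 131072)) := by
    linarith
  have hG2 := mul_nonneg hG (show 0 ≤ p / 2 by linarith)
  rw [e]
  linarith

/-- The weight system used for the main inequality. -/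
lemma weights_te {u : ℝ} (hu : 0 ≤ u) (hu1 : u ≤ 1) (N : ℕ) :
    Weights (N + 10) (aw (N + 10) (te (1 / 200) u)) (tw (N + 10) (te (1 / 200) u)) := by
  have hpos : ∀ n, 0 ≤ te (1 / 200) u n := by
    intro n
    rcases n with _ | n
    · rw [te_zero]; norm_num
    · rw [te_succ]; exact (tq_pos hu _).le
  apply weights_of_walk hpos
  intro k p h0 h1
  have hx := mul_nonneg (hpos (N + 10)) (xw_nonneg h0 (by linarith) (N + 10) (k + 1))
  suffices h : 0 ≤ walkDefect (te (1 / 200) u) p (k + 1) (N + 10) by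
    rw [walkDefect] at h; linarith
  rcases k with _ | k
  · have h2 := walkDefect_mono (ε := 1 / 200) hu hu1 h0 h1 1 9 N
    have h3 := walkDefect_ten hu hu1 h0 h1
    rw [Nat.cast_zero, zero_add, add_comm N 10]
    linarith
  · have h2 := walkDefect_mono (ε := 1 / 200) hu hu1 h0 h1 ((k + 1 : ℕ) + 1) 0 (N + 9)
    rw [show 0 + 1 + (N + 9) = N + 10 by ring] at h2
    have h3 : walkDefect (te (1 / 200) u) p ((k + 1 : ℕ) + 1) (0 + 1) = 0 := by
      have e1 : xw p 1 ((k + 1 : ℕ) + 1) = 0 := xw_eq_zero _ _ _ (by push_cast; omega)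
      have e0 : xw p 0 ((k + 1 : ℕ) + 1) = 0 := xw_eq_zero _ _ _ (by push_cast; omega)
      rw [walkDefect]
      simp only [zero_add, Finset.sum_range_one, e1, e0]
      ring
    linarith

/-- The weight system with a single weight, giving the bound for the first coefficient. -/
lemma weights_one : Weights 1 (aw 1 (fun _ => 1)) (tw 1 (fun _ => 1)) := by
  apply weights_of_walk (fun _ => zero_le_one)
  intro k p h0 h1
  have := xw_nonneg h0 (by linarith) 1 (k + 1)
  have e0 : xw p 0 (k + 1) = 0 := xw_eq_zero _ _ _ (by push_cast; omega)
  simp only [Finset.sum_range_one, zero_add, e0]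
  linarith

/-! ### The weights at the initial time -/

lemma tq_succ_mul (u : ℝ) (n : ℕ) :
    tq u (n + 1) * ((n + 1 : ℝ) + 1 / 2) = tq u n * (((n + 1) ^ 2 + u) / (n + 1)) := by
  rw [tq]
  have h1 : (n : ℝ) + 1 ≠ 0 := by positivity
  have h2 : (n : ℝ) + 3 / 2 ≠ 0 := by positivity
  field_simp
  ring

/-- The choice of `tq` makes this sum telescope. -/
lemma sum_tq (u : ℝ) (N k : ℕ) :
    (((k + 1 : ℕ) : ℝ) ^ 2 + u) * ∑ n ∈ Finset.range N, tq u n * (xw (1 / 2) (n + 1) (k + 1 : ℕ) / (n + 1))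
      = tq u N * (N + 1 / 2) * xw (1 / 2) N (k + 1 : ℕ) := by
  induction N with
  | zero =>
    rw [xw_eq_zero _ _ _ (by push_cast; omega)]; simp
  | succ N ih =>
    rw [Finset.sum_range_succ, mul_add, ih]
    have h1 := tq_succ_mul u N
    have h2 := xw_half_succ N (k + 1 : ℕ)
    have hn : (N : ℝ) + 1 ≠ 0 := by positivity
    push_cast at h1 h2 ⊢
    rw [h1]
    field_simp
    linear_combination (-2 * tq u N) * h2

/-- The product `(1 / 2) * ∏ (1 + u / j ^ 2)` over `1 ≤ j ≤ N`, which normalizes the weights. -/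
noncomputable def Lq (u : ℝ) (N : ℕ) : ℝ := tq u N * (N + 1 / 2) * xw (1 / 2) N 0

lemma Lq_zero (u : ℝ) : Lq u 0 = 1 / 2 := by simp [Lq, tq, xw_zero]

lemma Lq_succ (u : ℝ) (N : ℕ) : Lq u (N + 1) = Lq u N * (1 + u / (N + 1) ^ 2) := by
  have h1 := tq_succ_mul u N
  have h2 := xw_half_succ N 0
  have hn : (N : ℝ) + 1 ≠ 0 := by positivity
  have h3 : xw (1 / 2) (N + 1) 0 = (N + 1 / 2) / (N + 1) * xw (1 / 2) N 0 := by
    field_simp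
    push_cast at h2
    have : (N + 1 : ℝ) * ((N + 1) * xw (1 / 2) (N + 1) 0) = (N + 1) * ((N + 1 / 2) * xw (1 / 2) N 0) := by
      linarith
    have := mul_left_cancel₀ hn this
    linarith
  rw [Lq, Lq]
  push_cast
  rw [h1, h3]
  field_simp

lemma Lq_pos {u : ℝ} (hu : 0 ≤ u) (N : ℕ) : 0 < Lq u N := by
  have := tq_pos hu N
  have := xw_half_zero_pos N
  rw [Lq]; positivity

lemma Lq_le {u : ℝ} (hu : 0 ≤ u) (hu1 : u ≤ 1) (N : ℕ) : Lq u (N + 1) ≤ 2 * (N + 1) / (N + 2) := by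
  induction N with
  | zero =>
    rw [Lq_succ, Lq_zero]; norm_num; linarith
  | succ N ih =>
    rw [Lq_succ]
    have h1 : 1 + u / (((N + 1 : ℕ) : ℝ) + 1) ^ 2 ≤ ((N : ℝ) + 2) ^ 2 / ((N + 1) * (N + 3)) := by
      push_cast
      have : u / ((N : ℝ) + 1 + 1) ^ 2 ≤ 1 / ((N : ℝ) + 1 + 1) ^ 2 := by gcongr
      refine le_trans (add_le_add_right this 1) ?_
      rw [show (1 : ℝ) + 1 / (N + 1 + 1) ^ 2 = ((N + 2) ^ 2 + 1) / (N + 2) ^ 2 by field_simp; ring]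
      rw [div_le_div_iff₀ (by positivity) (by positivity)]
      nlinarith [show (0 : ℝ) ≤ N by positivity]
    refine le_trans (mul_le_mul ih h1 (by positivity) (by positivity)) (le_of_eq ?_)
    push_cast
    field_simp
    ring

lemma Lq_le_two {u : ℝ} (hu : 0 ≤ u) (hu1 : u ≤ 1) (N : ℕ) : Lq u (N + 1) ≤ 2 := by
  refine (Lq_le hu hu1 N).trans ?_
  rw [div_le_iff₀ (by positivity)]
  linarith

lemma tw_te (ε u : ℝ) (hu : 0 ≤ u) (N k : ℕ) :
    tw (N + 1) (te ε u) (k + 1) 0 =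
      (k + 1) / ((k + 1) ^ 2 + u) * Lq u (N + 1) * (xw (1 / 2) (N + 1) (k + 1 : ℕ) / xw (1 / 2) (N + 1) 0)
        - if k = 0 then ε / 4 else 0 := by
  have h1 := sum_tq u (N + 1) k
  have hx := (xw_half_zero_pos (N + 1)).ne'
  have hk : ((k : ℝ) + 1) ^ 2 + u ≠ 0 := by positivity
  have h2 : tw (N + 1) (tq u) (k + 1) 0 = (k + 1) / ((k + 1) ^ 2 + u) * Lq u (N + 1) *
      (xw (1 / 2) (N + 1) (k + 1 : ℕ) / xw (1 / 2) (N + 1) 0) := by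
    have e : tw (N + 1) (tq u) (k + 1) 0 = (k + 1) * ∑ n ∈ Finset.range (N + 1), tq u n *
        (xw (1 / 2) (n + 1) (k + 1 : ℕ) / (n + 1)) := by
      rw [tw, Finset.mul_sum]
      apply Finset.sum_congr rfl
      intro n _
      rw [neg_zero, Real.exp_zero]
      push_cast
      ring
    rw [e, Lq]
    have h3 := eq_div_of_mul_eq (by push_cast; exact hk) ((mul_comm _ _).trans h1)
    rw [h3]
    push_cast
    field_simp
  rw [← h2, tw, tw, Finset.sum_range_succ', Finset.sum_range_succ']
  simp only [te_succ, te_zero, tq.eq_1, neg_zero, Real.exp_zero]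
  have h4 : ((k + 1 : ℕ) : ℝ) * xw (1 / 2) (0 + 1) (k + 1 : ℕ) / ((0 : ℕ) + 1) = if k = 0 then 1 / 4 else 0 := by
    rcases k with _ | k
    · norm_num [xw_one_one]
    · rw [xw_eq_zero _ _ _ (by push_cast; omega)]; simp
  rw [h4]
  split_ifs <;> ring

/-- Dividing the weighted inequalities by `4 * Lq u N` and letting `N → ∞`. -/
lemma limit_ineq {u : ℝ} (hu : 0 ≤ u) (hu1 : u ≤ 1) {c : ℕ → ℝ} (hc : ∀ k, 0 ≤ c k) (hc1 : c 1 ≤ 1)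
    (H : ∀ N : ℕ, ∑ i ∈ Finset.range (N + 10), tw (N + 10) (te (1 / 200) u) (i + 1) 0 *
      ((i + 1 : ℕ) * (4 * c (i + 1)) - 4 / (i + 1 : ℕ)) ≤ 0)
    (hS : Summable fun i : ℕ => 1 / (((i : ℝ) + 1) ^ 2 + u)) (K : ℕ) :
    ∑ i ∈ Finset.range K, (((i : ℝ) + 1) ^ 2 / (((i : ℝ) + 1) ^ 2 + u)) * c (i + 1) ≤
      ∑' i : ℕ, 1 / (((i : ℝ) + 1) ^ 2 + u) - 1 / 1600 * (1 - c 1) := by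
  set r : ℕ → ℕ → ℝ := fun M i => xw (1 / 2) M (i + 1 : ℕ) / xw (1 / 2) M 0 with hr
  have hr0 : ∀ M i, 0 ≤ r M i := fun M i =>
    div_nonneg (xw_nonneg (by norm_num) (by norm_num) _ _) (xw_half_zero_pos M).le
  have hr1 : ∀ M i, r M i ≤ 1 := fun M i =>
    (div_le_one (xw_half_zero_pos M)).2 (xw_half_le_zero M (i + 1))
  have step : ∀ N : ℕ, K ≤ N → ∑ i ∈ Finset.range K,
      r (N + 10) i * ((((i : ℝ) + 1) ^ 2 / (((i : ℝ) + 1) ^ 2 + u)) * c (i + 1)) ≤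
      ∑' i : ℕ, 1 / (((i : ℝ) + 1) ^ 2 + u) - 1 / 1600 * (1 - c 1) := by
    intro N hN
    have hL := Lq_pos hu (N + 10)
    have hL2 : Lq u (N + 10) ≤ 2 := Lq_le_two hu hu1 (N + 9)
    have h1 := H N
    have h2 : ∑ i ∈ Finset.range (N + 10), tw (N + 10) (te (1 / 200) u) (i + 1) 0 *
        ((i + 1 : ℕ) * (4 * c (i + 1)) - 4 / (i + 1 : ℕ)) =
        4 * Lq u (N + 10) * (∑ i ∈ Finset.range (N + 10), r (N + 10) i *
          ((((i : ℝ) + 1) ^ 2 / (((i : ℝ) + 1) ^ 2 + u)) * c (i + 1)) -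
          ∑ i ∈ Finset.range (N + 10), r (N + 10) i * (1 / (((i : ℝ) + 1) ^ 2 + u)))
        + 1 / 200 * (1 - c 1) := by
      have h3 : ∑ i ∈ Finset.range (N + 10), (if i = 0 then 1 / 200 * (1 - c 1) else 0)
          = 1 / 200 * (1 - c 1) := by
        rw [Finset.sum_ite_eq' (Finset.range (N + 10)) 0, if_pos (by simp)]
      rw [← h3, ← Finset.sum_sub_distrib, Finset.mul_sum, ← Finset.sum_add_distrib]
      apply Finset.sum_congr rfl
      intro i _
      rw [tw_te _ _ hu (N + 9) i]
      change (_ * Lq u (N + 10) * r (N + 10) i - _) * _ = _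
      have hi : ((i : ℝ) + 1) ^ 2 + u ≠ 0 := by positivity
      have hi' : (i : ℝ) + 1 ≠ 0 := by positivity
      push_cast
      by_cases h0 : i = 0
      · subst h0
        norm_num at hi ⊢
        field_simp
        ring
      · rw [if_neg h0, if_neg h0]
        field_simp
        ring
    rw [h2] at h1
    set A := ∑ i ∈ Finset.range (N + 10), r (N + 10) i *
          ((((i : ℝ) + 1) ^ 2 / (((i : ℝ) + 1) ^ 2 + u)) * c (i + 1)) with hA
    set B := ∑ i ∈ Finset.range (N + 10), r (N + 10) i * (1 / (((i : ℝ) + 1) ^ 2 + u)) with hB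
    have h4 : A - B ≤ -(1 / 1600 * (1 - c 1)) := by
      by_contra! h
      have h5 : 4 * Lq u (N + 10) * (-(1 / 1600 * (1 - c 1))) < 4 * Lq u (N + 10) * (A - B) :=
        mul_lt_mul_of_pos_left h (by linarith)
      have h6 : 0 ≤ (2 - Lq u (N + 10)) * (1 - c 1) := mul_nonneg (by linarith) (by linarith)
      linarith
    have h5 : B ≤ ∑' i : ℕ, 1 / (((i : ℝ) + 1) ^ 2 + u) := by
      refine le_trans (Finset.sum_le_sum fun i _ => ?_) (hS.sum_le_tsum (Finset.range (N + 10))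
        fun i _ => by positivity)
      exact mul_le_of_le_one_left (by positivity) (hr1 _ _)
    have h6 : ∑ i ∈ Finset.range K,
        r (N + 10) i * ((((i : ℝ) + 1) ^ 2 / (((i : ℝ) + 1) ^ 2 + u)) * c (i + 1)) ≤ A := by
      apply Finset.sum_le_sum_of_subset_of_nonneg
      · intro i hi
        rw [Finset.mem_range] at hi ⊢
        omega
      · intro i _ _
        have := hr0 (N + 10) i
        have := hc (i + 1)
        positivity
    linarith
  have lim : Tendsto (fun N : ℕ => ∑ i ∈ Finset.range K,
      r (N + 10) i * ((((i : ℝ) + 1) ^ 2 / (((i : ℝ) + 1) ^ 2 + u)) * c (i + 1))) atTop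
      (𝓝 (∑ i ∈ Finset.range K, 1 * ((((i : ℝ) + 1) ^ 2 / (((i : ℝ) + 1) ^ 2 + u)) * c (i + 1)))) := by
    apply tendsto_finsetSum
    intro i _
    exact ((xw_half_tendsto (i + 1)).comp (tendsto_add_atTop_nat 10)).mul_const _
  simp only [one_mul] at lim
  exact le_of_tendsto lim (by filter_upwards [eventually_ge_atTop K] with N hN using step N hN)

/-! ### The right-hand side as a series -/

lemma hasSum_coth {α : ℝ} (hα : 0 < α) :
    HasSum (fun n : ℕ => 1 / (((n : ℝ) + 1) ^ 2 + α ^ 2))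
      ((Real.pi * α * (Real.cosh (Real.pi * α) / Real.sinh (Real.pi * α)) - 1) / (2 * α ^ 2)) := by
  have hz : ((α : ℂ) * I) ∈ Complex.integerComplement :=
    UpperHalfPlane.coe_mem_integerComplement ⟨α * I, by simpa using hα⟩
  have h1 := (summable_cotTerm hz).hasSum
  have h2 := cot_series_rep' hz
  simp only [cotTerm] at h1
  rw [← h2] at h1
  have hαc : (α : ℂ) ≠ 0 := by exact_mod_cast hα.ne'
  have hs : Complex.sinh (Real.pi * α) ≠ 0 := by
    have : Real.sinh (Real.pi * α) ≠ 0 := (Real.sinh_pos_iff.2 (by positivity)).ne'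
    exact_mod_cast this
  rw [← Complex.hasSum_ofReal]
  have h3 := h1.mul_left (I / (2 * α))
  have e1 : ∀ n : ℕ, I / (2 * α) * (1 / ((α : ℂ) * I - (n + 1)) + 1 / ((α : ℂ) * I + (n + 1))) =
      ((1 / (((n : ℝ) + 1) ^ 2 + α ^ 2) : ℝ) : ℂ) := by
    intro n
    have i1 : (α : ℂ) * I + (n + 1) ≠ 0 := by
      intro h; have := congrArg Complex.im h; simp at this; exact hα.ne' this
    have i2 : (α : ℂ) * I - (n + 1) ≠ 0 := by
      intro h; have := congrArg Complex.im h; simp at this; exact hα.ne' this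
    have i3 : ((n : ℂ) + 1) ^ 2 + α ^ 2 ≠ 0 := by
      have : (((n : ℝ) + 1) ^ 2 + α ^ 2) ≠ 0 := by positivity
      exact_mod_cast this
    rw [div_add_div _ _ i2 i1,
      show ((α : ℂ) * I - (n + 1)) * ((α : ℂ) * I + (n + 1)) = -((n + 1 : ℂ) ^ 2 + α ^ 2) by
        linear_combination (α : ℂ) ^ 2 * Complex.I_sq,
      show (1 : ℂ) * ((α : ℂ) * I + (n + 1)) + ((α : ℂ) * I - (n + 1)) * 1 = 2 * α * I by ring]
    push_cast
    field_simp
    linear_combination -Complex.I_sq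
  have e2 : I / (2 * α) * (Real.pi * Complex.cot (Real.pi * (α * I)) - 1 / ((α : ℂ) * I)) =
      (((Real.pi * α * (Real.cosh (Real.pi * α) / Real.sinh (Real.pi * α)) - 1) / (2 * α ^ 2) : ℝ) : ℂ) := by
    rw [Complex.cot_eq_cos_div_sin, show (Real.pi : ℂ) * (α * I) = (Real.pi * α) * I by ring,
      Complex.cos_mul_I, Complex.sin_mul_I]
    push_cast
    field_simp
  rw [e2] at h3
  exact h3.congr_fun fun n => (e1 n).symm

/-! ### Integration over annuli -/

/-- Integration over an annulus as iterated circle averages. -/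
lemma integral_annulus {f : ℂ → ℝ} {r ρ : ℝ} (hr : 0 < r) (hρ : r ≤ ρ)
    (hf : ContinuousOn f {z | r ≤ ‖z‖ ∧ ‖z‖ ≤ ρ}) :
    ∫ z in {z : ℂ | r < ‖z‖ ∧ ‖z‖ < ρ}, f z =
      ∫ t in r..ρ, t * (2 * Real.pi * circleAverage f 0 t) := by
  have hA : MeasurableSet {z : ℂ | r < ‖z‖ ∧ ‖z‖ < ρ} :=
    (measurableSet_lt measurable_const measurable_norm).inter
      (measurableSet_lt measurable_norm measurable_const)
  rw [← MeasureTheory.integral_indicator hA, ← Complex.integral_comp_polarCoord_symm]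
  have hsub : Ioo r ρ ×ˢ Ioo (-Real.pi) Real.pi ⊆ polarCoord.target := by
    rintro ⟨t, θ⟩ ⟨ht, hθ⟩
    exact ⟨hr.trans ht.1, hθ⟩
  have hS : MeasurableSet (Ioo r ρ ×ˢ Ioo (-Real.pi) Real.pi) := measurableSet_Ioo.prod measurableSet_Ioo
  have e1 : ∫ p in polarCoord.target, p.1 • ({z : ℂ | r < ‖z‖ ∧ ‖z‖ < ρ}.indicator f)
      (Complex.polarCoord.symm p) =
      ∫ p in Ioo r ρ ×ˢ Ioo (-Real.pi) Real.pi, p.1 * f (circleMap 0 p.1 p.2) := by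
    rw [← MeasureTheory.integral_indicator hS,
      ← MeasureTheory.integral_indicator polarCoord.open_target.measurableSet]
    congr 1
    ext p
    by_cases hp : p ∈ polarCoord.target
    · have h0 : 0 < p.1 := hp.1
      have hn : ‖Complex.polarCoord.symm p‖ = p.1 := by
        rw [Complex.norm_polarCoord_symm, abs_of_pos h0]
      have hcm : Complex.polarCoord.symm p = circleMap 0 p.1 p.2 := by
        rw [Complex.polarCoord_symm_apply, circleMap, Complex.exp_mul_I]
        push_cast; ring
      rw [indicator_of_mem hp]
      by_cases hq : p ∈ Ioo r ρ ×ˢ Ioo (-Real.pi) Real.pi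
      · rw [indicator_of_mem hq, indicator_of_mem, hcm, smul_eq_mul]
        change r < ‖_‖ ∧ ‖_‖ < ρ
        rw [hn]; exact hq.1
      · rw [indicator_of_notMem hq, indicator_of_notMem, smul_zero]
        intro h
        change r < ‖_‖ ∧ ‖_‖ < ρ at h
        rw [hn] at h
        exact hq ⟨h, hp.2⟩
    · rw [indicator_of_notMem hp, indicator_of_notMem (fun h => hp (hsub h))]
  rw [e1]
  have hcont : ContinuousOn (fun p : ℝ × ℝ => p.1 * f (circleMap 0 p.1 p.2))
      (Icc r ρ ×ˢ Icc (-Real.pi) Real.pi) := by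
    refine continuousOn_fst.mul (hf.comp (Continuous.continuousOn (by unfold circleMap; fun_prop)) ?_)
    rintro ⟨t, θ⟩ ⟨ht, -⟩
    have : ‖circleMap 0 t θ‖ = t := by
      rw [norm_circleMap_zero, abs_of_pos (hr.trans_le ht.1)]
    change r ≤ ‖_‖ ∧ ‖_‖ ≤ ρ
    rw [this]; exact ht
  have hInt : MeasureTheory.IntegrableOn (fun p : ℝ × ℝ => p.1 * f (circleMap 0 p.1 p.2))
      (Ioo r ρ ×ˢ Ioo (-Real.pi) Real.pi) :=
    (hcont.integrableOn_compact (isCompact_Icc.prod isCompact_Icc)).mono_set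
      (prod_mono Ioo_subset_Icc_self Ioo_subset_Icc_self)
  rw [MeasureTheory.Measure.volume_eq_prod] at hInt ⊢
  rw [MeasureTheory.setIntegral_prod _ hInt, intervalIntegral.integral_of_le hρ,
    MeasureTheory.integral_Ioc_eq_integral_Ioo]
  refine MeasureTheory.setIntegral_congr_fun measurableSet_Ioo fun t _ => ?_
  simp only
  rw [MeasureTheory.integral_const_mul, ← MeasureTheory.integral_Ioc_eq_integral_Ioo,
    ← intervalIntegral.integral_of_le (by linarith [Real.pi_pos]),
    circleAverage_eq_integral_add (-Real.pi),
    intervalIntegral.integral_comp_add_right (fun θ => f (circleMap 0 t θ))]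
  have : (2 * Real.pi : ℝ) ≠ 0 := by positivity
  rw [smul_eq_mul, mul_inv_cancel_left₀ this]
  congr 2 <;> ring

/-! ### The area inequality -/

/-- The real determinant of `w ↦ c w + d w̄` is `|c|² - |d|²`. -/
lemma det_conj_linear (c d : ℂ) :
    ((c • (1 : ℂ →L[ℝ] ℂ) + d • (Complex.conjCLE : ℂ →L[ℝ] ℂ)) : ℂ →L[ℝ] ℂ).det
      = ‖c‖ ^ 2 - ‖d‖ ^ 2 := by
  rw [ContinuousLinearMap.det, ← LinearMap.det_toMatrix Complex.basisOneI, Matrix.det_fin_two]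
  simp [LinearMap.toMatrix_apply, Complex.sq_norm, Complex.normSq_apply]
  ring

/-- Area bound for the image of an annulus under the injective real-linear twist `ψ - d ψ̄` of an
injective holomorphic map `ψ`. -/
lemma area_le {ψ ψ' : ℂ → ℂ} {r ρ M : ℝ} {d : ℂ} (hd : ‖d‖ < 1)
    (hψ : ∀ z : ℂ, r < ‖z‖ → ‖z‖ < ρ → HasDerivAt ψ (ψ' z) z)
    (hc : ContinuousOn ψ' {z | r ≤ ‖z‖ ∧ ‖z‖ ≤ ρ})
    (hi : InjOn ψ {z | r < ‖z‖ ∧ ‖z‖ < ρ}) (hM : 0 ≤ M)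
    (hb : ∀ z : ℂ, r < ‖z‖ → ‖z‖ < ρ → ‖ψ z - d * (starRingEnd ℂ) (ψ z)‖ ≤ M) :
    ∫ z in {z : ℂ | r < ‖z‖ ∧ ‖z‖ < ρ}, (1 - ‖d‖ ^ 2) * ‖ψ' z‖ ^ 2 ≤ Real.pi * M ^ 2 := by
  set A : Set ℂ := {z : ℂ | r < ‖z‖ ∧ ‖z‖ < ρ} with hAdef
  have hA : MeasurableSet A :=
    (measurableSet_lt measurable_const measurable_norm).inter
      (measurableSet_lt measurable_norm measurable_const)
  have hcpt : IsCompact {z : ℂ | r ≤ ‖z‖ ∧ ‖z‖ ≤ ρ} := by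
    refine (isCompact_closedBall (0 : ℂ) ρ).of_isClosed_subset ?_ ?_
    · exact (isClosed_le continuous_const continuous_norm).inter
        (isClosed_le continuous_norm continuous_const)
    · intro z hz; simpa using hz.2
  have hd2 : 0 ≤ 1 - ‖d‖ ^ 2 := by nlinarith [norm_nonneg d]
  set h : ℂ → ℂ := fun z => ψ z - d * (starRingEnd ℂ) (ψ z) with hh
  set h' : ℂ → ℂ →L[ℝ] ℂ := fun z =>
    (ψ' z) • (1 : ℂ →L[ℝ] ℂ) + (-(d * (starRingEnd ℂ) (ψ' z))) • (Complex.conjCLE : ℂ →L[ℝ] ℂ)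
  have hder : ∀ z ∈ A, HasFDerivWithinAt h (h' z) A z := by
    intro z hz
    have h1 := (hψ z hz.1 hz.2).complexToReal_fderiv
    have h2 : HasFDerivAt (fun z => (starRingEnd ℂ) (ψ z))
        ((Complex.conjCLE : ℂ →L[ℝ] ℂ).comp (ψ' z • (1 : ℂ →L[ℝ] ℂ))) z :=
      (Complex.conjCLE : ℂ →L[ℝ] ℂ).hasFDerivAt.comp z h1
    have h3 := (h1.fun_sub (h2.const_mul d)).hasFDerivWithinAt (s := A)
    refine h3.congr_fderiv ?_
    ext w
    · simp [h']; ring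
  have hinj : InjOn h A := by
    intro x hx y hy hxy
    apply hi hx hy
    by_contra hne
    have hsub : ψ x - ψ y = d * (starRingEnd ℂ) (ψ x - ψ y) := by
      simp only [hh] at hxy
      rw [map_sub]
      linear_combination hxy
    have h1 : ‖ψ x - ψ y‖ = ‖d‖ * ‖ψ x - ψ y‖ := by
      conv_lhs => rw [hsub]
      rw [norm_mul, RCLike.norm_conj]
    have h2 : 0 < ‖ψ x - ψ y‖ := norm_pos_iff.2 (sub_ne_zero.2 hne)
    nlinarith
  have hdet : ∀ z, |(h' z).det| = (1 - ‖d‖ ^ 2) * ‖ψ' z‖ ^ 2 := by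
    intro z
    have : (h' z).det = (1 - ‖d‖ ^ 2) * ‖ψ' z‖ ^ 2 := by
      rw [det_conj_linear, norm_neg, norm_mul, RCLike.norm_conj]; ring
    rw [this, abs_of_nonneg (by positivity)]
  have key := MeasureTheory.lintegral_abs_det_fderiv_eq_addHaar_image MeasureTheory.volume hA hder hinj
  simp_rw [hdet] at key
  have himg : h '' A ⊆ closedBall 0 M := by
    rintro _ ⟨z, hz, rfl⟩
    simpa using hb z hz.1 hz.2
  have hvol : MeasureTheory.volume (h '' A) ≤ ENNReal.ofReal (Real.pi * M ^ 2) := by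
    refine (MeasureTheory.measure_mono himg).trans ?_
    rw [Complex.volume_closedBall, mul_comm Real.pi, ENNReal.ofReal_mul (by positivity),
      ENNReal.ofReal_pow hM]
    gcongr
    rw [← NNReal.coe_real_pi, ENNReal.ofReal_coe_nnreal]
  have hInt : MeasureTheory.IntegrableOn (fun z => (1 - ‖d‖ ^ 2) * ‖ψ' z‖ ^ 2) A := by
    have : ContinuousOn (fun z => (1 - ‖d‖ ^ 2) * ‖ψ' z‖ ^ 2) {z : ℂ | r ≤ ‖z‖ ∧ ‖z‖ ≤ ρ} :=
      continuousOn_const.mul (hc.norm.pow 2)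
    exact (this.integrableOn_compact hcpt).mono_set fun z hz => ⟨hz.1.le, hz.2.le⟩
  rw [← key, ← MeasureTheory.ofReal_integral_eq_lintegral_ofReal hInt
    (Eventually.of_forall fun z => by positivity)] at hvol
  exact (ENNReal.ofReal_le_ofReal_iff (by positivity)).1 hvol

lemma cf_deriv (F : ℂ → ℂ) (n : ℕ) : cf n (deriv F) = (n + 1) * cf (n + 1) F := by
  rw [cf, cf, iteratedDeriv_succ', Nat.factorial_succ]
  have : (n.factorial : ℂ) ≠ 0 := by exact_mod_cast n.factorial_ne_zero
  have h2 : (n : ℂ) + 1 ≠ 0 := by exact_mod_cast n.succ_ne_zero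
  push_cast
  field_simp

lemma diffOn_deriv {F : ℂ → ℂ} (hF : DifferentiableOn ℂ F (ball 0 1)) :
    DifferentiableOn ℂ (deriv F) (ball 0 1) := hF.deriv isOpen_ball

/-- The Taylor coefficients of `z q' - q`, the numerator of `(q / z)'`. -/
lemma cf_numerator {q : ℂ → ℂ} (hq : DifferentiableOn ℂ q (ball 0 1)) (n : ℕ) :
    cf n (fun z => z * deriv q z - q z) = ((n : ℂ) - 1) * cf n q := by
  have h1 : DifferentiableOn ℂ (fun z => z ^ 1 * deriv q z) (ball 0 1) :=
    (differentiableOn_id.pow 1).mul (diffOn_deriv hq)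
  have h2 : DifferentiableOn ℂ (fun z => (-1 : ℂ) * q z) (ball 0 1) := hq.const_mul _
  have e : cf n (fun z => z * deriv q z - q z) =
      cf n (fun z => (fun z => z ^ 1 * deriv q z) z + (fun z => (-1 : ℂ) * q z) z) := by
    congr 1; ext z; ring
  rw [e, cf_add h1 h2, cf_const_mul hq, cf_pow_mul (diffOn_deriv hq) n 1]
  rcases n with _ | n
  · simp
  · simp [cf_deriv]; ring

lemma cf_trinomial (a b c : ℂ) (m n : ℕ) :
    cf n (fun z => a + b * z ^ 2 + c * z ^ (m + 3)) =
      (if n = 0 then a else 0) + (if n = 2 then b else 0) + (if n = m + 3 then c else 0) := by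
  have hm : ∀ (j : ℕ) (x : ℂ), cf n (fun z => z ^ j * x) = if n = j then x else 0 := by
    intro j x
    have := cf_pow_mul (F := fun _ => x) (differentiableOn_const x) n j
    rw [this, cf_const]
    by_cases h : j ≤ n
    · rw [if_pos h]
      by_cases h2 : n = j
      · simp [h2]
      · rw [if_neg h2, if_neg (by omega)]
    · rw [if_neg h, if_neg (by omega)]
  have d : ∀ (j : ℕ) (x : ℂ), DifferentiableOn ℂ (fun z : ℂ => z ^ j * x) (ball 0 1) := by
    intro j x; fun_prop
  have e : (fun z : ℂ => a + b * z ^ 2 + c * z ^ (m + 3)) =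
      fun z => (fun z => (fun z : ℂ => z ^ 0 * a) z + (fun z : ℂ => z ^ 2 * b) z) z +
        (fun z : ℂ => z ^ (m + 3) * c) z := by
    ext z; simp only; ring
  rw [e, cf_add ((d 0 a).fun_add (d 2 b)) (d _ c), cf_add (d 0 a) (d 2 b), hm, hm, hm]

/-- Mean over a circle of the polarised lower bound for `|W / z²|²`, where `P` consists of three
terms of the Laurent series of `W / z²`. -/
lemma circleAverage_polarised {W : ℂ → ℂ} (hW : DifferentiableOn ℂ W (ball 0 1)) {b c : ℂ} {m : ℕ}
    (h0 : cf 0 W = -1) (h2 : cf 2 W = b) (hc : cf (m + 3) W = c) {t : ℝ} (ht : 0 < t) (ht1 : t < 1) :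
    circleAverage (fun z => ((2 * W z - (-1 + b * z ^ 2 + c * z ^ (m + 3))) * (z⁻¹) ^ 2 *
      (starRingEnd ℂ) ((-1 + b * z ^ 2 + c * z ^ (m + 3)) * (z⁻¹) ^ 2)).re) 0 t =
      1 / t ^ 4 + ‖b‖ ^ 2 + ‖c‖ ^ 2 * t ^ (2 * (m + 1)) := by
  set V : ℂ → ℂ := fun z => 2 * W z + (1 + (-b) * z ^ 2 + (-c) * z ^ (m + 3)) with hV
  have dV : DifferentiableOn ℂ V (ball 0 1) := by
    refine (hW.const_mul 2).add ?_
    fun_prop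
  have cV : ∀ n, cf n V = 2 * cf n W + ((if n = 0 then 1 else 0) + (if n = 2 then -b else 0) +
      (if n = m + 3 then -c else 0)) := by
    intro n
    have := cf_add (F := fun z => 2 * W z) (G := fun z => 1 + (-b) * z ^ 2 + (-c) * z ^ (m + 3))
      (hW.const_mul 2) (by fun_prop) n
    rw [hV, this, cf_const_mul hW, cf_trinomial]
  have tc : (t : ℂ) ≠ 0 := by exact_mod_cast ht.ne'
  set G : ℕ → ℂ → ℂ := fun n z => V z * (z⁻¹) ^ n with hG
  have iG : ∀ n, CircleIntegrable (G n) 0 t := fun n => circleIntegrable_coeff dV ht ht1 n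
  have aG : ∀ n, circleAverage (G n) 0 t = cf n V := fun n => circleAverage_eq_cf dV ht ht1 n
  set T : ℂ → ℂ := fun z => (-(1 / (t : ℂ) ^ 4)) * G 0 z + (starRingEnd ℂ b) * G 2 z +
    ((starRingEnd ℂ c) * (t : ℂ) ^ (2 * (m + 1))) * G (m + 3) z with hT
  have i1 : ∀ (x : ℂ) n, CircleIntegrable (x • G n) 0 t := fun x n => (iG n).const_smul
  have iT : T = (-(1 / (t : ℂ) ^ 4)) • G 0 + (starRingEnd ℂ b) • G 2 +
      ((starRingEnd ℂ c) * (t : ℂ) ^ (2 * (m + 1))) • G (m + 3) := by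
    ext z; simp [hT]
  have aT : circleAverage T 0 t = ((1 / t ^ 4 + ‖b‖ ^ 2 + ‖c‖ ^ 2 * t ^ (2 * (m + 1)) : ℝ) : ℂ) := by
    rw [iT, circleAverage_add ((i1 _ _).add (i1 _ _)) (i1 _ _), circleAverage_add (i1 _ _) (i1 _ _),
      circleAverage_smul, circleAverage_smul, circleAverage_smul, aG, aG, aG, cV, cV, cV, h0, h2, hc]
    have e1 : ¬ (0 = m + 3) := by omega
    have e2 : ¬ (2 = m + 3) := by omega
    have e3 : ¬ (m + 3 = 2) := by omega
    have e4 : ¬ (m + 3 = 0) := by omega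
    simp only [if_neg e1, if_neg e2, if_neg e3, if_neg e4, smul_eq_mul]
    push_cast
    rw [← Complex.conj_mul' b, ← Complex.conj_mul' c]
    simp
    ring
  have cT : CircleIntegrable T 0 t := by
    rw [iT]; exact ((i1 _ _).add (i1 _ _)).add (i1 _ _)
  have hre : circleAverage (fun z => (T z).re) 0 t = (circleAverage T 0 t).re :=
    ContinuousLinearMap.circleAverage_comp_comm Complex.reCLM cT
  rw [aT, Complex.ofReal_re] at hre
  rw [← hre]
  refine circleAverage_congr_sphere fun z hz => ?_
  rw [abs_of_pos ht, mem_sphere_zero_iff_norm] at hz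
  have hz0 : z ≠ 0 := by rw [← norm_pos_iff, hz]; exact ht
  have hcz : (starRingEnd ℂ) z = (t : ℂ) ^ 2 * z⁻¹ := by
    rw [eq_mul_inv_iff_mul_eq₀ hz0, Complex.conj_mul', hz]
  congr 1
  simp only [hT, hG, hV, map_mul, map_add, map_pow, map_inv₀, map_neg, map_one, hcz]
  have e5 : ((t : ℂ) ^ 2 * z⁻¹) ^ (m + 3) * (((t : ℂ) ^ 2 * z⁻¹)⁻¹) ^ 2 =
      (t : ℂ) ^ (2 * (m + 1)) * (z⁻¹) ^ (m + 1) := by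
    have : (t : ℂ) ^ 2 * z⁻¹ ≠ 0 := mul_ne_zero (pow_ne_zero _ tc) (inv_ne_zero hz0)
    rw [show m + 3 = (m + 1) + 2 by ring, pow_add, mul_assoc, ← mul_pow _ _ 2, mul_inv_cancel₀ this,
      one_pow, mul_one, mul_pow, ← pow_mul]
  have e6 : (((t : ℂ) ^ 2 * z⁻¹)⁻¹) ^ 2 = z ^ 2 * (1 / (t : ℂ) ^ 4) := by
    field_simp
  have e7 : ((t : ℂ) ^ 2 * z⁻¹) ^ 2 * (((t : ℂ) ^ 2 * z⁻¹)⁻¹) ^ 2 = 1 := by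
    field_simp
  have e8 : z * z⁻¹ = 1 := mul_inv_cancel₀ hz0
  set y := z⁻¹
  set X := 2 * W z - (-1 + b * z ^ 2 + c * z ^ (m + 3)) with hX
  have e9 : 2 * W z + (1 + -b * z ^ 2 + -c * z ^ (m + 3)) = X := by rw [hX]; ring
  rw [e9]
  calc _ = X * y ^ 2 * (-(((t : ℂ) ^ 2 * y)⁻¹ ^ 2) + (starRingEnd ℂ) b *
        (((t : ℂ) ^ 2 * y) ^ 2 * ((t : ℂ) ^ 2 * y)⁻¹ ^ 2) + (starRingEnd ℂ) c *
        (((t : ℂ) ^ 2 * y) ^ (m + 3) * ((t : ℂ) ^ 2 * y)⁻¹ ^ 2)) := by ring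
    _ = _ := by
      rw [e5, e7, e6]
      have : z ^ 2 * y ^ 2 = 1 := by rw [← mul_pow, e8, one_pow]
      rw [show m + 3 = (m + 1) + 2 by ring, pow_add y]
      linear_combination (-X * (1 / (t : ℂ) ^ 4)) * this

lemma real_bound {r t C : ℝ} (hr : 0 < r) (hrt : r < t) (ht : t < 1) (hC : 0 ≤ C)
    (hrC : r * (4 + 4 * C) ≤ 1) :
    1 / t + (t - r ^ 2 / t) + r ^ 2 * t + 2 * (C * t ^ 2) ≤ 1 / r + (8 * C + 2) * r ^ 2 := by
  have ht0 : 0 < t := hr.trans hrt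
  have hr4 : r ≤ 1 / 4 := by nlinarith [mul_nonneg hr.le hC]
  have hr2 : r ^ 2 ≤ 1 / 16 := by nlinarith
  rcases le_total t (2 * r) with h | h
  · have h1 : 1 / t + (t - r ^ 2 / t) ≤ 1 / r := by
      have : 1 / r - (1 / t + (t - r ^ 2 / t)) = (t - r) * (1 - r * (t + r)) / (r * t) := by
        field_simp; ring
      have h2 : 0 ≤ (t - r) * (1 - r * (t + r)) / (r * t) := by
        apply div_nonneg _ (by positivity)
        apply mul_nonneg (by linarith)
        nlinarith
      linarith
    have h2 : r ^ 2 * t ≤ 2 * r ^ 2 := by nlinarith [sq_nonneg r]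
    have h3 : C * t ^ 2 ≤ C * (2 * r) ^ 2 := by gcongr
    nlinarith
  · have h1 : 1 / t ≤ 1 / (2 * r) := one_div_le_one_div_of_le (by positivity) h
    have h2 : (2 + 2 * C) ≤ 1 / (2 * r) := by
      rw [le_div_iff₀ (by positivity)]; linarith
    have h3 : r ^ 2 * t ≤ 1 := by nlinarith [sq_nonneg r]
    have h4 : C * t ^ 2 ≤ C * 1 := by gcongr; nlinarith
    have h5 : 0 ≤ r ^ 2 / t := by positivity
    have h6 : 1 / r = 1 / (2 * r) + 1 / (2 * r) := by field_simp; norm_num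
    have h7 : 0 ≤ (8 * C + 2) * r ^ 2 := by positivity
    linarith

/-- The twist `ψ - b r² ψ̄` collapses the ellipse `ψ(|z| = r)` almost to a circle. -/
lemma twist_bound {b z e : ℂ} {r C : ℝ} (hb : ‖b‖ = 1) (hr : 0 < r) (hrz : r < ‖z‖) (hz : ‖z‖ < 1)
    (hC : 0 ≤ C) (he : ‖e‖ ≤ C * ‖z‖ ^ 2) (hrC : r * (4 + 4 * C) ≤ 1) :
    ‖(z⁻¹ + b * z + e) - (b * (r : ℂ) ^ 2) * (starRingEnd ℂ) (z⁻¹ + b * z + e)‖ ≤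
      1 / r + (8 * C + 2) * r ^ 2 := by
  set t := ‖z‖ with ht
  have ht0 : 0 < t := hr.trans hrz
  have hz0 : z ≠ 0 := norm_pos_iff.1 ht0
  have htc : (t : ℂ) ≠ 0 := by exact_mod_cast ht0.ne'
  have hcz : (starRingEnd ℂ) z⁻¹ = z * ((t ^ 2)⁻¹ : ℝ) := by
    rw [map_inv₀]
    have := Complex.mul_conj' z
    rw [← ht] at this
    push_cast
    rw [← this]
    have : (starRingEnd ℂ) z ≠ 0 := by simpa using hz0
    field_simp
  have hr4 : r ≤ 1 / 4 := by nlinarith [mul_nonneg hr.le hC]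
  have hr1 : r ^ 2 ≤ 1 := by nlinarith
  have e1 : (z⁻¹ + b * z + e) - (b * (r : ℂ) ^ 2) * (starRingEnd ℂ) (z⁻¹ + b * z + e) =
      z⁻¹ + b * z * ((1 - r ^ 2 / t ^ 2 : ℝ) : ℂ)
        - b * (r : ℂ) ^ 2 * ((starRingEnd ℂ) b * (starRingEnd ℂ) z) + e
        - b * (r : ℂ) ^ 2 * (starRingEnd ℂ) e := by
    rw [map_add, map_add, map_mul, hcz]
    push_cast
    ring
  have hfac : 0 ≤ 1 - r ^ 2 / t ^ 2 := by
    have : r ^ 2 / t ^ 2 ≤ 1 := by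
      rw [div_le_one (by positivity)]; nlinarith
    linarith
  have n1 : ‖z⁻¹‖ = 1 / t := by rw [norm_inv, one_div]
  have n2 : ‖b * z * ((1 - r ^ 2 / t ^ 2 : ℝ) : ℂ)‖ = t - r ^ 2 / t := by
    rw [norm_mul, norm_mul, hb, one_mul, Complex.norm_real, Real.norm_of_nonneg hfac, ← ht]
    field_simp
  have n3 : ‖b * (r : ℂ) ^ 2 * ((starRingEnd ℂ) b * (starRingEnd ℂ) z)‖ = r ^ 2 * t := by
    rw [norm_mul, norm_mul, norm_mul, RCLike.norm_conj, RCLike.norm_conj, hb, norm_pow,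
      Complex.norm_real, Real.norm_of_nonneg hr.le, ← ht]
    ring
  have n4 : ‖b * (r : ℂ) ^ 2 * (starRingEnd ℂ) e‖ ≤ C * t ^ 2 := by
    rw [norm_mul, norm_mul, RCLike.norm_conj, hb, norm_pow,
      Complex.norm_real, Real.norm_of_nonneg hr.le, one_mul]
    nlinarith [norm_nonneg e]
  rw [e1]
  have := real_bound hr hrz hz hC hrC
  refine le_trans (norm_sub_le _ _) ?_
  refine le_trans (add_le_add_left (norm_add_le _ _) _) ?_
  refine le_trans (add_le_add_left (add_le_add_left (norm_sub_le _ _) _) _) ?_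
  refine le_trans (add_le_add_left (add_le_add_left (add_le_add_left (norm_add_le _ _) _) _) _) ?_
  rw [n1, n2, n3]
  linarith

/-- The area inequality on the annulus `r < |z| < ρ`. -/
lemma area_ineq {q : ℂ → ℂ} (hq : DifferentiableOn ℂ q (ball 0 1)) (h0 : cf 0 q = 1)
    (h1 : cf 1 q = 0) (hb : ‖cf 2 q‖ = 1)
    (hi : InjOn (fun z => q z / z) {z | 0 < ‖z‖ ∧ ‖z‖ < 1}) (m : ℕ) {ρ : ℝ} (hρ : 0 < ρ) (hρ1 : ρ < 1) :
    ∃ C : ℝ, 0 ≤ C ∧ ∀ r : ℝ, 0 < r → r < ρ → r * (4 + 4 * C) ≤ 1 →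
      (1 - r ^ 4) * ((1 / r ^ 2 - 1 / ρ ^ 2) + (ρ ^ 2 - r ^ 2) +
        ‖((m : ℂ) + 2) * cf (m + 3) q‖ ^ 2 * (ρ ^ (2 * m + 4) - r ^ (2 * m + 4)) / (m + 2)) ≤
        (1 / r + (8 * C + 2) * r ^ 2) ^ 2 := by
  obtain ⟨H, hH, hHq⟩ := exists_taylor hq 3
  have hcl : closedBall (0 : ℂ) ρ ⊆ ball 0 1 := closedBall_subset_ball hρ1
  obtain ⟨C, hC⟩ := (isCompact_closedBall (0 : ℂ) ρ).exists_bound_of_continuousOn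
    (hH.continuousOn.mono hcl)
  have hC0 : 0 ≤ C := (norm_nonneg _).trans (hC 0 (by simp [hρ.le]))
  refine ⟨C, hC0, fun r hr hrρ hrC => ?_⟩
  set b := cf 2 q with hbdef
  set W : ℂ → ℂ := fun z => z * deriv q z - q z with hWdef
  have dW : DifferentiableOn ℂ W (ball 0 1) :=
    (differentiableOn_id.mul (diffOn_deriv hq)).fun_sub hq
  set c := cf (m + 3) W with hcdef
  have hcW : c = ((m : ℂ) + 2) * cf (m + 3) q := by
    rw [hcdef, cf_numerator hq]; push_cast; ring
  have w0 : cf 0 W = -1 := by rw [cf_numerator hq, h0]; simp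
  have w2 : cf 2 W = b := by rw [cf_numerator hq]; push_cast; ring
  rw [← hcW]
  have hr4 : r ≤ 1 / 4 := by nlinarith [mul_nonneg hr.le hC0]
  have hr2 : r ^ 2 < 1 := by nlinarith
  have hdn : ‖b * (r : ℂ) ^ 2‖ = r ^ 2 := by
    rw [norm_mul, hb, one_mul, norm_pow, Complex.norm_real, Real.norm_of_nonneg hr.le]
  have mem : ∀ z : ℂ, ‖z‖ ≤ ρ → z ∈ ball (0 : ℂ) 1 := fun z hz => by
    simpa using hz.trans_lt hρ1
  have ne0 : ∀ z : ℂ, r ≤ ‖z‖ → z ≠ 0 := fun z hz => norm_pos_iff.1 (hr.trans_le hz)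
  have hinvc : ContinuousOn (fun z : ℂ => (z⁻¹) ^ 2) {z | r ≤ ‖z‖ ∧ ‖z‖ ≤ ρ} :=
    (continuousOn_id.inv₀ fun z hz => ne0 z hz.1).pow 2
  have hWc : ContinuousOn W {z | r ≤ ‖z‖ ∧ ‖z‖ ≤ ρ} := dW.continuousOn.mono fun z hz => mem z hz.2
  have hψ'c : ContinuousOn (fun z => W z * (z⁻¹) ^ 2) {z | r ≤ ‖z‖ ∧ ‖z‖ ≤ ρ} := hWc.mul hinvc
  have upper := area_le (ψ := fun z => q z / z) (ψ' := fun z => W z * (z⁻¹) ^ 2) (r := r) (ρ := ρ)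
    (M := 1 / r + (8 * C + 2) * r ^ 2) (d := b * (r : ℂ) ^ 2) (by rw [hdn]; exact hr2)
    (by
      intro z hz1 hz2
      have hz0 := ne0 z hz1.le
      have hd : HasDerivAt q (deriv q z) z :=
        (hq.differentiableAt (isOpen_ball.mem_nhds (mem z hz2.le))).hasDerivAt
      refine (hd.fun_div (hasDerivAt_id' z) hz0).congr_deriv ?_
      simp only [hWdef]
      field_simp)
    hψ'c (hi.mono (fun z (hz : r < ‖z‖ ∧ ‖z‖ < ρ) => (⟨hr.trans hz.1, hz.2.trans hρ1⟩ : 0 < ‖z‖ ∧ ‖z‖ < 1)))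
    (by positivity)
    (by
      intro z hz1 hz2
      have hz0 := ne0 z hz1.le
      have : q z / z = z⁻¹ + b * z + z ^ 2 * H z := by
        rw [hHq z, Finset.sum_range_succ, Finset.sum_range_succ, Finset.sum_range_one,
          h0, h1]
        field_simp
        ring
      simp only [this]
      refine twist_bound hb hr hz1 (hz2.trans hρ1) hC0 ?_ hrC
      rw [norm_mul, norm_pow, mul_comm]
      gcongr
      exact hC z (by simpa using hz2.le))
  rw [hdn] at upper
  set L : ℂ → ℝ := fun z => ((2 * W z - (-1 + b * z ^ 2 + c * z ^ (m + 3))) * (z⁻¹) ^ 2 *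
      (starRingEnd ℂ) ((-1 + b * z ^ 2 + c * z ^ (m + 3)) * (z⁻¹) ^ 2)).re with hL
  have hLc : ContinuousOn L {z | r ≤ ‖z‖ ∧ ‖z‖ ≤ ρ} := by
    have hp : ContinuousOn (fun z : ℂ => -1 + b * z ^ 2 + c * z ^ (m + 3))
      {z | r ≤ ‖z‖ ∧ ‖z‖ ≤ ρ} := by fun_prop
    exact Complex.continuous_re.comp_continuousOn
      ((((hWc.const_mul 2).fun_sub hp).mul hinvc).mul
        (Complex.continuous_conj.comp_continuousOn (hp.mul hinvc)))
  have hcpt : IsCompact {z : ℂ | r ≤ ‖z‖ ∧ ‖z‖ ≤ ρ} := by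
    refine (isCompact_closedBall (0 : ℂ) ρ).of_isClosed_subset ?_ ?_
    · exact (isClosed_le continuous_const continuous_norm).inter
        (isClosed_le continuous_norm continuous_const)
    · intro z hz; simpa using hz.2
  have hsub : {z : ℂ | r < ‖z‖ ∧ ‖z‖ < ρ} ⊆ {z : ℂ | r ≤ ‖z‖ ∧ ‖z‖ ≤ ρ} :=
    fun z hz => ⟨hz.1.le, hz.2.le⟩
  have hA : MeasurableSet {z : ℂ | r < ‖z‖ ∧ ‖z‖ < ρ} :=
    (measurableSet_lt measurable_const measurable_norm).inter
      (measurableSet_lt measurable_norm measurable_const)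
  have hr4' : 0 ≤ 1 - (r ^ 2) ^ 2 := by nlinarith [sq_nonneg r]
  have lower : ∫ z in {z : ℂ | r < ‖z‖ ∧ ‖z‖ < ρ}, (1 - (r ^ 2) ^ 2) * L z ≤
      ∫ z in {z : ℂ | r < ‖z‖ ∧ ‖z‖ < ρ}, (1 - (r ^ 2) ^ 2) * ‖W z * (z⁻¹) ^ 2‖ ^ 2 := by
    refine MeasureTheory.setIntegral_mono_on ?_ ?_ hA ?_
    · exact ((hLc.const_mul _).integrableOn_compact hcpt).mono_set hsub
    · have : ContinuousOn (fun z => (1 - (r ^ 2) ^ 2) * ‖W z * (z⁻¹) ^ 2‖ ^ 2)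
          {z : ℂ | r ≤ ‖z‖ ∧ ‖z‖ ≤ ρ} := (hψ'c.norm.pow 2).const_mul _
      exact (this.integrableOn_compact hcpt).mono_set hsub
    · intro z _
      apply mul_le_mul_of_nonneg_left _ hr4'
      -- `|u|² ≥ Re ((2u - p) p̄)` because the difference is `|u - p|²`
      have key : ∀ u p : ℂ, ((2 * u - p) * (starRingEnd ℂ) p).re ≤ ‖u‖ ^ 2 := by
        intro u p
        have h3 : 0 ≤ ‖u - p‖ ^ 2 := by positivity
        rw [Complex.sq_norm, Complex.normSq_apply] at h3 ⊢
        simp at h3 ⊢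
        linarith
      have := key (W z * (z⁻¹) ^ 2) ((-1 + b * z ^ 2 + c * z ^ (m + 3)) * (z⁻¹) ^ 2)
      refine le_trans (le_of_eq ?_) this
      simp only [hL]
      congr 2
      ring
  rw [MeasureTheory.integral_const_mul, integral_annulus hr hrρ.le hLc] at lower
  have hval : ∫ t in r..ρ, t * (2 * Real.pi * circleAverage L 0 t) =
      Real.pi * ((1 / r ^ 2 - 1 / ρ ^ 2) + (ρ ^ 2 - r ^ 2) +
        ‖c‖ ^ 2 * (ρ ^ (2 * m + 4) - r ^ (2 * m + 4)) / (m + 2)) := by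
    have hcong : ∀ t ∈ uIcc r ρ, HasDerivAt (fun t : ℝ => Real.pi * (-(t ^ 2)⁻¹ + t ^ 2 +
        ‖c‖ ^ 2 * t ^ (2 * m + 4) / (m + 2))) (t * (2 * Real.pi * circleAverage L 0 t)) t := by
      intro t ht
      rw [uIcc_of_le hrρ.le] at ht
      have ht0 : 0 < t := hr.trans_le ht.1
      rw [hL, circleAverage_polarised dW w0 w2 hcdef.symm ht0 (ht.2.trans_lt hρ1), hb]
      have d1 : HasDerivAt (fun t : ℝ => t ^ 2) (2 * t) t := by simpa using hasDerivAt_pow 2 t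
      have d2 := (d1.fun_inv (by positivity)).fun_neg
      have d3 : HasDerivAt (fun t : ℝ => t ^ (2 * m + 4)) ((2 * m + 4 : ℕ) * t ^ (2 * m + 3)) t := by
        simpa using hasDerivAt_pow (2 * m + 4) t
      have d4 := (d3.const_mul (‖c‖ ^ 2)).div_const ((m : ℝ) + 2)
      refine (((d2.fun_add d1).fun_add d4).const_mul Real.pi).congr_deriv ?_
      have hm : (m : ℝ) + 2 ≠ 0 := by positivity
      have e : t ^ (2 * m + 3) = t * t ^ (2 * (m + 1)) := by ring
      rw [e]
      push_cast
      field_simp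
      ring
    have hcont : ContinuousOn (fun t => t * (2 * Real.pi * circleAverage L 0 t)) (uIcc r ρ) := by
      have : ContinuousOn (fun t : ℝ => t * (2 * Real.pi *
          (1 / t ^ 4 + ‖b‖ ^ 2 + ‖c‖ ^ 2 * t ^ (2 * (m + 1))))) (uIcc r ρ) := by
        have hinv : ContinuousOn (fun t : ℝ => 1 / t ^ 4) (uIcc r ρ) := by
          refine continuousOn_const.div (continuousOn_id.pow 4) fun t ht => ?_
          rw [uIcc_of_le hrρ.le] at ht
          exact pow_ne_zero _ (hr.trans_le ht.1).ne'
        fun_prop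
      refine this.congr fun t ht => ?_
      rw [uIcc_of_le hrρ.le] at ht
      simp only [hL]
      rw [circleAverage_polarised dW w0 w2 hcdef.symm (hr.trans_le ht.1) (ht.2.trans_lt hρ1)]
    rw [intervalIntegral.integral_eq_sub_of_hasDerivAt hcong hcont.intervalIntegrable]
    ring
  rw [hval] at lower
  have hfin := lower.trans upper
  have hpi := Real.pi_pos
  refine le_of_mul_le_mul_left ?_ hpi
  refine le_trans (le_of_eq ?_) hfin
  ring

/-- Equality case of Gronwall's area theorem. -/
lemma gronwall_equality {q : ℂ → ℂ} (hq : DifferentiableOn ℂ q (ball 0 1)) (h0 : cf 0 q = 1)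
    (h1 : cf 1 q = 0) (hb : ‖cf 2 q‖ = 1)
    (hi : InjOn (fun z => q z / z) {z | 0 < ‖z‖ ∧ ‖z‖ < 1}) :
    ∀ z ∈ ball (0 : ℂ) 1, q z = 1 + cf 2 q * z ^ 2 := by
  have hvan : ∀ m : ℕ, cf (m + 3) q = 0 := by
    intro m
    set X := ‖((m : ℂ) + 2) * cf (m + 3) q‖ ^ 2 with hX
    have step : ∀ ρ : ℝ, 0 < ρ → ρ < 1 → -1 / ρ ^ 2 + ρ ^ 2 + X * ρ ^ (2 * m + 4) / (m + 2) ≤ 0 := by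
      intro ρ hρ hρ1
      obtain ⟨C, hC, hineq⟩ := area_ineq hq h0 h1 hb hi m hρ hρ1
      have hev : ∀ᶠ r : ℝ in 𝓝[>] 0, (1 - r ^ 4) * (-1 / ρ ^ 2 + (ρ ^ 2 - r ^ 2) +
          X * (ρ ^ (2 * m + 4) - r ^ (2 * m + 4)) / (m + 2)) ≤
          r ^ 2 + 2 * (8 * C + 2) * r + (8 * C + 2) ^ 2 * r ^ 4 := by
        have hpos : 0 < min ρ (1 / (4 + 4 * C)) := lt_min hρ (by positivity)
        filter_upwards [Ioo_mem_nhdsGT hpos] with r hr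
        have hr0 : 0 < r := hr.1
        have hr1 : r < ρ := hr.2.trans_le (min_le_left _ _)
        have hr2 : r * (4 + 4 * C) ≤ 1 := by
          have := (hr.2.trans_le (min_le_right _ _)).le
          rwa [le_div_iff₀ (by positivity)] at this
        have hh := hineq r hr0 hr1 hr2
        have e1 : (1 / r + (8 * C + 2) * r ^ 2) ^ 2 = 1 / r ^ 2 + 2 * (8 * C + 2) * r +
            (8 * C + 2) ^ 2 * r ^ 4 := by field_simp; ring
        have e2 : (1 - r ^ 4) * (1 / r ^ 2) = 1 / r ^ 2 - r ^ 2 := by field_simp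
        rw [e1] at hh
        have e3 : -1 / ρ ^ 2 = -(1 / ρ ^ 2) := by ring
        rw [e3]
        linarith
      have hl : Tendsto (fun r : ℝ => (1 - r ^ 4) * (-1 / ρ ^ 2 + (ρ ^ 2 - r ^ 2) +
          X * (ρ ^ (2 * m + 4) - r ^ (2 * m + 4)) / (m + 2))) (𝓝[>] 0)
          (𝓝 (-1 / ρ ^ 2 + ρ ^ 2 + X * ρ ^ (2 * m + 4) / (m + 2))) := by
        have : Continuous (fun r : ℝ => (1 - r ^ 4) * (-1 / ρ ^ 2 + (ρ ^ 2 - r ^ 2) +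
          X * (ρ ^ (2 * m + 4) - r ^ (2 * m + 4)) / (m + 2))) := by fun_prop
        refine ((this.tendsto 0).mono_left nhdsWithin_le_nhds).trans_eq ?_
        simp
      have hr : Tendsto (fun r : ℝ => r ^ 2 + 2 * (8 * C + 2) * r + (8 * C + 2) ^ 2 * r ^ 4) (𝓝[>] 0)
          (𝓝 0) := by
        have : Continuous (fun r : ℝ => r ^ 2 + 2 * (8 * C + 2) * r + (8 * C + 2) ^ 2 * r ^ 4) := by
          fun_prop
        refine ((this.tendsto 0).mono_left nhdsWithin_le_nhds).trans_eq ?_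
        simp
      exact le_of_tendsto_of_tendsto hl hr hev
    have hlim : Tendsto (fun ρ : ℝ => -1 / ρ ^ 2 + ρ ^ 2 + X * ρ ^ (2 * m + 4) / (m + 2)) (𝓝[<] 1)
        (𝓝 (X / (m + 2))) := by
      have : ContinuousAt (fun ρ : ℝ => -1 / ρ ^ 2 + ρ ^ 2 + X * ρ ^ (2 * m + 4) / (m + 2)) 1 := by
        have h1 : ContinuousAt (fun ρ : ℝ => -1 / ρ ^ 2) 1 :=
          continuousAt_const.div (continuousAt_id.pow 2) (by simp)
        fun_prop
      refine (this.tendsto.mono_left nhdsWithin_le_nhds).trans_eq ?_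
      simp
    have hle : X / (m + 2) ≤ 0 := by
      refine le_of_tendsto hlim ?_
      filter_upwards [Ioo_mem_nhdsLT (zero_lt_one (α := ℝ))] with ρ hρ
      exact step ρ hρ.1 hρ.2
    have hX0 : X ≤ 0 := by
      by_contra h
      push Not at h
      have : 0 < X / (m + 2) := by positivity
      linarith
    have hX1 : ‖((m : ℂ) + 2) * cf (m + 3) q‖ = 0 := by
      have : 0 ≤ X := by positivity
      exact pow_eq_zero_iff (two_ne_zero) |>.1 (le_antisymm hX0 this)
    rcases mul_eq_zero.1 (norm_eq_zero.1 hX1) with h | h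
    · exact absurd h (by exact_mod_cast (by omega : m + 2 ≠ 0))
    · exact h
  intro z hz
  have hs := Complex.hasSum_taylorSeries_on_ball (r := 1) (c := 0) (f := q) (by simpa using hq)
    (z := z) (by simpa using hz)
  have hs' : HasSum (fun n => cf n q * z ^ n) (q z) := by
    refine HasSum.congr_fun hs fun n => ?_
    simp [cf]; ring
  have hfin : HasSum (fun n => cf n q * z ^ n) _ := hasSum_sum_of_ne_finset_zero (f := fun n => cf n q * z ^ n) (s := Finset.range 3)
    (by
      intro n hn
      obtain ⟨m, rfl⟩ : ∃ m, n = m + 3 := ⟨n - 3, by simp at hn; omega⟩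
      simp [hvan])
  rw [hs'.unique hfin, Finset.sum_range_succ, Finset.sum_range_succ, Finset.sum_range_one, h0, h1]
  ring

/-! ### The equality case and the theorem -/

/-- The even function `z ↦ E (z²)` has coefficients `E₀, 0, E₁` in degrees `0, 1, 2`. -/
lemma cf_comp_sq {E : ℂ → ℂ} (hE : DifferentiableOn ℂ E (ball 0 1)) :
    DifferentiableOn ℂ (fun z => E (z ^ 2)) (ball 0 1) ∧ cf 0 (fun z => E (z ^ 2)) = cf 0 E ∧
      cf 1 (fun z => E (z ^ 2)) = 0 ∧ cf 2 (fun z => E (z ^ 2)) = cf 1 E := by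
  have hmaps : MapsTo (fun z : ℂ => z ^ 2) (ball 0 1) (ball 0 1) := by
    intro z hz
    simp only [mem_ball_zero_iff, norm_pow] at hz ⊢
    exact pow_lt_one₀ (norm_nonneg z) hz two_ne_zero
  have hsq : DifferentiableOn ℂ (fun z : ℂ => z ^ 2) (ball 0 1) := by fun_prop
  obtain ⟨R, hR, hRE⟩ := exists_taylor hE 2
  have hR2 : DifferentiableOn ℂ (fun z => R (z ^ 2)) (ball 0 1) := hR.comp hsq hmaps
  have e : (fun z => E (z ^ 2)) = fun z =>
      (fun z : ℂ => cf 0 E + cf 1 E * z ^ 2 + 0 * z ^ (0 + 3)) z +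
        (fun z => z ^ 4 * (fun z => R (z ^ 2)) z) z := by
    ext z
    rw [hRE (z ^ 2), Finset.sum_range_succ, Finset.sum_range_one]
    ring
  have hc : ∀ n < 4, cf n (fun z => E (z ^ 2)) =
      (if n = 0 then cf 0 E else 0) + (if n = 2 then cf 1 E else 0) + (if n = 0 + 3 then 0 else 0) := by
    intro n hn
    have d4 : DifferentiableOn ℂ (fun z => z ^ 4 * (fun z => R (z ^ 2)) z) (ball 0 1) :=
      (differentiableOn_id.pow 4).mul hR2
    rw [e, cf_add (by fun_prop) d4, cf_trinomial, cf_pow_mul hR2, if_neg (show ¬ 4 ≤ n by omega), add_zero]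
  refine ⟨hE.comp hsq hmaps, ?_, ?_, ?_⟩
  · rw [hc 0 (by norm_num)]; simp
  · rw [hc 1 (by norm_num)]; simp
  · rw [hc 2 (by norm_num)]; simp

/-- If the first logarithmic coefficient is unimodular then `f` is a rotation of the Koebe
function. The odd square-root transform `z ↦ f(z²)^{1/2}` has a reciprocal `1/z - γ₁ z + ⋯`
for which the area theorem holds with equality. -/
lemma koebe_of_norm_eq {f g : ℂ → ℂ} (hi : InjOn f (ball 0 1)) (hf0 : f 0 = 0)
    (hg : DifferentiableOn ℂ g (ball 0 1)) (hg0 : g 0 = 0)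
    (hfg : ∀ z ∈ ball (0 : ℂ) 1, z ≠ 0 → exp (g z) = f z / z) {c : ℂ} (hc : cf 1 g = 2 * c)
    (hc1 : ‖c‖ = 1) : IsKoebeRotation f := by
  set E : ℂ → ℂ := fun w => exp (-(g w) / 2) with hEdef
  have hE : DifferentiableOn ℂ E (ball 0 1) := (hg.fun_neg.div_const 2).cexp
  have hEf : ∀ w ∈ ball (0 : ℂ) 1, f w * E w ^ 2 = w := by
    intro w hw
    by_cases hw0 : w = 0
    · simp [hw0, hf0]
    · have h1 := hfg w hw hw0
      have h2 : E w ^ 2 * exp (g w) = 1 := by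
        rw [hEdef]
        simp only
        rw [← Complex.exp_nat_mul, ← Complex.exp_add, ← Complex.exp_zero]
        congr 1
        push_cast; ring
      have h3 : f w = exp (g w) * w := by rw [h1]; field_simp
      rw [h3]
      linear_combination w * h2
  have hE0 : cf 0 E = 1 := by simp [cf_zero, hEdef, hg0]
  have hE1 : cf 1 E = -c := by
    have hgd : HasDerivAt g (deriv g 0) 0 :=
      (hg.differentiableAt (ball_mem_nhds 0 one_pos)).hasDerivAt
    have hEd := ((hgd.fun_neg.div_const 2).cexp).deriv
    simp only [cf, iteratedDeriv_one, Nat.factorial_one, Nat.cast_one, div_one] at hc ⊢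
    rw [hEdef, hEd, hc, hg0]
    simp
    ring
  obtain ⟨hq, q0, q1, q2⟩ := cf_comp_sq hE
  rw [hE0] at q0
  rw [hE1] at q2
  have hinj : InjOn (fun z => (fun z => E (z ^ 2)) z / z) {z | 0 < ‖z‖ ∧ ‖z‖ < 1} := by
    intro x hx y hy hxy
    simp only at hxy
    have hx0 : x ≠ 0 := norm_pos_iff.1 hx.1
    have hy0 : y ≠ 0 := norm_pos_iff.1 hy.1
    have mem : ∀ z : ℂ, ‖z‖ < 1 → z ^ 2 ∈ ball (0 : ℂ) 1 := by
      intro z hz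
      rw [mem_ball_zero_iff, norm_pow]
      exact pow_lt_one₀ (norm_nonneg z) hz two_ne_zero
    have nE : ∀ w, E w ≠ 0 := fun w => Complex.exp_ne_zero _
    have hcross : E (x ^ 2) * y = E (y ^ 2) * x := by
      rwa [div_eq_div_iff hx0 hy0] at hxy
    have hsq : f (x ^ 2) = f (y ^ 2) := by
      have hxE := hEf _ (mem x hx.2)
      have hyE := hEf _ (mem y hy.2)
      have h1 : E (x ^ 2) ^ 2 * y ^ 2 = E (y ^ 2) ^ 2 * x ^ 2 := by
        rw [← mul_pow, hcross, mul_pow]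
      have h2 : f (x ^ 2) * (E (x ^ 2) ^ 2 * y ^ 2) = f (y ^ 2) * (E (x ^ 2) ^ 2 * y ^ 2) := by
        conv_rhs => rw [h1]
        linear_combination y ^ 2 * hxE - x ^ 2 * hyE
      exact mul_right_cancel₀ (mul_ne_zero (pow_ne_zero _ (nE _)) (pow_ne_zero _ hy0)) h2
    have h3 : x ^ 2 = y ^ 2 := hi (mem x hx.2) (mem y hy.2) hsq
    rw [h3] at hcross
    exact (mul_left_cancel₀ (nE _) hcross).symm
  have hfinal := gronwall_equality hq q0 q1 (by rw [q2, norm_neg, hc1]) hinj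
  rw [q2] at hfinal
  refine ⟨Complex.arg c, fun w hw => ?_⟩
  have hce : exp (Complex.arg c * I) = c := by
    have := Complex.norm_mul_exp_arg_mul_I c
    rwa [hc1, Complex.ofReal_one, one_mul] at this
  simp only
  rw [hce]
  obtain ⟨z, rfl⟩ := IsAlgClosed.exists_pow_nat_eq w (n := 2) two_pos
  have hz : z ∈ ball (0 : ℂ) 1 := by
    rw [mem_ball_zero_iff, norm_pow] at hw
    rw [mem_ball_zero_iff]
    exact (pow_lt_one_iff_of_nonneg (norm_nonneg z) two_ne_zero).1 hw
  have h1 : E (z ^ 2) = 1 - c * z ^ 2 := by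
    have := hfinal z hz
    rw [this]; ring
  have h2 : 1 - c * z ^ 2 ≠ 0 := h1 ▸ Complex.exp_ne_zero _
  rw [eq_div_iff (pow_ne_zero 2 h2), ← h1]
  exact hEf _ hw

end LogCoeff


theorem logcoeff_nsq_over_nsq_add_alphasq
    (α : ℝ) (hα : 0 < α) (hα₁ : α ≤ 1) (f : ℂ → ℂ) (γ : ℕ → ℂ) (hf : InClassS f) (hγ : IsLogCoeffs f γ) :
    (∑' n : ℕ, (((n : ℝ) + 1) ^ 2 / (((n : ℝ) + 1) ^ 2 + α ^ 2)) * ‖γ (n + 1)‖ ^ 2 ≤ (Real.pi * α * (Real.cosh (Real.pi * α) / Real.sinh (Real.pi * α)) - 1) / (2 * α ^ 2)) ∧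
    (∑' n : ℕ, (((n : ℝ) + 1) ^ 2 / (((n : ℝ) + 1) ^ 2 + α ^ 2)) * ‖γ (n + 1)‖ ^ 2 = (Real.pi * α * (Real.cosh (Real.pi * α) / Real.sinh (Real.pi * α)) - 1) / (2 * α ^ 2) → IsKoebeRotation f) := by
  obtain ⟨hfa, hfi, hf0, -⟩ := hf
  obtain ⟨g, hga, hg0, hfg, hgγ⟩ := hγ
  have hfd : DifferentiableOn ℂ f (ball 0 1) := hfa.differentiableOn
  have hgd : DifferentiableOn ℂ g (ball 0 1) := hga.differentiableOn
  have hcf : ∀ n : ℕ, 1 ≤ n → LogCoeff.cf n g = 2 * γ n := by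
    intro n hn
    have : (n.factorial : ℂ) ≠ 0 := by exact_mod_cast n.factorial_ne_zero
    rw [LogCoeff.cf, hgγ n hn, mul_div_cancel_left₀ _ this]
  have hnorm : ∀ i : ℕ, ‖LogCoeff.cf (i + 1) g‖ ^ 2 = 4 * ‖γ (i + 1)‖ ^ 2 := by
    intro i
    rw [hcf _ (Nat.le_add_left 1 i), norm_mul, Complex.norm_ofNat, mul_pow]
    norm_num
  have hγ1 : ‖γ 1‖ ^ 2 ≤ 1 := by
    have h := LogCoeff.weighted_log_coeff_le LogCoeff.weights_one hfd hfi hf0 hgd hg0 hfg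
    have ht : LogCoeff.tw 1 (fun _ => 1) 1 0 = 1 / 4 := by
      simp [LogCoeff.tw]
      norm_num [LogCoeff.xw_one_one]
    rw [Finset.sum_range_one, hnorm, zero_add, ht] at h
    push_cast at h
    linarith
  have hu : (0 : ℝ) ≤ α ^ 2 := by positivity
  have hu1 : α ^ 2 ≤ 1 := pow_le_one₀ hα.le hα₁
  have hsum := LogCoeff.hasSum_coth hα
  have hpart := LogCoeff.limit_ineq hu hu1 (c := fun k => ‖γ k‖ ^ 2) (fun k => by positivity) hγ1
    (fun N => by
      have h := LogCoeff.weighted_log_coeff_le (LogCoeff.weights_te hu hu1 N) hfd hfi hf0 hgd hg0 hfg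
      simp only [hnorm] at h
      exact h) hsum.summable
  rw [hsum.tsum_eq] at hpart
  have hle := Real.tsum_le_of_sum_range_le (fun n => by positivity) hpart
  refine ⟨by linarith, fun heq => ?_⟩
  rw [heq] at hle
  have h1 : ‖γ 1‖ = 1 := by
    have : ‖γ 1‖ ^ 2 = 1 := by linarith
    exact (pow_eq_one_iff_of_nonneg (norm_nonneg _) two_ne_zero).1 this
  exact LogCoeff.koebe_of_norm_eq hfi hf0 hgd hg0 hfg (hcf 1 le_rfl) h1
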